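/- arXiv:1403.4685 — 6 statements merged into one kernel-verified Lean document; each statement's English description precedes it below -/
import Mathlib

section
/- Let p be a prime, F a field of characteristic p, and r, s integers with 1 ≤ r ≤ s. Call an integer k with 0 ≤ k ≤ r a jump if p does not divide D_k(r,s) (so k = 0 is a jump since D_0(r,s) = 1). Suppose J_r ⊗ J_s is similar over F to the block-diagonal matrix with diagonal blocks J_{λ_1},…,J_{λ_r}, where λ_1 ≥ ⋯ ≥ λ_r > 0. Then p does not divide D_r(r,s), and for every 1 ≤ k ≤ r: if k is a jump, then λ_k = r + s − 2k + ℓ(k), where ℓ(k) is the least positive integer such that k − ℓ(k) is a jump; and if k is not a jump, then k < r and λ_k = λ_{k+1}. -/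
/-!
Let `S = F[x, y]` and `z = x + y`. In a suitable basis (`sig_mulVec`, `sig_bijective`) the matrix
`J_r ⊗ J_s` is multiplication by `1 + z` on `S / (x ^ r, y ^ s)`, so the number `c m` of parts of
`lam` exceeding `m` is the rank of `z ^ m` minus the rank of `z ^ (m + 1)` on this algebra.

The colon ideal `(x ^ r, y ^ s) : z ^ m` is generated by two forms `f, g` whose degrees `a, b`
satisfy `a + b = r + s - m`. This is seen by a Euclidean algorithm (`Gens.step`): modulo `z` the
forms become multiples of `X ^ a` and `X ^ b` in `F[X]`; if `f` has the smaller degree among those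
not divisible by `z`, a multiple of `f` is subtracted from `g` to get `z * g'`, and the next colon
ideal is `(f, g')`. Moreover `c m = dim S / (z, f, g) = a` (`finrank_WW`). Hence `c (m + 1)` is
either `c m = a` or the other degree `b - 1 = r + s - (m + 1) - c m` (`drop_step`).

The matrix of `D_k(r, s)` is that of multiplication by `z ^ (r + s - 2k)` from degree `k - 1` to
degree `r + s - k - 1`. Thus `D_k(r, s)` is nonzero in `F` iff the colon ideal for
`m = r + s - 2k` has no nonzero form of degree `k - 1`; as the degrees of its generators add up to
`2k`, this means that both are `k`, i.e. `c (r + s - 2k) = k` (`Ddet_ne_zero_iff`). The statement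
on `lam` is then a combinatorial consequence for the conjugate partition `c`
(`partition_of_conjugate`).
-/

open Kronecker

/-- The `m × m` Jordan block with eigenvalue `1`: ones on the main diagonal and the
superdiagonal, zeros elsewhere. -/
def jordanBlock (F : Type*) [Zero F] [One F] (m : ℕ) : Matrix (Fin m) (Fin m) F :=
  Matrix.of fun i j => if (j : ℕ) = (i : ℕ) ∨ (j : ℕ) = (i : ℕ) + 1 then 1 else 0

/-- The block-diagonal matrix whose diagonal blocks are the Jordan blocks `J_{d i}`, `i : ι`. -/
def jordanBlockDiag (F : Type*) [Field F] {ι : Type} [DecidableEq ι] (d : ι → ℕ) :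
    Matrix ((i : ι) × Fin (d i)) ((i : ι) × Fin (d i)) F :=
  Matrix.blockDiagonal' fun i => jordanBlock F (d i)

/-- Similarity of square matrices, possibly indexed by different (finite) types:
both matrices represent the same linear endomorphism up to a linear change of basis. -/
def MatSimilar (F : Type*) [Field F] {n m : Type*} [Fintype n] [Fintype m]
    (A : Matrix n n F) (B : Matrix m m F) : Prop :=
  ∃ e : (n → F) ≃ₗ[F] (m → F), ∀ v, e (A.mulVec v) = B.mulVec (e v)

/-- The `k × k` integer matrix whose `(i, j)` entry is the binomial coefficient
`C(r + s - 2k, s + i - j - k)`, where `C(a, b) = 0` if `b < 0` or `b > a`. -/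
def Dmat (r s k : ℕ) : Matrix (Fin k) (Fin k) ℤ :=
  Matrix.of fun i j =>
    if (j : ℕ) + k ≤ s + (i : ℕ) then
      ((r + s - 2 * k).choose (s + (i : ℕ) - (j : ℕ) - k) : ℤ)
    else 0

/-- The determinant `D_k(r, s)`. -/
def Ddet (r s k : ℕ) : ℤ := (Dmat r s k).det


namespace JordanTensor

open MvPolynomial

/-! ### Combinatorics of the conjugate partition -/

section Combinatorics

variable {r s : ℕ} {c : ℕ → ℕ}

/-- If `c` has the value `k` at a time `m ≤ r + s - 2k`, it keeps this value until time `r + s - 2k`: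
a drop from `k` to `k'` can only happen at time `r + s - k - k'`. -/
lemma const_until (hc : Antitone c)
    (hstep : ∀ m, c (m + 1) = c m ∨ c (m + 1) + c m + (m + 1) = r + s)
    {m k : ℕ} (hm : c m = k) :
    ∀ n, m ≤ n → n + 2 * k ≤ r + s → c n = k := by
  intro n hmn
  induction n, hmn using Nat.le_induction with
  | base => intro _; exact hm
  | succ n hmn ih =>
    intro hn
    have h1 := ih (by omega)
    have h2 := hc (Nat.le_succ n)
    rcases hstep n with h | h
    · omega
    · simp only [Nat.succ_eq_add_one] at h2; omega

/-- If `c` ever takes the value `k < c 0`, then it takes the value `k` at time `r + s - 2k`. -/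
lemma value_at_of_taken (hc : Antitone c)
    (hstep : ∀ m, c (m + 1) = c m ∨ c (m + 1) + c m + (m + 1) = r + s)
    {k : ℕ} (hk : k < c 0) (hex : ∃ m, c m = k) :
    c (r + s - 2 * k) = k := by
  classical
  have hspec := Nat.find_spec hex
  have hmin := fun m => Nat.find_min hex (m := m)
  set M := Nat.find hex
  obtain _ | n := M
  · omega
  have h1 := hmin n (by omega)
  have h2 := hc (Nat.le_succ n)
  simp only [Nat.succ_eq_add_one] at h2
  rcases hstep n with h | h
  · omega
  · exact const_until hc hstep hspec _ (by omega) (by omega)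

/-- The values of the partition `lam`, read off from its conjugate `c` in terms of the jumps. -/
theorem partition_of_conjugate (hrs : r ≤ s) (lam : Fin r → ℕ) (hanti : Antitone lam)
    (hpos : ∀ i, 0 < lam i)
    (hcdef : ∀ m, c m = (Finset.univ.filter fun i => m < lam i).card)
    (hstep : ∀ m, c (m + 1) = c m ∨ c (m + 1) + c m + (m + 1) = r + s)
    (J : ℕ → Prop) (hJ : ∀ k, k ≤ r → (J k ↔ c (r + s - 2 * k) = k)) :
    J r ∧
    ∀ k : ℕ, ∀ _hk1 : 1 ≤ k, ∀ _hk2 : k ≤ r, ∀ hk3 : k - 1 < r,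
      (((k ≤ r ∧ J k) →
        ∀ l : ℕ, 0 < l →
          (k - l ≤ r ∧ J (k - l)) →
          (∀ l', 0 < l' → l' < l → ¬ (k - l' ≤ r ∧ J (k - l'))) →
          lam ⟨k - 1, hk3⟩ = r + s - 2 * k + l) ∧
      (¬ (k ≤ r ∧ J k) → k < r) ∧
      (∀ hkr : k < r, ¬ (k ≤ r ∧ J k) →
        lam ⟨k - 1, hk3⟩ = lam ⟨k, hkr⟩)) := by
  have hc : Antitone c := by
    intro m n hmn
    rw [hcdef, hcdef]
    apply Finset.card_le_card
    intro i hi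
    simp only [Finset.mem_filter, Finset.mem_univ, true_and] at hi ⊢
    omega
  have hc0 : c 0 = r := by
    rw [hcdef]; simp [hpos]
  -- `lam` and `c` are conjugate.
  have hconj : ∀ (i : Fin r) (m : ℕ), m < lam i ↔ (i : ℕ) < c m := by
    intro i m
    rw [hcdef]
    constructor
    · intro h
      have hsub : Finset.Iic i ⊆ Finset.univ.filter fun i => m < lam i := by
        intro j hj
        simp only [Finset.mem_filter, Finset.mem_univ, true_and]
        exact lt_of_lt_of_le h (hanti (Finset.mem_Iic.1 hj))
      have := Finset.card_le_card hsub
      rw [Fin.card_Iic] at this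
      omega
    · intro h
      by_contra hlt
      have hsub : (Finset.univ.filter fun i => m < lam i) ⊆ Finset.Iio i := by
        intro j hj
        simp only [Finset.mem_filter, Finset.mem_univ, true_and] at hj
        rw [Finset.mem_Iio]
        by_contra hji
        have := hanti (not_lt.1 hji)
        omega
      have := Finset.card_le_card hsub
      rw [Fin.card_Iio] at this
      omega
  have hJr : J r := (hJ r le_rfl).2 (const_until hc hstep hc0 _ (Nat.zero_le _) (by omega))
  refine ⟨hJr, fun k hk1 hk2 hk3 => ⟨?_, ?_, ?_⟩⟩
  · rintro ⟨-, hJk⟩ l hl ⟨-, hJl⟩ hmin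
    have hck := (hJ k hk2).1 hJk
    -- `lam_k` is the first time at which `c` is below `k`
    have hM : k - 1 < c (lam ⟨k - 1, by omega⟩ - 1) := by
      have := (hconj ⟨k - 1, by omega⟩ (lam ⟨k - 1, by omega⟩ - 1)).1
        (by have := hpos ⟨k - 1, by omega⟩; omega)
      exact this
    have hM' : ¬ k - 1 < c (lam ⟨k - 1, by omega⟩) := by
      intro h
      have := (hconj ⟨k - 1, by omega⟩ (lam ⟨k - 1, by omega⟩)).2 h
      omega
    have hMlt : r + s - 2 * k < lam ⟨k - 1, by omega⟩ :=
      (hconj ⟨k - 1, by omega⟩ _).2 (by simp only []; omega)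
    generalize lam ⟨k - 1, by omega⟩ = L at hM hM' hMlt ⊢
    obtain _ | M := L
    · omega
    simp only [Nat.add_sub_cancel] at hM
    have hcM : c M = k := by
      have := hc (show r + s - 2 * k ≤ M by omega)
      omega
    have hdrop : c (M + 1) + k + (M + 1) = r + s := by
      rcases hstep M with h | h <;> omega
    have hk' : c (M + 1) < k := by omega
    have hJk' : J (c (M + 1)) :=
      (hJ _ (by omega)).2 (const_until hc hstep rfl _ (by omega) (by omega))
    -- no jump lies strictly between `c (M + 1)` and `k`
    have hno : ∀ j, c (M + 1) < j → j < k → ¬ J j := by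
      intro j h1 h2 hj
      have := (hJ j (by omega)).1 hj
      rcases Nat.lt_or_ge (r + s - 2 * j) (M + 1) with h | h
      · have := hc (show r + s - 2 * j ≤ M by omega)
        omega
      · have := hc h
        omega
    have hle : l ≤ k - c (M + 1) := by
      by_contra hlt
      refine hmin (k - c (M + 1)) (by omega) (by omega) ⟨by omega, ?_⟩
      rwa [show k - (k - c (M + 1)) = c (M + 1) by omega]
    have hge : ¬ c (M + 1) < k - l := fun h => hno _ h (by omega) hJl
    omega
  · intro h
    rcases hk2.lt_or_eq with h' | h'
    · exact h'
    · subst h'; exact absurd ⟨le_rfl, hJr⟩ h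
  · intro hkr hnot
    by_contra hne
    have hle := hanti (show (⟨k - 1, by omega⟩ : Fin r) ≤ ⟨k, hkr⟩ from by
      simp only [Fin.mk_le_mk]; omega)
    have h1 := (hconj ⟨k - 1, by omega⟩ (lam ⟨k, hkr⟩)).1 (by omega)
    have h2 : ¬ k < c (lam ⟨k, hkr⟩) := fun h => by
      have := (hconj ⟨k, hkr⟩ (lam ⟨k, hkr⟩)).2 h
      omega
    simp only [] at h1
    exact hnot ⟨hk2, (hJ k hk2).2 (value_at_of_taken hc hstep (by omega)
      ⟨lam ⟨k, hkr⟩, by omega⟩)⟩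

end Combinatorics

/-! ### Homogeneous polynomials in two variables and division by `x + y` -/

section Polynomials

variable {F : Type*} [Field F]

/-- The linear form `z = x + y` in `F[x, y]`. -/
noncomputable def zz (F : Type*) [Field F] : MvPolynomial (Fin 2) F := X 0 + X 1

/-- The ideal `(x ^ r, y ^ s)` of `F[x, y]`. -/
noncomputable def I0 (F : Type*) [Field F] (r s : ℕ) : Ideal (MvPolynomial (Fin 2) F) :=
  Ideal.span {X 0 ^ r, X 1 ^ s}

/-- Reduction modulo `z = x + y`, identified with the substitution `x ↦ X`, `y ↦ -X`. -/
noncomputable def phi (F : Type*) [Field F] : MvPolynomial (Fin 2) F →ₐ[F] Polynomial F :=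
  aeval ![Polynomial.X, -Polynomial.X]

/-- The section `X ↦ x` of `phi`. -/
noncomputable def emb (F : Type*) [Field F] : Polynomial F →ₐ[F] MvPolynomial (Fin 2) F :=
  Polynomial.aeval (X 0)

@[simp] lemma phi_X0 : phi F (X 0) = Polynomial.X := by simp [phi]

@[simp] lemma phi_X1 : phi F (X 1) = -Polynomial.X := by simp [phi]

@[simp] lemma phi_zz : phi F (zz F) = 0 := by simp [zz]

@[simp] lemma phi_emb (q : Polynomial F) : phi F (emb F q) = q := by
  have : (phi F).comp (emb F) = AlgHom.id F _ := by
    ext; simp [emb]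
  exact DFunLike.congr_fun this q

lemma zz_homogeneous : (zz F).IsHomogeneous 1 :=
  (isHomogeneous_X F 0).add (isHomogeneous_X F 1)

lemma zz_dvd_of_phi {h : MvPolynomial (Fin 2) F} (hh : phi F h = 0) : zz F ∣ h := by
  have key : (Ideal.Quotient.mkₐ F (Ideal.span {zz F})) =
      ((Ideal.Quotient.mkₐ F (Ideal.span {zz F})).comp (emb F)).comp (phi F) := by
    ext i
    fin_cases i
    · simp [emb]
    · simp only [emb, AlgHom.comp_apply, Fin.mk_one, phi_X1, map_neg, Polynomial.aeval_X]
      rw [← sub_eq_zero, sub_neg_eq_add, ← map_add, Ideal.Quotient.mkₐ_eq_mk,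
        Ideal.Quotient.eq_zero_iff_mem, Ideal.mem_span_singleton, zz, add_comm]
  have := DFunLike.congr_fun key h
  simp only [AlgHom.comp_apply, hh, map_zero] at this
  rwa [Ideal.Quotient.mkₐ_eq_mk, Ideal.Quotient.eq_zero_iff_mem,
    Ideal.mem_span_singleton] at this

lemma phi_eq_zero_iff {h : MvPolynomial (Fin 2) F} : phi F h = 0 ↔ zz F ∣ h := by
  refine ⟨zz_dvd_of_phi, ?_⟩
  rintro ⟨q, rfl⟩
  simp

lemma zz_ne_zero : zz F ≠ 0 := by
  intro h
  have := congrArg (aeval (R := F) ![(1 : F), 0]) h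
  simp [zz] at this

lemma phi_of_homogeneous {f : MvPolynomial (Fin 2) F} {a : ℕ} (hf : f.IsHomogeneous a) :
    ∃ α : F, phi F f = Polynomial.C α * Polynomial.X ^ a := by
  refine ⟨∑ d ∈ f.support, coeff d f * (-1) ^ (d 1), ?_⟩
  conv_lhs => rw [f.as_sum]
  rw [map_sum, map_sum, Finset.sum_mul]
  refine Finset.sum_congr rfl fun d hd => ?_
  have hdeg : d 0 + d 1 = a := by
    have := hf (mem_support_iff.1 hd)
    simpa [Finsupp.weight_apply, Finsupp.sum_fintype] using this
  rw [phi, aeval_monomial, ← hdeg, Finsupp.prod_fintype _ _ (by simp)]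
  simp only [Fin.prod_univ_two, Matrix.cons_val_zero, Matrix.cons_val_one, map_mul, map_pow,
    map_neg, map_one, Polynomial.algebraMap_eq, neg_pow (Polynomial.X : Polynomial F)]
  ring

/-- The quotient of a homogeneous polynomial by `z` is homogeneous. -/
lemma homogeneous_of_zz_mul {g : MvPolynomial (Fin 2) F} {b : ℕ}
    (hg : (zz F * g).IsHomogeneous (b + 1)) : g.IsHomogeneous b := by
  have h1 : zz F * g = zz F * homogeneousComponent b g := by
    conv_lhs => rw [← homogeneousComponent_eq_self hg]
    conv_lhs => rw [← sum_homogeneousComponent g, Finset.mul_sum, map_sum]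
    have : ∀ i ∈ Finset.range (g.totalDegree + 1),
        homogeneousComponent (b + 1) (zz F * homogeneousComponent i g) =
          if i = b then zz F * homogeneousComponent b g else 0 := by
      intro i _
      have hi : zz F * homogeneousComponent i g ∈ homogeneousSubmodule (Fin 2) F (1 + i) :=
        zz_homogeneous.mul (homogeneousComponent_isHomogeneous i g)
      rw [homogeneousComponent_of_mem hi]
      by_cases h : i = b
      · subst h; rw [if_pos (by omega), if_pos rfl]
      · rw [if_neg (by omega), if_neg h]
    rw [Finset.sum_congr rfl this, Finset.sum_ite_eq']
    split_ifs with h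
    · rfl
    · rw [homogeneousComponent_eq_zero, mul_zero]
      simp only [Finset.mem_range] at h
      omega
  rw [mul_left_cancel₀ zz_ne_zero h1]
  exact homogeneousComponent_isHomogeneous b g

/-- Elements of an ideal generated by forms of degrees `≥ n` have no terms of degree `< n`. -/
lemma coeff_eq_zero_of_mem_span {f g h : MvPolynomial (Fin 2) F} {a b n : ℕ}
    (hf : f.IsHomogeneous a) (hg : g.IsHomogeneous b) (ha : n ≤ a) (hb : n ≤ b)
    (hh : h ∈ Ideal.span {f, g}) {d : Fin 2 →₀ ℕ} (hd : d.degree < n) : coeff d h = 0 := by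
  have aux : ∀ {f : MvPolynomial (Fin 2) F} {a : ℕ} (u : MvPolynomial (Fin 2) F),
      f.IsHomogeneous a → n ≤ a → coeff d (u * f) = 0 := by
    intro f a u hf ha
    rw [coeff_mul]
    refine Finset.sum_eq_zero fun x hx => ?_
    rw [hf.coeff_eq_zero, mul_zero]
    have := congrArg Finsupp.degree (Finset.HasAntidiagonal.mem_antidiagonal.1 hx)
    rw [map_add] at this
    omega
  obtain ⟨u, v, rfl⟩ := Ideal.mem_span_pair.1 hh
  rw [coeff_add, aux u hf ha, aux v hg hb, add_zero]

/-- A common divisor of `x ^ r` and `y ^ s` is a unit. -/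
lemma isUnit_of_dvd_pow {f : MvPolynomial (Fin 2) F} {r s : ℕ}
    (h0 : f ∣ X 0 ^ r) (h1 : f ∣ X 1 ^ s) : IsUnit f := by
  obtain ⟨i, -, hi⟩ := (dvd_prime_pow (X_prime (i := (0 : Fin 2)) (R := F)) r).1 h0
  obtain _ | i := i
  · rw [pow_zero] at hi
    exact hi.symm.isUnit isUnit_one
  · exfalso
    have h2 : (X 0 : MvPolynomial (Fin 2) F) ∣ X 1 ^ s :=
      ((dvd_pow_self _ (Nat.succ_ne_zero i)).trans hi.symm.dvd).trans h1
    have h3 := (X_prime (i := (0 : Fin 2)) (R := F)).dvd_of_dvd_pow h2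
    rw [X_dvd_X] at h3
    exact absurd h3 (by decide)

lemma isUnit_of_homogeneous_zero {f : MvPolynomial (Fin 2) F} (hf : f.IsHomogeneous 0)
    (h0 : f ≠ 0) : IsUnit f := by
  have h := totalDegree_eq_zero_iff_eq_C.1 (hf.totalDegree h0)
  rw [h]
  refine (IsUnit.mk0 _ ?_).map C
  intro h'
  rw [h', map_zero] at h
  exact h0 h

/-! ### The generators of the colon ideals `(x ^ r, y ^ s) : z ^ m` -/

/-- `Gens r s m a b f g`: the forms `f, g ≠ 0` of degrees `a, b` with `a + b + m = r + s` generate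
the colon ideal `(x ^ r, y ^ s) : z ^ m`. -/
structure Gens (r s m a b : ℕ) (f g : MvPolynomial (Fin 2) F) : Prop where
  hf : f.IsHomogeneous a
  hg : g.IsHomogeneous b
  f0 : f ≠ 0
  g0 : g ≠ 0
  deg : a + b + m = r + s
  colon : ∀ h, zz F ^ m * h ∈ I0 F r s ↔ h ∈ Ideal.span {f, g}

/-- Normalization of a pair of generators: `f` is not divisible by `z` and, among the generators
with this property, it has the smallest degree. -/
def Normal (a b : ℕ) (f g : MvPolynomial (Fin 2) F) : Prop :=
  phi F f ≠ 0 ∧ (phi F g = 0 ∨ a ≤ b)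

variable {r s m a b : ℕ} {f g : MvPolynomial (Fin 2) F}

lemma Gens.swap (h : Gens r s m a b f g) : Gens r s m b a g f where
  hf := h.hg
  hg := h.hf
  f0 := h.g0
  g0 := h.f0
  deg := by have := h.deg; omega
  colon := fun x => by rw [h.colon, Set.pair_comm]

lemma gens_zero : Gens r s 0 r s (X 0 ^ r : MvPolynomial (Fin 2) F) (X 1 ^ s) where
  hf := by simpa using isHomogeneous_X_pow (R := F) (0 : Fin 2) r
  hg := by simpa using isHomogeneous_X_pow (R := F) (1 : Fin 2) s
  f0 := pow_ne_zero _ (X_ne_zero _)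
  g0 := pow_ne_zero _ (X_ne_zero _)
  deg := by omega
  colon := fun h => by rw [pow_zero, one_mul]; rfl

lemma X0_mem (h : Gens r s m a b f g) : X 0 ^ r ∈ Ideal.span {f, g} :=
  (h.colon _).1 (Ideal.mul_mem_left _ _ (Ideal.subset_span (by simp)))

lemma X1_mem (h : Gens r s m a b f g) : X 1 ^ s ∈ Ideal.span {f, g} :=
  (h.colon _).1 (Ideal.mul_mem_left _ _ (Ideal.subset_span (by simp)))

/-- Since `x ^ r` is not divisible by `z`, one of the generators is not, and up to exchanging them
the pair is normal. -/
lemma Gens.normal (h : Gens r s m a b f g) : Normal a b f g ∨ Normal b a g f := by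
  have hne : ¬ (phi F f = 0 ∧ phi F g = 0) := by
    rintro ⟨h1, h2⟩
    obtain ⟨u, v, huv⟩ := Ideal.mem_span_pair.1 (X0_mem h)
    have := congrArg (phi F) huv
    simp only [map_add, map_mul, h1, h2, mul_zero, add_zero, map_pow, phi_X0] at this
    exact pow_ne_zero r Polynomial.X_ne_zero this.symm
  unfold Normal
  rcases le_total a b with hab | hab <;> tauto

lemma Gens.pos_left (h : Gens r s m a b f g) (hm : zz F ^ m ∉ I0 F r s) : 0 < a := by
  rw [Nat.pos_iff_ne_zero]
  rintro rfl
  apply hm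
  rw [← mul_one (zz F ^ m), h.colon, ← Ideal.eq_top_iff_one]
  exact Ideal.eq_top_of_isUnit_mem _ (Ideal.subset_span (by simp))
    (isUnit_of_homogeneous_zero h.hf h.f0)

/-- One step of the Euclidean algorithm: for a normal pair `(f, g)`, after subtracting a multiple
of `f` from `g` the result is `z * g'`, and `(f, g')` generate the next colon ideal. -/
lemma Gens.step (h : Gens r s m a b f g) (hn : Normal a b f g) (hm : zz F ^ m ∉ I0 F r s) :
    ∃ g', Gens r s (m + 1) a (b - 1) f g' := by
  have hb : 0 < b := h.swap.pos_left hm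
  -- the multiple `w` of `f` to be subtracted
  obtain ⟨w, hw, hphi⟩ : ∃ w, (g - w * f).IsHomogeneous b ∧ phi F (g - w * f) = 0 := by
    obtain ⟨hfn, hg | hab⟩ := hn
    · exact ⟨0, by simpa using h.hg, by simpa using hg⟩
    · obtain ⟨α, hα⟩ := phi_of_homogeneous h.hf
      obtain ⟨β, hβ⟩ := phi_of_homogeneous h.hg
      have hα0 : α ≠ 0 := by rintro rfl; simp [hα] at hfn
      refine ⟨C (β / α) * X 0 ^ (b - a), h.hg.sub ?_, ?_⟩
      · have := ((isHomogeneous_X_pow (R := F) (0 : Fin 2) (b - a)).C_mul (β / α)).mul h.hf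
        rwa [Nat.sub_add_cancel hab] at this
      · have hC : phi F (C (β / α)) = Polynomial.C (β / α) := (phi F).commutes _
        rw [map_sub, map_mul, map_mul, map_pow, phi_X0, hα, hβ, hC,
          show Polynomial.C (β / α) * Polynomial.X ^ (b - a) *
            (Polynomial.C α * Polynomial.X ^ a) =
            Polynomial.C (β / α) * Polynomial.C α *
              (Polynomial.X ^ (b - a) * Polynomial.X ^ a) by ring,
          ← pow_add, Nat.sub_add_cancel hab, ← Polynomial.C_mul, div_mul_cancel₀ _ hα0, sub_self]
  obtain ⟨g', hg'⟩ := zz_dvd_of_phi hphi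
  have hgeq : g = w * f + zz F * g' := by rw [← hg']; ring
  refine ⟨g', h.hf, ?_, h.f0, ?_, by have := h.deg; omega, ?_⟩
  · rw [hg', show b = b - 1 + 1 by omega] at hw
    exact homogeneous_of_zz_mul hw
  · rintro rfl
    -- otherwise the ideal is generated by `f`, a common divisor of `x ^ r` and `y ^ s`
    have hdvd : ∀ x ∈ Ideal.span {f, g}, f ∣ x := by
      intro x hx
      obtain ⟨u, v, rfl⟩ := Ideal.mem_span_pair.1 hx
      rw [hgeq]
      exact ⟨u + v * w, by ring⟩
    apply hm
    rw [← mul_one (zz F ^ m), h.colon, ← Ideal.eq_top_iff_one]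
    exact Ideal.eq_top_of_isUnit_mem _ (Ideal.subset_span (by simp))
      (isUnit_of_dvd_pow (hdvd _ (X0_mem h)) (hdvd _ (X1_mem h)))
  · intro x
    rw [pow_succ, mul_assoc, h.colon, Ideal.mem_span_pair, Ideal.mem_span_pair]
    constructor
    · rintro ⟨u, v, huv⟩
      -- `z` divides `(u + v w) f`, hence `u + v w`
      have h1 : phi F (u + v * w) * phi F f = 0 := by
        rw [← map_mul, phi_eq_zero_iff]
        exact ⟨x - v * g', by rw [mul_sub, ← huv, hgeq]; ring⟩
      obtain ⟨t, ht⟩ := zz_dvd_of_phi ((mul_eq_zero.1 h1).resolve_right hn.1)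
      refine ⟨t, v, mul_left_cancel₀ (zz_ne_zero (F := F)) ?_⟩
      rw [← huv, hgeq, mul_add, ← mul_assoc, ← ht]
      ring
    · rintro ⟨u, v, rfl⟩
      exact ⟨zz F * u - v * w, v, by rw [hgeq]; ring⟩

/-- As long as `z ^ m` is nonzero modulo `(x ^ r, y ^ s)`, the colon ideal has a normal pair of
generators. -/
lemma exists_gens (r s m : ℕ) (hm : zz F ^ m ∉ I0 F r s) :
    ∃ a b f g, Gens (F := F) r s m a b f g ∧ Normal a b f g := by
  induction m with
  | zero =>
    rcases (gens_zero (F := F) (r := r) (s := s)).normal with h | h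
    · exact ⟨_, _, _, _, gens_zero, h⟩
    · exact ⟨_, _, _, _, gens_zero.swap, h⟩
  | succ m ih =>
    have hm' : zz F ^ m ∉ I0 F r s := fun h => hm (by
      rw [pow_succ]; exact Ideal.mul_mem_right _ _ h)
    obtain ⟨a, b, f, g, h, hn⟩ := ih hm'
    obtain ⟨g', hg'⟩ := h.step hn hm'
    rcases hg'.normal with h | h
    · exact ⟨_, _, _, _, hg', h⟩
    · exact ⟨_, _, _, _, hg'.swap, h⟩

end Polynomials

/-! ### The determinant as an obstruction to injectivity of `z ^ (r + s - 2k)` in degree `k - 1` -/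

section Determinant

variable {F : Type*} [Field F]

/-- The exponent vector of the monomial `x ^ i * y ^ j`. -/
noncomputable def mon (i j : ℕ) : Fin 2 →₀ ℕ := Finsupp.single 0 i + Finsupp.single 1 j

@[simp] lemma mon_zero (i j : ℕ) : mon i j 0 = i := by simp [mon]

@[simp] lemma mon_one (i j : ℕ) : mon i j 1 = j := by simp [mon]

lemma mon_le {i j i' j' : ℕ} : mon i j ≤ mon i' j' ↔ i ≤ i' ∧ j ≤ j' := by
  rw [Finsupp.le_def]; simp

lemma mon_inj {i j i' j' : ℕ} : mon i j = mon i' j' ↔ i = i' ∧ j = j' := by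
  rw [Finsupp.ext_iff]; simp

lemma mon_sub (i j i' j' : ℕ) : mon i j - mon i' j' = mon (i - i') (j - j') := by
  ext t; fin_cases t <;> simp

lemma eq_mon (d : Fin 2 →₀ ℕ) : d = mon (d 0) (d 1) := by
  ext t; fin_cases t <;> simp

lemma degree_mon (i j : ℕ) : (mon i j).degree = i + j := by
  simp [mon]

lemma monomial_mon (i j : ℕ) (c : F) :
    monomial (mon i j) c = C c * (X 0 ^ i * X 1 ^ j) := by
  rw [monomial_eq, Finsupp.prod_fintype _ _ (by simp)]
  simp

lemma mem_I0_iff {r s : ℕ} {h : MvPolynomial (Fin 2) F} :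
    h ∈ I0 F r s ↔ ∀ i j, i < r → j < s → coeff (mon i j) h = 0 := by
  have hI : I0 F r s = Ideal.span ((fun d => monomial d (1 : F)) '' {mon r 0, mon 0 s}) := by
    rw [I0, Set.image_pair]
    simp [monomial_mon]
  rw [hI, mem_ideal_span_monomial_image]
  constructor
  · intro H i j hi hj
    by_contra hne
    obtain ⟨d, hd, hle⟩ := H _ (mem_support_iff.2 hne)
    rcases hd with rfl | rfl
    · rw [mon_le] at hle; omega
    · rw [mon_le] at hle; omega
  · intro H d hd
    rw [mem_support_iff, eq_mon d] at hd
    by_cases h0 : d 0 < r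
    · refine ⟨mon 0 s, by simp, ?_⟩
      rw [eq_mon d, mon_le]
      refine ⟨Nat.zero_le _, ?_⟩
      by_contra h1
      exact hd (H _ _ h0 (by omega))
    · refine ⟨mon r 0, by simp, ?_⟩
      rw [eq_mon d, mon_le]
      omega

lemma coeff_zz_pow (n i j : ℕ) :
    coeff (mon i j) (zz F ^ n) = if i + j = n then (n.choose i : F) else 0 := by
  have hz : zz F ^ n = ∑ t ∈ Finset.range (n + 1), monomial (mon t (n - t)) (n.choose t : F) := by
    rw [zz, add_pow]
    refine Finset.sum_congr rfl fun t _ => ?_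
    rw [monomial_mon, map_natCast]
    ring
  rw [hz, coeff_sum]
  simp only [coeff_monomial, mon_inj]
  split_ifs with h
  · rw [Finset.sum_eq_single i]
    · rw [if_pos (by omega)]
    · intro t _ ht
      rw [if_neg (by omega)]
    · intro hi
      simp only [Finset.mem_range] at hi
      omega
  · refine Finset.sum_eq_zero fun t ht => ?_
    simp only [Finset.mem_range] at ht
    rw [if_neg (by omega)]

/-- The form `∑ v_i x ^ i y ^ (k - 1 - i)` of degree `k - 1`. -/
noncomputable def form {k : ℕ} (v : Fin k → F) : MvPolynomial (Fin 2) F :=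
  ∑ i : Fin k, monomial (mon i (k - 1 - i)) (v i)

lemma form_homogeneous {k : ℕ} (v : Fin k → F) : (form v).IsHomogeneous (k - 1) := by
  refine IsHomogeneous.sum _ _ _ fun i _ => isHomogeneous_monomial _ ?_
  rw [degree_mon]
  omega

lemma coeff_form {k : ℕ} (v : Fin k → F) (i : Fin k) :
    coeff (mon i (k - 1 - i)) (form v) = v i := by
  rw [form, coeff_sum]
  simp only [coeff_monomial, mon_inj]
  rw [Finset.sum_eq_single i]
  · simp
  · intro j _ hj
    rw [if_neg]
    exact fun h => hj (Fin.ext h.1)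
  · simp

lemma form_coeff {k : ℕ} (hk : 1 ≤ k) {h : MvPolynomial (Fin 2) F}
    (hh : h.IsHomogeneous (k - 1)) :
    form (fun i : Fin k => coeff (mon i (k - 1 - i)) h) = h := by
  ext d
  by_cases hd : d.degree = k - 1
  · rw [eq_mon d, degree_mon] at hd
    have h1 := coeff_form (fun i : Fin k => coeff (mon i (k - 1 - i)) h) ⟨d 0, by omega⟩
    simp only [show k - 1 - d 0 = d 1 by omega, ← eq_mon d] at h1
    exact h1
  · rw [hh.coeff_eq_zero hd, (form_homogeneous _).coeff_eq_zero hd]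

/-- The matrix of `D_k(r, s)` is the matrix of multiplication by `z ^ (r + s - 2k)` from degree
`k - 1` to degree `r + s - k - 1` of `F[x, y] / (x ^ r, y ^ s)`, in the monomial bases. -/
lemma coeff_zz_pow_mul_form {r s k : ℕ} (hkr : k ≤ r) (hrs : r ≤ s) (v : Fin k → F) (j : Fin k) :
    coeff (mon (r - k + j) (s - 1 - j)) (zz F ^ (r + s - 2 * k) * form v) =
      Matrix.vecMul v ((Dmat r s k).map fun x => (x : F)) j := by
  rw [form, Finset.mul_sum, coeff_sum, Matrix.vecMul, dotProduct]
  refine Finset.sum_congr rfl fun i _ => ?_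
  rw [coeff_mul_monomial', mon_sub, coeff_zz_pow]
  have hi := i.2
  have hj := j.2
  simp only [Matrix.map_apply, Dmat, Matrix.of_apply]
  by_cases h1 : (j : ℕ) + k ≤ s + i
  · by_cases h2 : (i : ℕ) ≤ r - k + j
    · rw [if_pos (mon_le.2 (by omega)), if_pos (by omega), if_pos h1,
        ← Nat.choose_symm (show r - k + j - i ≤ r + s - 2 * k by omega),
        show r + s - 2 * k - (r - k + j - i) = s + i - j - k by omega, Int.cast_natCast, mul_comm]
    · rw [if_neg (fun h => by rw [mon_le] at h; omega), if_pos h1, Nat.choose_eq_zero_of_lt (by omega)]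
      simp
  · rw [if_neg (fun h => by rw [mon_le] at h; omega), if_neg h1]
    simp

/-- `D_k(r, s)` vanishes in `F` iff multiplication by `z ^ (r + s - 2k)` has a nontrivial kernel
in degree `k - 1`. -/
lemma Ddet_eq_zero_iff {r s k : ℕ} (hk : 1 ≤ k) (hkr : k ≤ r) (hrs : r ≤ s) :
    ((Ddet r s k : ℤ) : F) = 0 ↔ ∃ h : MvPolynomial (Fin 2) F, h ≠ 0 ∧ h.IsHomogeneous (k - 1) ∧
      zz F ^ (r + s - 2 * k) * h ∈ I0 F r s := by
  rw [Ddet, Int.cast_det, ← Matrix.exists_vecMul_eq_zero_iff]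
  have key : ∀ v : Fin k → F, zz F ^ (r + s - 2 * k) * form v ∈ I0 F r s ↔
      Matrix.vecMul v ((Dmat r s k).map fun x => (x : F)) = 0 := by
    intro v
    rw [mem_I0_iff]
    constructor
    · intro H
      funext j
      rw [← coeff_zz_pow_mul_form hkr hrs]
      exact H _ _ (by omega) (by omega)
    · intro H i j hi hj
      by_cases hd : i + j = r + s - k - 1
      · have h1 := coeff_zz_pow_mul_form hkr hrs v ⟨i - (r - k), by omega⟩
        simp only [show r - k + (i - (r - k)) = i by omega,
          show s - 1 - (i - (r - k)) = j by omega] at h1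
        rw [h1, H]
        rfl
      · have hhom := (zz_homogeneous (F := F)).pow (r + s - 2 * k) |>.mul (form_homogeneous v)
        apply hhom.coeff_eq_zero
        rw [degree_mon]
        omega
  constructor
  · rintro ⟨v, hv, h0⟩
    refine ⟨form v, ?_, form_homogeneous v, (key v).2 h0⟩
    intro h
    apply hv
    funext i
    rw [← coeff_form v i, h, coeff_zero]
    rfl
  · rintro ⟨h, h0, hh, hmem⟩
    refine ⟨fun i => coeff (mon i (k - 1 - i)) h, ?_, (key _).1 (by rwa [form_coeff hk hh])⟩
    intro hv
    apply h0
    rw [← form_coeff hk hh, hv]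
    simp [form]

end Determinant

/-! ### Ranks of the powers of `z` on `F[x, y] / (x ^ r, y ^ s)` -/

section Ranks

variable {F : Type*} [Field F] {r s : ℕ}

/-- The algebra `F[x, y] / (x ^ r, y ^ s)`. -/
abbrev Alg (F : Type*) [Field F] (r s : ℕ) : Type _ := MvPolynomial (Fin 2) F ⧸ I0 F r s

/-- The quotient map `F[x, y] → F[x, y] / (x ^ r, y ^ s)`. -/
noncomputable abbrev mk (F : Type*) [Field F] (r s : ℕ) :
    MvPolynomial (Fin 2) F →ₐ[F] Alg F r s :=
  Ideal.Quotient.mkₐ F (I0 F r s)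

lemma mk_eq_zero {h : MvPolynomial (Fin 2) F} : mk F r s h = 0 ↔ h ∈ I0 F r s := by
  rw [Ideal.Quotient.mkₐ_eq_mk, Ideal.Quotient.eq_zero_iff_mem]

/-- The image of multiplication by `z ^ m` on `F[x, y] / (x ^ r, y ^ s)`. -/
noncomputable def WW (F : Type*) [Field F] (r s m : ℕ) : Submodule F (Alg F r s) :=
  LinearMap.range (LinearMap.mulLeft F (mk F r s (zz F)) ^ m)

lemma mem_WW {m : ℕ} {x : Alg F r s} : x ∈ WW F r s m ↔ ∃ h, mk F r s (zz F ^ m * h) = x := by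
  rw [WW, LinearMap.mem_range]
  constructor
  · rintro ⟨y, rfl⟩
    obtain ⟨h, rfl⟩ := Ideal.Quotient.mkₐ_surjective F (I0 F r s) y
    exact ⟨h, by simp [LinearMap.pow_mulLeft]⟩
  · rintro ⟨h, rfl⟩
    exact ⟨mk F r s h, by simp [LinearMap.pow_mulLeft]⟩

/-- The rank of `z ^ m` drops by the degree `a` of the generator `f` of a normal pair: the quotient
of consecutive images is `F[x, y] / (z, f, g) = F[X] / (X ^ a)`. -/
lemma finrank_WW [FiniteDimensional F (Alg F r s)] {m a b : ℕ} {f g : MvPolynomial (Fin 2) F}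
    (h : Gens r s m a b f g) (hn : Normal a b f g) :
    Module.finrank F (WW F r s m) = a + Module.finrank F (WW F r s (m + 1)) := by
  obtain ⟨α, hα⟩ := phi_of_homogeneous h.hf
  have hα0 : α ≠ 0 := by
    rintro rfl
    exact hn.1 (by simp [hα])
  have hdvd : ∀ x ∈ Ideal.span {f, g}, Polynomial.X ^ a ∣ phi F x := by
    intro x hx
    obtain ⟨u, v, rfl⟩ := Ideal.mem_span_pair.1 hx
    rw [map_add, map_mul, map_mul]
    refine dvd_add (Dvd.dvd.mul_left ⟨_, by rw [hα, mul_comm]⟩ _) (Dvd.dvd.mul_left ?_ _)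
    rcases hn.2 with h0 | hab
    · rw [h0]; exact dvd_zero _
    · obtain ⟨β, hβ⟩ := phi_of_homogeneous h.hg
      rw [hβ]
      exact Dvd.dvd.mul_left (pow_dvd_pow _ hab) _
  let θ₁ : Polynomial.degreeLT F a →ₗ[F] Alg F r s :=
    (LinearMap.mulLeft F (mk F r s (zz F ^ m))) ∘ₗ (mk F r s).toLinearMap ∘ₗ
      (emb F).toLinearMap ∘ₗ (Polynomial.degreeLT F a).subtype
  let θ : (Polynomial.degreeLT F a × WW F r s (m + 1)) →ₗ[F] Alg F r s :=
    θ₁.coprod (WW F r s (m + 1)).subtype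
  have hθ : ∀ x, θ x = mk F r s (zz F ^ m * emb F (x.1 : Polynomial F)) + (x.2 : Alg F r s) := by
    intro x
    simp [θ, θ₁]
  have hinj : Function.Injective θ := by
    rw [injective_iff_map_eq_zero]
    rintro ⟨⟨q, hq⟩, w, hw⟩ h0
    rw [hθ] at h0
    obtain ⟨t, rfl⟩ := mem_WW.1 hw
    have hmem : q = 0 := by
      have h1 : emb F q + zz F * t ∈ Ideal.span {f, g} := by
        rw [← h.colon, ← mk_eq_zero, ← h0, ← map_add]
        congr 1
        ring
      have h2 := hdvd _ h1
      rw [map_add, map_mul, phi_zz, zero_mul, add_zero, phi_emb] at h2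
      by_contra hq0
      have h3 := Polynomial.degree_le_of_dvd h2 hq0
      rw [Polynomial.degree_X_pow] at h3
      exact absurd (Polynomial.mem_degreeLT.1 hq) (not_lt.2 h3)
    subst hmem
    simp only [map_zero, mul_zero, zero_add] at h0
    ext
    · simp
    · simpa using h0
  have hrange : LinearMap.range θ = WW F r s m := by
    apply le_antisymm
    · rintro _ ⟨x, rfl⟩
      rw [hθ]
      refine add_mem (mem_WW.2 ⟨_, rfl⟩) ?_
      obtain ⟨t, ht⟩ := mem_WW.1 x.2.2
      exact mem_WW.2 ⟨zz F * t, by rw [← ht]; congr 1; ring⟩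
    · intro x hx
      obtain ⟨t, rfl⟩ := mem_WW.1 hx
      have hmonic := Polynomial.monic_X_pow (R := F) a
      -- divide `phi t` by `X ^ a = α⁻¹ phi f` with remainder `q`
      set q := phi F t %ₘ Polynomial.X ^ a with hq
      set q' := phi F t /ₘ Polynomial.X ^ a with hq'
      have hdiv : q + Polynomial.X ^ a * q' = phi F t := Polynomial.modByMonic_add_div _ _
      have hqdeg : q ∈ Polynomial.degreeLT F a := by
        rw [Polynomial.mem_degreeLT]
        have := Polynomial.degree_modByMonic_lt (phi F t) hmonic
        rwa [Polynomial.degree_X_pow] at this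
      have hz : phi F (t - emb F q - C α⁻¹ * f * emb F q') = 0 := by
        have hC : phi F (C α⁻¹) = Polynomial.C α⁻¹ := (phi F).commutes _
        rw [map_sub, map_sub, map_mul, map_mul, phi_emb, phi_emb, hα, hC, ← hdiv, ← mul_assoc,
          ← Polynomial.C_mul, inv_mul_cancel₀ hα0, map_one]
        ring
      obtain ⟨t', ht'⟩ := zz_dvd_of_phi hz
      refine ⟨(⟨q, hqdeg⟩, ⟨mk F r s (zz F ^ (m + 1) * t'), mem_WW.2 ⟨_, rfl⟩⟩), ?_⟩
      rw [hθ]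
      simp only
      rw [← map_add, ← sub_eq_zero, ← map_sub, mk_eq_zero,
        show zz F ^ m * emb F q + zz F ^ (m + 1) * t' - zz F ^ m * t =
          zz F ^ m * (-(C α⁻¹ * emb F q') * f) by
          rw [pow_succ, mul_assoc, ← ht']; ring, h.colon]
      exact Ideal.mul_mem_left _ _ (Ideal.subset_span (by simp))
  rw [← hrange, LinearMap.finrank_range_of_inj hinj, Module.finrank_prod,
    (Polynomial.degreeLTEquiv F a).finrank_eq, Module.finrank_fin_fun]

lemma WW_eq_bot {m : ℕ} (hm : zz F ^ m ∈ I0 F r s) : WW F r s m = ⊥ := by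
  rw [eq_bot_iff]
  intro x hx
  obtain ⟨t, rfl⟩ := mem_WW.1 hx
  rw [Submodule.mem_bot, mk_eq_zero]
  exact Ideal.mul_mem_right _ _ hm

lemma zz_pow_succ_mem {m : ℕ} (hm : zz F ^ m ∈ I0 F r s) : zz F ^ (m + 1) ∈ I0 F r s := by
  rw [pow_succ]; exact Ideal.mul_mem_right _ _ hm

section

variable {c : ℕ → ℕ}

lemma drop_eq_zero (hc : ∀ m, Module.finrank F (WW F r s m) =
    c m + Module.finrank F (WW F r s (m + 1))) {m : ℕ} (hm : zz F ^ m ∈ I0 F r s) : c m = 0 := by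
  have := hc m
  rw [WW_eq_bot hm, finrank_bot] at this
  omega

variable [FiniteDimensional F (Alg F r s)]

lemma drop_eq (hc : ∀ m, Module.finrank F (WW F r s m) =
    c m + Module.finrank F (WW F r s (m + 1))) {m a b : ℕ} {f g : MvPolynomial (Fin 2) F}
    (h : Gens r s m a b f g) (hn : Normal a b f g) : c m = a := by
  have h1 := hc m
  have h2 := finrank_WW h hn
  omega

/-- The rank drops `c m` either stay constant, or jump to the complementary degree. -/
lemma drop_step (hc : ∀ m, Module.finrank F (WW F r s m) =
    c m + Module.finrank F (WW F r s (m + 1))) (m : ℕ) :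
    c (m + 1) = c m ∨ c (m + 1) + c m + (m + 1) = r + s := by
  by_cases hm : zz F ^ m ∈ I0 F r s
  · left
    rw [drop_eq_zero hc hm, drop_eq_zero hc (zz_pow_succ_mem hm)]
  obtain ⟨a, b, f, g, h, hn⟩ := exists_gens r s m hm
  have ha := drop_eq hc h hn
  have hapos := h.pos_left hm
  have hbpos := h.swap.pos_left hm
  have hdeg := h.deg
  obtain ⟨g', hg'⟩ := h.step hn hm
  by_cases hmem : zz F ^ (m + 1) ∈ I0 F r s
  · right
    rw [drop_eq_zero hc hmem]
    -- `1` lies in the colon ideal, so one of its generators is a constant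
    have hone : (1 : MvPolynomial (Fin 2) F) ∈ Ideal.span {f, g'} := by
      rw [← hg'.colon, mul_one]; exact hmem
    have hb : ¬ 1 ≤ b - 1 := by
      intro hb
      have := coeff_eq_zero_of_mem_span hg'.hf hg'.hg (n := 1) (by omega) hb hone
        (d := 0) (by simp)
      simp at this
    omega
  · rcases hg'.normal with h' | h'
    · left
      rw [drop_eq hc hg' h', ha]
    · right
      rw [drop_eq hc hg'.swap h']
      omega

/-- `D_k(r, s)` is nonzero in `F` iff the rank drop at time `r + s - 2k` is `k`: both assertions
say that the two generators of the colon ideal have the same degree `k`. -/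
lemma Ddet_ne_zero_iff (hc : ∀ m, Module.finrank F (WW F r s m) =
    c m + Module.finrank F (WW F r s (m + 1))) {k : ℕ} (hk : 1 ≤ k) (hkr : k ≤ r) (hrs : r ≤ s) :
    ((Ddet r s k : ℤ) : F) ≠ 0 ↔ c (r + s - 2 * k) = k := by
  rw [Ne, Ddet_eq_zero_iff hk hkr hrs]
  set m := r + s - 2 * k with hmdef
  by_cases hm : zz F ^ m ∈ I0 F r s
  · rw [drop_eq_zero hc hm]
    refine iff_of_false (fun H => H ⟨X 0 ^ (k - 1), pow_ne_zero _ (X_ne_zero _), ?_,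
      Ideal.mul_mem_right _ _ hm⟩) (by omega)
    simpa using isHomogeneous_X_pow (R := F) (0 : Fin 2) (k - 1)
  obtain ⟨a, b, f, g, h, hn⟩ := exists_gens r s m hm
  rw [drop_eq hc h hn]
  have hdeg := h.deg
  constructor
  · intro H
    have aux : ∀ {a b : ℕ} {f g : MvPolynomial (Fin 2) F}, Gens r s m a b f g → ¬ a < k := by
      intro a b f g h hak
      refine H ⟨X 0 ^ (k - 1 - a) * f, mul_ne_zero (pow_ne_zero _ (X_ne_zero _)) h.f0, ?_, ?_⟩
      · have := (isHomogeneous_X_pow (R := F) (0 : Fin 2) (k - 1 - a)).mul h.hf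
        rwa [show k - 1 - a + a = k - 1 by omega] at this
      · rw [h.colon]
        exact Ideal.mul_mem_left _ _ (Ideal.subset_span (by simp))
    have h1 := aux h
    have h2 := aux h.swap
    omega
  · rintro rfl ⟨x, hx0, hx, hmem⟩
    rw [h.colon] at hmem
    apply hx0
    ext d
    by_cases hd : d.degree = a - 1
    · exact coeff_eq_zero_of_mem_span h.hf h.hg (n := a) le_rfl (by omega) hmem (by omega)
    · exact hx.coeff_eq_zero hd

end

end Ranks

/-! ### The tensor product of two Jordan blocks as multiplication by `1 + x + y` -/

section Tensor

variable {F : Type*} [Field F] {r s : ℕ}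

/-- The column sums `∑ i', (J_n)_{i', i} • P i'`. -/
lemma sum_jordanBlock_smul {A : Type*} [AddCommGroup A] [Module F A] (n : ℕ) (P : ℕ → A)
    (i : Fin n) :
    ∑ i' : Fin n, jordanBlock F n i' i • P i' = P i + if (i : ℕ) = 0 then 0 else P (i - 1) := by
  have hsplit : ∀ i' : Fin n, jordanBlock F n i' i • P i' =
      (if i' = i then P i' else 0) + (if (i : ℕ) = i' + 1 then P i' else 0) := by
    intro i'
    simp only [jordanBlock, Matrix.of_apply, Fin.ext_iff]
    by_cases h1 : (i' : ℕ) = i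
    · rw [if_pos (Or.inl h1.symm), if_pos h1, if_neg (by omega), one_smul, add_zero]
    · by_cases h2 : (i : ℕ) = i' + 1
      · rw [if_pos (Or.inr h2), if_neg h1, if_pos h2, one_smul, zero_add]
      · rw [if_neg (by omega), if_neg h1, if_neg h2, zero_smul, zero_add]
  rw [Finset.sum_congr rfl fun i' _ => hsplit i', Finset.sum_add_distrib, Finset.sum_ite_eq',
    if_pos (Finset.mem_univ _)]
  congr 1
  split_ifs with h
  · exact Finset.sum_eq_zero fun i' _ => if_neg (by omega)
  · rw [Finset.sum_eq_single (⟨i - 1, by omega⟩ : Fin n)]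
    · rw [if_pos (by simp only []; omega)]
    · intro j _ hj
      rw [if_neg]
      intro h'
      apply hj
      ext
      simp only []
      omega
    · simp

/-- The class of `x`. -/
noncomputable def xx (F : Type*) [Field F] (r s : ℕ) : Alg F r s := mk F r s (X 0)

/-- The class of `y`. -/
noncomputable def yy (F : Type*) [Field F] (r s : ℕ) : Alg F r s := mk F r s (X 1)

lemma xx_pow : xx F r s ^ r = 0 := by
  rw [xx, ← map_pow, mk_eq_zero]
  exact Ideal.subset_span (by simp)

lemma yy_pow : yy F r s ^ s = 0 := by
  rw [yy, ← map_pow, mk_eq_zero]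
  exact Ideal.subset_span (by simp)

lemma mk_zz : mk F r s (zz F) = xx F r s + yy F r s := by rw [zz, map_add]; rfl

/-- The first factor of the basis of `F[x, y] / (x ^ r, y ^ s)`. The powers of `1 + y` turn the
shift in `i` into multiplication by `x / (1 + y)`, so that `J_r ⊗ J_s` corresponds to
`(1 + x / (1 + y)) (1 + y) = 1 + x + y`. -/
noncomputable def PP (F : Type*) [Field F] (r s i : ℕ) : Alg F r s :=
  xx F r s ^ (r - 1 - i) * (1 + yy F r s) ^ i

/-- The second factor of the basis. -/
noncomputable def QQ (F : Type*) [Field F] (r s j : ℕ) : Alg F r s := yy F r s ^ (s - 1 - j)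

lemma xx_mul_PP {i : ℕ} (hi : i < r) : xx F r s * PP F r s i =
    (1 + yy F r s) * if i = 0 then 0 else PP F r s (i - 1) := by
  unfold PP
  split_ifs with h
  · subst h
    rw [← mul_assoc, ← pow_succ', show r - 1 - 0 + 1 = r by omega, xx_pow]
    simp
  · rw [← mul_assoc, ← pow_succ', show r - 1 - i + 1 = r - 1 - (i - 1) by omega]
    conv_lhs => rw [show i = i - 1 + 1 by omega, pow_succ']
    simp only [Nat.add_sub_cancel]
    ring

lemma yy_mul_QQ {j : ℕ} (hj : j < s) : yy F r s * QQ F r s j =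
    if j = 0 then 0 else QQ F r s (j - 1) := by
  unfold QQ
  rw [← pow_succ']
  split_ifs with h
  · subst h
    rw [show s - 1 - 0 + 1 = s by omega, yy_pow]
  · rw [show s - 1 - j + 1 = s - 1 - (j - 1) by omega]

/-- The linear map `F ^ (r × s) → F[x, y] / (x ^ r, y ^ s)` sending the basis vector `e_i ⊗ e_j` to
`x ^ (r - 1 - i) (1 + y) ^ i y ^ (s - 1 - j)`. -/
noncomputable def sig (F : Type*) [Field F] (r s : ℕ) : (Fin r × Fin s → F) →ₗ[F] Alg F r s :=
  Fintype.linearCombination F fun x : Fin r × Fin s => PP F r s x.1 * QQ F r s x.2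

open Kronecker in
lemma sig_mulVec (v : Fin r × Fin s → F) :
    sig F r s ((jordanBlock F r ⊗ₖ jordanBlock F s).mulVec v) =
      (1 + mk F r s (zz F)) * sig F r s v := by
  have key : (sig F r s) ∘ₗ Matrix.toLin' (jordanBlock F r ⊗ₖ jordanBlock F s) =
      LinearMap.mulLeft F (1 + mk F r s (zz F)) ∘ₗ sig F r s := by
    apply (Pi.basisFun F (Fin r × Fin s)).ext
    rintro ⟨i, j⟩
    rw [Pi.basisFun_apply, LinearMap.comp_apply, LinearMap.comp_apply, Matrix.toLin'_apply,
      Matrix.mulVec_single_one, LinearMap.mulLeft_apply, sig, Fintype.linearCombination_apply_single,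
      Fintype.linearCombination_apply, Fintype.sum_prod_type, one_smul]
    have h1 : ∀ (i' : Fin r) (j' : Fin s),
        (jordanBlock F r ⊗ₖ jordanBlock F s).col (i, j) (i', j') • (PP F r s i' * QQ F r s j') =
        (jordanBlock F r i' i • PP F r s i') * (jordanBlock F s j' j • QQ F r s j') := by
      intro i' j'
      rw [smul_mul_smul_comm]
      rfl
    simp only [h1]
    rw [← Finset.sum_mul_sum, sum_jordanBlock_smul, sum_jordanBlock_smul, ← yy_mul_QQ j.2, mk_zz]
    have h2 := xx_mul_PP (F := F) (s := s) i.2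
    linear_combination (-QQ F r s j) * h2
  exact DFunLike.congr_fun key v

lemma sig_surjective (hr : 1 ≤ r) (hs : 1 ≤ s) : Function.Surjective (sig F r s) := by
  have hmemE : ∀ (i j : ℕ), i < r → j < s →
      PP F r s i * QQ F r s j ∈ LinearMap.range (sig F r s) := by
    intro i j hi hj
    exact ⟨Pi.single (⟨i, hi⟩, ⟨j, hj⟩) 1, by
      rw [sig, Fintype.linearCombination_apply_single, one_smul]⟩
  have hrange : ∀ a : Alg F r s,
      (∀ i j : ℕ, i < r → j < s → a * (PP F r s i * QQ F r s j) ∈ LinearMap.range (sig F r s)) →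
      ∀ x ∈ LinearMap.range (sig F r s), a * x ∈ LinearMap.range (sig F r s) := by
    rintro a H _ ⟨v, rfl⟩
    rw [sig, Fintype.linearCombination_apply, Finset.mul_sum]
    refine Submodule.sum_mem _ fun x _ => ?_
    rw [mul_smul_comm]
    exact Submodule.smul_mem _ _ (H _ _ x.1.2 x.2.2)
  -- the range is stable under multiplication by `y` and by `x`, so it is an ideal
  have hy : ∀ x ∈ LinearMap.range (sig F r s), yy F r s * x ∈ LinearMap.range (sig F r s) := by
    refine hrange _ fun i j hi hj => ?_
    rw [mul_left_comm, yy_mul_QQ hj]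
    split_ifs with h
    · rw [mul_zero]; exact Submodule.zero_mem _
    · exact hmemE _ _ hi (by omega)
  have hx : ∀ x ∈ LinearMap.range (sig F r s), xx F r s * x ∈ LinearMap.range (sig F r s) := by
    refine hrange _ fun i j hi hj => ?_
    rw [← mul_assoc, xx_mul_PP hi]
    split_ifs with h
    · simp
    · rw [mul_assoc, add_mul, one_mul]
      exact add_mem (hmemE _ _ (by omega) hj) (hy _ (hmemE _ _ (by omega) hj))
  have hall : ∀ (h : MvPolynomial (Fin 2) F), ∀ x ∈ LinearMap.range (sig F r s),
      mk F r s h * x ∈ LinearMap.range (sig F r s) := by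
    intro h
    induction h using MvPolynomial.induction_on with
    | C c =>
      intro x hx
      have : mk F r s (C c) * x = c • x := by
        obtain ⟨y, rfl⟩ := Ideal.Quotient.mkₐ_surjective F (I0 F r s) x
        rw [← map_mul, ← smul_eq_C_mul, map_smul]
      rw [this]
      exact Submodule.smul_mem _ _ hx
    | add p q hp hq =>
      intro x hx
      rw [map_add, add_mul]
      exact add_mem (hp x hx) (hq x hx)
    | mul_X p i hp =>
      intro x hxr
      rw [map_mul, mul_assoc]
      apply hp
      fin_cases i
      · exact hx _ hxr
      · exact hy _ hxr
  -- this ideal contains the unit `(1 + y) ^ (r - 1)`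
  have hunit : IsUnit ((1 + yy F r s) ^ (r - 1)) :=
    (IsNilpotent.isUnit_one_add ⟨s, yy_pow⟩).pow _
  obtain ⟨u, hu⟩ := hunit
  have hu_mem : (u : Alg F r s) ∈ LinearMap.range (sig F r s) := by
    have := hmemE (r - 1) (s - 1) (by omega) (by omega)
    rw [PP, QQ, Nat.sub_self, Nat.sub_self, pow_zero, pow_zero, one_mul, mul_one] at this
    rwa [hu]
  intro a
  obtain ⟨h, hh⟩ := Ideal.Quotient.mkₐ_surjective F (I0 F r s) (a * ↑u⁻¹)
  have := hall h _ hu_mem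
  rw [mk, hh, mul_assoc, Units.inv_mul, mul_one] at this
  exact this

lemma finiteDimensional_Alg (hr : 1 ≤ r) (hs : 1 ≤ s) : FiniteDimensional F (Alg F r s) :=
  Module.Finite.of_surjective _ (sig_surjective hr hs)

/-- Injectivity follows by counting dimensions, the monomials `x ^ i y ^ j` with `i < r`, `j < s`
being linearly independent modulo `(x ^ r, y ^ s)`. -/
lemma sig_bijective (hr : 1 ≤ r) (hs : 1 ≤ s) : Function.Bijective (sig F r s) := by
  have hsurj := sig_surjective (F := F) hr hs
  have := finiteDimensional_Alg (F := F) hr hs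
  let ρ : (Fin r × Fin s → F) →ₗ[F] MvPolynomial (Fin 2) F :=
    Fintype.linearCombination F fun x : Fin r × Fin s => monomial (mon x.1 x.2) (1 : F)
  have hρ : ∀ (v : Fin r × Fin s → F) (x : Fin r × Fin s),
      coeff (mon x.1 x.2) (ρ v) = v x := by
    intro v x
    simp only [ρ, Fintype.linearCombination_apply, coeff_sum, coeff_smul, coeff_monomial, mon_inj]
    rw [Finset.sum_eq_single x]
    · simp
    · intro y _ hy
      rw [if_neg, smul_zero]
      rintro ⟨h1, h2⟩
      exact hy (Prod.ext (Fin.ext h1) (Fin.ext h2))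
    · simp
  have hinj : Function.Injective ((mk F r s).toLinearMap ∘ₗ ρ) := by
    rw [injective_iff_map_eq_zero]
    intro v hv
    have h0 := mem_I0_iff.1 (mk_eq_zero.1 hv)
    funext x
    rw [← hρ v x]
    exact h0 _ _ x.1.2 x.2.2
  have h1 := LinearMap.finrank_le_finrank_of_injective hinj
  have h2 := LinearMap.finrank_le_finrank_of_surjective hsurj
  exact ⟨(LinearMap.injective_iff_surjective_of_finrank_eq_finrank (le_antisymm h1 h2)).2 hsurj,
    hsurj⟩

end Tensor

/-! ### Ranks of the powers of a nilpotent block-diagonal matrix -/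

section Blocks

variable {F : Type*} [Field F] {r : ℕ} (lam : Fin r → ℕ)

/-- The nilpotent endomorphism `B - 1`, where `B` is block diagonal with blocks `J_{lam i}`. -/
noncomputable def NN (F : Type*) [Field F] {r : ℕ} (lam : Fin r → ℕ) :
    Module.End F (((i : Fin r) × Fin (lam i)) → F) :=
  Matrix.toLin' (jordanBlockDiag F lam) - 1

lemma jordanBlock_mulVec (n : ℕ) (w : Fin n → F) (j : Fin n) :
    ∑ j', jordanBlock F n j j' * w j' =
      w j + if h : (j : ℕ) + 1 < n then w ⟨j + 1, h⟩ else 0 := by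
  have hsplit : ∀ j' : Fin n, jordanBlock F n j j' * w j' =
      (if j' = j then w j' else 0) + (if (j' : ℕ) = j + 1 then w j' else 0) := by
    intro j'
    simp only [jordanBlock, Matrix.of_apply, Fin.ext_iff]
    by_cases h1 : (j' : ℕ) = j
    · rw [if_pos (Or.inl h1), if_pos h1, if_neg (by omega), one_mul, add_zero]
    · by_cases h2 : (j' : ℕ) = j + 1
      · rw [if_pos (Or.inr h2), if_neg h1, if_pos h2, one_mul, zero_add]
      · rw [if_neg (by omega), if_neg h1, if_neg h2, zero_mul, zero_add]
  rw [Finset.sum_congr rfl fun j' _ => hsplit j', Finset.sum_add_distrib, Finset.sum_ite_eq',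
    if_pos (Finset.mem_univ _)]
  congr 1
  split_ifs with h
  · rw [Finset.sum_eq_single (⟨j + 1, h⟩ : Fin n)]
    · simp
    · intro t _ ht
      exact if_neg fun h' => ht (Fin.ext h')
    · simp
  · exact Finset.sum_eq_zero fun t _ => if_neg (by omega)

lemma NN_apply (w : ((i : Fin r) × Fin (lam i)) → F) (i : Fin r) (j : Fin (lam i)) :
    NN F lam w ⟨i, j⟩ = if h : (j : ℕ) + 1 < lam i then w ⟨i, ⟨j + 1, h⟩⟩ else 0 := by
  have h1 : (jordanBlockDiag F lam).mulVec w ⟨i, j⟩ =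
      ∑ j', jordanBlock F (lam i) j j' * w ⟨i, j'⟩ := by
    rw [Matrix.mulVec, dotProduct, Fintype.sum_sigma, Finset.sum_eq_single i]
    · simp [jordanBlockDiag, Matrix.blockDiagonal'_apply_eq]
    · intro i' _ hi'
      refine Finset.sum_eq_zero fun j' _ => ?_
      rw [jordanBlockDiag, Matrix.blockDiagonal'_apply_ne _ _ _ hi'.symm, zero_mul]
    · simp
  rw [NN, LinearMap.sub_apply, Pi.sub_apply, Matrix.toLin'_apply, h1,
    jordanBlock_mulVec (lam i) fun j' => w ⟨i, j'⟩]
  simp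

lemma NN_pow_apply (m : ℕ) (w : ((i : Fin r) × Fin (lam i)) → F) (i : Fin r) (j : Fin (lam i)) :
    (NN F lam ^ m) w ⟨i, j⟩ = if h : (j : ℕ) + m < lam i then w ⟨i, ⟨j + m, h⟩⟩ else 0 := by
  induction m generalizing j with
  | zero => simp
  | succ m ih =>
    rw [pow_succ', Module.End.mul_apply, NN_apply]
    by_cases h1 : (j : ℕ) + 1 < lam i
    · rw [dif_pos h1, ih]
      simp only [show (j : ℕ) + 1 + m = j + (m + 1) by omega]
    · rw [dif_neg h1, dif_neg (by omega)]

lemma mem_ker_NN_pow (m : ℕ) (w : ((i : Fin r) × Fin (lam i)) → F) :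
    w ∈ LinearMap.ker (NN F lam ^ m) ↔ ∀ x, ¬ (x.2 : ℕ) < m → w x = 0 := by
  rw [LinearMap.mem_ker]
  constructor
  · rintro H ⟨i, j⟩ hx
    simp only [not_lt] at hx
    have := congrFun H ⟨i, ⟨j - m, by omega⟩⟩
    rw [NN_pow_apply, dif_pos (by simp only []; omega)] at this
    simpa [Nat.sub_add_cancel hx] using this
  · intro H
    funext ⟨i, j⟩
    rw [NN_pow_apply]
    split_ifs with h
    · exact H _ (by simp)
    · rfl

lemma finrank_ker_NN_pow (m : ℕ) : Module.finrank F (LinearMap.ker (NN F lam ^ m)) =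
    (Finset.univ.filter fun x : (i : Fin r) × Fin (lam i) => (x.2 : ℕ) < m).card := by
  classical
  let I : Set ((i : Fin r) × Fin (lam i)) := {x | (x.2 : ℕ) < m}
  have hker : LinearMap.ker (NN F lam ^ m) =
      ⨅ x ∈ Iᶜ, LinearMap.ker (LinearMap.proj x : (((i : Fin r) × Fin (lam i)) → F) →ₗ[F] F) := by
    ext w
    rw [mem_ker_NN_pow]
    simp [I]
  rw [hker, (LinearMap.iInfKerProjEquiv F (fun _ : (i : Fin r) × Fin (lam i) => F)
    (disjoint_compl_right (a := I)) (by simp)).finrank_eq, Module.finrank_fintype_fun_eq_card,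
    Fintype.card_subtype]
  rfl

lemma finrank_range_NN_pow (m : ℕ) : Module.finrank F (LinearMap.range (NN F lam ^ m)) =
    (Finset.univ.filter fun i => m < lam i).card +
      Module.finrank F (LinearMap.range (NN F lam ^ (m + 1))) := by
  have h1 := LinearMap.finrank_range_add_finrank_ker (NN F lam ^ m)
  have h2 := LinearMap.finrank_range_add_finrank_ker (NN F lam ^ (m + 1))
  rw [finrank_ker_NN_pow] at h1 h2
  have h3 : (Finset.univ.filter fun x : (i : Fin r) × Fin (lam i) => (x.2 : ℕ) < m + 1).card =
      (Finset.univ.filter fun x : (i : Fin r) × Fin (lam i) => (x.2 : ℕ) < m).card +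
      (Finset.univ.filter fun x : (i : Fin r) × Fin (lam i) => (x.2 : ℕ) = m).card := by
    rw [← Finset.card_union_of_disjoint]
    · congr 1
      ext x
      simp only [Finset.mem_filter, Finset.mem_univ, true_and, Finset.mem_union]
      omega
    · rw [Finset.disjoint_filter]
      intro x _ h
      omega
  have h4 : (Finset.univ.filter fun x : (i : Fin r) × Fin (lam i) => (x.2 : ℕ) = m).card =
      (Finset.univ.filter fun i => m < lam i).card := by
    refine Finset.card_bij (fun x _ => x.1) ?_ ?_ ?_
    · rintro ⟨i, j⟩ hx
      simp only [Finset.mem_filter, Finset.mem_univ, true_and] at hx ⊢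
      omega
    · rintro ⟨i, j⟩ hx ⟨i', j'⟩ hx' (rfl : i = i')
      simp only [Finset.mem_filter, Finset.mem_univ, true_and] at hx hx'
      rw [Fin.ext (hx.trans hx'.symm)]
    · intro i hi
      simp only [Finset.mem_filter, Finset.mem_univ, true_and] at hi
      exact ⟨⟨i, ⟨m, hi⟩⟩, by simp, rfl⟩
  omega

end Blocks

open Kronecker in
/-- Similarity transports the rank drops of `B - 1` to those of multiplication by `z`. -/
lemma finrank_WW_of_similar {F : Type*} [Field F] {r s : ℕ} (hr : 1 ≤ r) (hs : 1 ≤ s)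
    (lam : Fin r → ℕ)
    (hsim : MatSimilar F (jordanBlock F r ⊗ₖ jordanBlock F s) (jordanBlockDiag F lam)) (m : ℕ) :
    Module.finrank F (WW F r s m) =
      (Finset.univ.filter fun i => m < lam i).card + Module.finrank F (WW F r s (m + 1)) := by
  obtain ⟨e, he⟩ := hsim
  let σ := LinearEquiv.ofBijective (sig F r s) (sig_bijective hr hs)
  let τ := σ.symm.trans e
  have hτ : ∀ a, τ (mk F r s (zz F) * a) = NN F lam (τ a) := by
    intro a
    obtain ⟨v, rfl⟩ := σ.surjective a
    have h1 : mk F r s (zz F) * σ v =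
        σ ((jordanBlock F r ⊗ₖ jordanBlock F s).mulVec v) - σ v := by
      rw [LinearEquiv.ofBijective_apply, LinearEquiv.ofBijective_apply, sig_mulVec]
      ring
    rw [h1, map_sub]
    simp only [τ, LinearEquiv.trans_apply, LinearEquiv.symm_apply_apply, he, NN,
      LinearMap.sub_apply, Matrix.toLin'_apply, Module.End.one_apply]
  have hpow : ∀ (n : ℕ) a, τ ((LinearMap.mulLeft F (mk F r s (zz F)) ^ n) a) =
      (NN F lam ^ n) (τ a) := by
    intro n
    induction n with
    | zero => intro a; simp
    | succ n ih =>
      intro a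
      rw [pow_succ', pow_succ', Module.End.mul_apply, Module.End.mul_apply, LinearMap.mulLeft_apply,
        hτ, ih]
  have hrank : ∀ n, Module.finrank F (WW F r s n) =
      Module.finrank F (LinearMap.range (NN F lam ^ n)) := by
    intro n
    have : LinearMap.range (NN F lam ^ n) = (WW F r s n).map (τ : Alg F r s →ₗ[F] _) := by
      ext w
      simp only [WW, Submodule.mem_map, LinearMap.mem_range, exists_exists_eq_and]
      constructor
      · rintro ⟨v, rfl⟩
        exact ⟨τ.symm v, by simpa using hpow n (τ.symm v)⟩
      · rintro ⟨a, rfl⟩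
        exact ⟨τ a, (hpow n a).symm⟩
    rw [this, LinearEquiv.finrank_map_eq]
  rw [hrank, hrank, finrank_range_NN_pow]

end JordanTensor

/-- Iima–Iwamatsu recurrence: `k` (with `0 ≤ k ≤ r`) is a *jump* when `p ∤ D_k(r,s)`.
Then `p ∤ D_r(r,s)`, and for `1 ≤ k ≤ r`: if `k` is a jump then `λ_k = r + s − 2k + ℓ(k)`
where `ℓ(k)` is the least positive integer with `k − ℓ(k)` a jump; if `k` is not a jump
then `k < r` and `λ_k = λ_{k+1}`. -/
theorem stmt_10 {F : Type*} [Field F] (p : ℕ) (hp : p.Prime) [CharP F p]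
    (r s : ℕ) (hr : 1 ≤ r) (hrs : r ≤ s)
    (lam : Fin r → ℕ) (hanti : Antitone lam) (hpos : ∀ i, 0 < lam i)
    (hsim : MatSimilar F (jordanBlock F r ⊗ₖ jordanBlock F s) (jordanBlockDiag F lam)) :
    ¬ (p : ℤ) ∣ Ddet r s r ∧
    ∀ k : ℕ, ∀ _hk1 : 1 ≤ k, ∀ _hk2 : k ≤ r,
      (((k ≤ r ∧ ¬ (p : ℤ) ∣ Ddet r s k) →
        ∀ l : ℕ, 0 < l →
          (k - l ≤ r ∧ ¬ (p : ℤ) ∣ Ddet r s (k - l)) →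
          (∀ l', 0 < l' → l' < l → ¬ (k - l' ≤ r ∧ ¬ (p : ℤ) ∣ Ddet r s (k - l'))) →
          lam ⟨k - 1, by omega⟩ = r + s - 2 * k + l) ∧
      (¬ (k ≤ r ∧ ¬ (p : ℤ) ∣ Ddet r s k) → k < r) ∧
      (∀ hkr : k < r, ¬ (k ≤ r ∧ ¬ (p : ℤ) ∣ Ddet r s k) →
        lam ⟨k - 1, by omega⟩ = lam ⟨k, hkr⟩)) := by
  have hfin := JordanTensor.finiteDimensional_Alg (F := F) hr (hr.trans hrs)
  have hdrop := JordanTensor.finrank_WW_of_similar hr (hr.trans hrs) lam hsim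
  suffices hJ : _ by
    have h := JordanTensor.partition_of_conjugate hrs lam hanti hpos (fun _ => rfl)
      (JordanTensor.drop_step hdrop) (fun k => ¬ (p : ℤ) ∣ Ddet r s k) hJ
    exact ⟨h.1, fun k hk1 hk2 => h.2 k hk1 hk2 (by omega)⟩
  intro k hkr
  rw [← CharP.intCast_eq_zero_iff F p]
  rcases Nat.eq_zero_or_pos k with rfl | hk
  · -- `D_0 = 1`, and `z ^ (r + s)` vanishes modulo `(x ^ r, y ^ s)` for degree reasons
    simp only [Ddet, Matrix.det_fin_zero, Int.cast_one, one_ne_zero, not_false_eq_true, true_iff]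
    refine JordanTensor.drop_eq_zero hdrop (JordanTensor.mem_I0_iff.2 fun i j hi hj => ?_)
    rw [JordanTensor.coeff_zz_pow, if_neg (by omega)]
  · exact JordanTensor.Ddet_ne_zero_iff hdrop hk hkr hrs
end

section
/- Let p be a prime, F a field of characteristic p, and r, s integers with 1 ≤ r ≤ s. Let k_0 < k_1 < ⋯ < k_t be the complete increasing list of all integers k with 0 ≤ k ≤ r such that p does not divide D_k(r,s). Then k_0 = 0, k_t = r, and the Kronecker product J_r ⊗ J_s is similar over F to the block-diagonal matrix consisting, for each 1 ≤ i ≤ t, of exactly k_i − k_{i−1} blocks equal to J_{r+s−k_i−k_{i−1}}; moreover the part sizes r+s−k_i−k_{i−1} are pairwise distinct and strictly decreasing in i. -/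
/-!
Reversing the bases, `J_r ⊗ J_s` is multiplication by `(1 + x) * (1 + y₀)` on
`F[x, y₀] / (x ^ r, y₀ ^ s)`. Putting `y = y₀ * (1 + x)` turns this into `1 + z` with `z = x + y`,
acting on the graded ring `A = F[x, y] / (x ^ r, y ^ s)`, where `z` is homogeneous of degree one.
`D_k(r, s)` is the determinant of `z ^ (r + s - 2 * k) : A_{k-1} → A_{r+s-k-1}`.

Let `a < b` be consecutive indices with `D_a, D_b ≠ 0` in `F`. The main point is that there is
`f ∈ A_a`, `f ∉ z A`, with `z ^ (r + s - a - b) * f = 0` (`exists_generator`). Counting dimensions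
gives `f ≠ 0` in `A_a` killed by `z ^ (r + s - 2 * a - 1)`; and each `k` strictly between `a` and
`b` with `D_k = 0` allows the exponent to be lowered by one (`kills_step`), because two syzygies of
`x ^ r, y ^ s, z ^ c` of total degree less than `r + s + c` are proportional.

As `A / z A = F[x] / (x ^ r)`, the elements `x ^ j * f` with `0 ≤ j < b - a`, over all consecutive
pairs, generate `A` over `F[z]` (`mem_of_generators`). The strings they generate have lengths at
most `r + s - a - b`, and these bounds add up to `r * s = dim A` by telescoping
`(b - a) * (r + s - a - b) = b * (r + s - b) - a * (r + s - a)` (`sum_sizes`). Hence the strings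
are independent and have exactly these lengths (`exists_equiv_of_strings`).

Forms of degree `d` are encoded as univariate polynomials of degree at most `d` by setting `x = 1`.
-/

open Kronecker

/-! ### Syzygies, in one variable -/

open Polynomial in
/-- Homogeneous forms of degree `d` in `x, y` are written as polynomials in `X = y / x` of degree
at most `d`, so that `z = x + y` becomes `1 + X` and `x` becomes `1`. With
`m + r = n + s = d + c + 1`, where `d` is the degree of the form `f`, `Kills s f c m n` says `z ^ c * f = u * x ^ r + v * y ^ s`
for forms `u`, `v`, i.e. `z ^ c` annihilates `f` in `F[x, y] / (x ^ r, y ^ s)`. -/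
def Kills {F : Type*} [Field F] (s : ℕ) (f : F[X]) (c m n : ℕ) : Prop :=
  ∃ U V : F[X], U.natDegree < m ∧ V.natDegree < n ∧ f * (1 + X) ^ c = U + V * X ^ s

section Univariate

open Polynomial

variable {F : Type*} [Field F]

lemma natDegree_one_add_X_pow (n : ℕ) : ((1 + X : F[X]) ^ n).natDegree = n := by
  rw [natDegree_pow, add_comm, ← C_1, natDegree_X_add_C, mul_one]

lemma monic_one_add_X : (1 + X : F[X]).Monic := by
  rw [add_comm, ← C_1]; exact monic_X_add_C 1

lemma prime_one_add_X : Prime (1 + X : F[X]) := by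
  have := prime_X_sub_C (-1 : F)
  rwa [C_neg, C_1, sub_neg_eq_add, add_comm] at this

/-- If the coefficients of `f * (1 + X) ^ c` vanish in the window `[m, s)`, then what lies below
the window is the `x ^ r` part and what lies above it the `y ^ s` part. -/
lemma kills_of_coeff {s c m n d : ℕ} {f : F[X]} (hf : f.natDegree ≤ d) (hm : 0 < m) (hms : m ≤ s)
    (hn : 0 < n) (hd : d + c < s + n)
    (h : ∀ i, m ≤ i → i < s → (f * (1 + X) ^ c).coeff i = 0) : Kills s f c m n := by
  set q := f * (1 + X) ^ c with hq
  have hqd : q.natDegree < s + n := by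
    refine lt_of_le_of_lt natDegree_mul_le ?_
    rw [natDegree_one_add_X_pow]; omega
  set U : F[X] := ∑ i ∈ Finset.range m, monomial i (q.coeff i) with hU
  have hUc : ∀ i, U.coeff i = if i < m then q.coeff i else 0 := by
    intro i
    simp [hU, coeff_monomial]
  have hUd : U.natDegree < m := by
    rw [Nat.lt_iff_le_pred hm, natDegree_le_iff_coeff_eq_zero]
    intro i hi
    rw [hUc, if_neg (by omega)]
  have hdvd : X ^ s ∣ q - U := by
    rw [X_pow_dvd_iff]
    intro i hi
    rw [coeff_sub, hUc]
    split_ifs with h1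
    · simp
    · rw [h i (by omega) hi, sub_zero]
  obtain ⟨V, hV⟩ := hdvd
  refine ⟨U, V, hUd, ?_, by linear_combination hV⟩
  rw [Nat.lt_iff_le_pred hn, natDegree_le_iff_coeff_eq_zero]
  intro i hi
  have h1 := congrArg (fun g => g.coeff (i + s)) hV
  simp only [coeff_X_pow_mul, coeff_sub, hUc] at h1
  rw [← h1, if_neg (by omega), coeff_eq_zero_of_natDegree_lt (by omega), sub_zero]

lemma Kills.coeff_eq_zero {s c m n : ℕ} {f : F[X]} (h : Kills s f c m n) {i : ℕ} (hi : m ≤ i)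
    (his : i < s) : (f * (1 + X) ^ c).coeff i = 0 := by
  obtain ⟨U, V, hU, -, h⟩ := h
  rw [h, coeff_add, coeff_mul_X_pow', if_neg (by omega), add_zero,
    coeff_eq_zero_of_natDegree_lt (by omega)]

/-- If `z ^ c` annihilates `z ^ j * g`, then `z ^ (c + j + l)` annihilates `g`. -/
lemma Kills.shift {s c m n c' m' n' : ℕ} (j l : ℕ) {f g : F[X]} (h : Kills s f c m n)
    (hf : f = (1 + X) ^ j * g) (hc : c' = c + j + l) (hm : m + l ≤ m') (hn : n + l ≤ n') :
    Kills s g c' m' n' := by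
  obtain ⟨U, V, hU, hV, h⟩ := h
  refine ⟨U * (1 + X) ^ l, V * (1 + X) ^ l, ?_, ?_, ?_⟩
  · refine lt_of_le_of_lt natDegree_mul_le ?_
    rw [natDegree_one_add_X_pow]; omega
  · refine lt_of_le_of_lt natDegree_mul_le ?_
    rw [natDegree_one_add_X_pow]; omega
  · subst hf hc
    rw [pow_add, pow_add]
    linear_combination (1 + X) ^ l * h

/-- Over `F`, the matrix of `D_k(r, s)` is that of multiplication by `z ^ (r + s - 2 * k)` from
degree `k - 1` to degree `r + s - k - 1` of `F[x, y] / (x ^ r, y ^ s)` in monomial bases. -/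
lemma Dmat_mulVec {r s k : ℕ} (hks : k ≤ s) (v : Fin k → F) (i : Fin k) :
    ((Dmat r s k).map (Int.castRingHom F)).mulVec v i =
      ((∑ j : Fin k, C (v j) * X ^ (j : ℕ)) * (1 + X) ^ (r + s - 2 * k)).coeff (s - k + i) := by
  rw [Finset.sum_mul, finsetSum_coeff, Matrix.mulVec, dotProduct]
  refine Finset.sum_congr rfl fun j _ => ?_
  rw [mul_assoc, coeff_C_mul, coeff_X_pow_mul', mul_comm]
  congr 1
  simp only [Dmat, Matrix.map_apply, Matrix.of_apply]
  by_cases h : (j : ℕ) + k ≤ s + i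
  · rw [if_pos h, if_pos (by omega), coeff_one_add_X_pow]
    have : s + (i : ℕ) - j - k = s - k + i - j := by omega
    simp [this]
  · rw [if_neg h, if_neg (by omega)]; simp

lemma exists_kills_of_Ddet {r s k : ℕ} (hkr : k < r) (hrs : r ≤ s)
    (hD : ((Ddet r s k : ℤ) : F) = 0) :
    ∃ h : F[X], h ≠ 0 ∧ h.natDegree < k ∧ Kills s h (r + s - 2 * k) (s - k) (r - k) := by
  have hdet : ((Dmat r s k).map (Int.castRingHom F)).det = 0 := by
    have := (Int.castRingHom F).map_det (Dmat r s k)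
    rw [RingHom.mapMatrix_apply] at this
    rw [← this]; exact hD
  obtain ⟨v, hv0, hv⟩ := Matrix.exists_mulVec_eq_zero_iff.mpr hdet
  have hk : 0 < k := by
    rcases Nat.eq_zero_or_pos k with rfl | h
    · exact absurd (Subsingleton.elim v 0) hv0
    · exact h
  set h : F[X] := ∑ j : Fin k, C (v j) * X ^ (j : ℕ) with hh
  have hdeg : h.natDegree ≤ k - 1 := by
    refine natDegree_sum_le_of_forall_le _ _ fun j _ => ?_
    refine (natDegree_C_mul_X_pow_le _ _).trans ?_
    omega
  refine ⟨h, ?_, by omega, kills_of_coeff hdeg (by omega) (by omega) (by omega) (by omega) ?_⟩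
  · intro h0
    apply hv0
    funext j
    have : h.coeff j = v j := by
      simp [hh, coeff_C_mul, coeff_X_pow, Fin.val_inj]
    rw [← this, h0]; simp
  · intro i hi1 hi2
    have := Dmat_mulVec (r := r) (s := s) (by omega) v ⟨i - (s - k), by omega⟩
    rw [hv] at this
    rw [show s - k + (i - (s - k)) = i by omega] at this
    exact this.symm

lemma eq_zero_of_kills {r s k : ℕ} (hkr : k < r) (hrs : r ≤ s)
    (hD : ((Ddet r s k : ℤ) : F) ≠ 0) {h : F[X]} (hdeg : h.natDegree < k)
    {n : ℕ} (hk : Kills s h (r + s - 2 * k) (s - k) n) : h = 0 := by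
  by_contra h0
  apply hD
  have hdet : ((Dmat r s k).map (Int.castRingHom F)).det = 0 := by
    rw [← Matrix.exists_mulVec_eq_zero_iff]
    have hsum : (∑ j : Fin k, C (h.coeff j) * X ^ (j : ℕ)) = h := by
      rw [Fin.sum_univ_eq_sum_range (fun j => C (h.coeff j) * X ^ j)]
      exact (as_sum_range_C_mul_X_pow' h hdeg).symm
    refine ⟨fun j => h.coeff j, ?_, ?_⟩
    · intro hz
      apply h0
      rw [← hsum]
      refine Finset.sum_eq_zero fun j _ => ?_
      have := congrFun hz j
      simp only [Pi.zero_apply] at this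
      rw [this]; simp
    · funext i
      rw [Dmat_mulVec (by omega), hsum]
      exact hk.coeff_eq_zero (by omega) (by omega)
  have := (Int.castRingHom F).map_det (Dmat r s k)
  rw [RingHom.mapMatrix_apply, hdet] at this
  exact this

/-- There are `a + 1` coefficients in a form of degree `a`, and only `a` of them in its product
with `z ^ (r + s - 2 * a - 1)` survive modulo `(x ^ r, y ^ s)`. -/
lemma exists_kills_succ {r s a : ℕ} (har : a < r) (hrs : r ≤ s) :
    ∃ f : F[X], f ≠ 0 ∧ f.natDegree ≤ a ∧ Kills s f (r + s - a - (a + 1)) (s - a) (r - a) := by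
  let L : degreeLT F (a + 1) →ₗ[F] (Fin a → F) :=
    LinearMap.pi fun i => (lcoeff F (s - a + i)) ∘ₗ
      (LinearMap.mulRight F ((1 + X : F[X]) ^ (r + s - a - (a + 1)))) ∘ₗ
        (degreeLT F (a + 1)).subtype
  have hker : LinearMap.ker L ≠ ⊥ := by
    have : FiniteDimensional F (degreeLT F (a + 1)) :=
      Module.Finite.equiv (degreeLTEquiv F (a + 1)).symm
    apply LinearMap.ker_ne_bot_of_finrank_lt
    rw [(degreeLTEquiv F (a + 1)).finrank_eq]
    simp
  obtain ⟨f, hf, hf0⟩ := Submodule.exists_mem_ne_zero_of_ne_bot hker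
  have hdeg : (f : F[X]).natDegree ≤ a := by
    have := mem_degreeLT.mp f.2
    by_cases hf' : (f : F[X]) = 0
    · simp [hf']
    · exact Nat.lt_succ_iff.mp ((natDegree_lt_iff_degree_lt hf').mpr this)
  refine ⟨f, by simpa using hf0, hdeg,
    kills_of_coeff hdeg (by omega) (by omega) (by omega) (by omega) fun i hi1 hi2 => ?_⟩
  have := congrFun (LinearMap.mem_ker.mp hf) ⟨i - (s - a), by omega⟩
  simpa [L, show s - a + (i - (s - a)) = i by omega] using this

/-- The heart of the argument. As `D_b = 0`, some `h ≠ 0` of degree `b - 1` is annihilated by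
`z ^ (r + s - 2 * b)`. The two syzygies of `x ^ r, y ^ s, z ^ (r + s - 2 * b)` coming from `f` and
`h` have total degree too small to be independent. Hence they are proportional, and either the one
of `f` can be divided by `z`, or `h` is divisible by `z ^ (b - a)`, which contradicts `D_a ≠ 0`. -/
lemma kills_step {r s a b : ℕ} (hab : a < b) (hbr : b < r) (hrs : r ≤ s)
    (hDa : ((Ddet r s a : ℤ) : F) ≠ 0) (hDb : ((Ddet r s b : ℤ) : F) = 0) {f : F[X]}
    (hk : Kills s f (r + s - a - b) (s - b + 1) (r - b + 1)) :
    Kills s f (r + s - a - (b + 1)) (s - b) (r - b) := by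
  obtain ⟨h, h0, hdeg, hkh⟩ := exists_kills_of_Ddet hbr hrs hDb
  obtain ⟨U', V', hU', hV', hf⟩ := hk
  have hkh' := hkh
  obtain ⟨U, V, hU, hV, hh⟩ := hkh
  set e := r + s - 2 * b with he
  set j := b - a with hj
  have hc : r + s - a - b = e + j := by omega
  rw [hc, pow_add] at hf
  have hz : (1 + X : F[X]) ^ e ≠ 0 := pow_ne_zero _ monic_one_add_X.ne_zero
  -- The first minor of the two syzygies is divisible by `z ^ e` but has degree less than `e`.
  have hcross : U' * V - U * V' = 0 := by
    apply eq_zero_of_dvd_of_natDegree_lt (p := (1 + X : F[X]) ^ e)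
    · exact ⟨f * (1 + X) ^ j * V - h * V', by linear_combination (-V) * hf + V' * hh⟩
    · rw [natDegree_one_add_X_pow]
      refine lt_of_le_of_lt (natDegree_sub_le _ _) (max_lt ?_ ?_)
      · exact lt_of_le_of_lt natDegree_mul_le (by omega)
      · exact lt_of_le_of_lt natDegree_mul_le (by omega)
  have hV1 : h * V' = (1 + X) ^ j * (f * V) := by
    apply mul_left_cancel₀ hz
    linear_combination V' * hh - V * hf - hcross
  have hU1 : h * U' = (1 + X) ^ j * (f * U) := by
    apply mul_left_cancel₀ hz
    linear_combination U' * hh - U * hf + X ^ s * hcross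
  by_cases hdvd : (1 + X : F[X]) ∣ U' ∧ (1 + X : F[X]) ∣ V'
  · obtain ⟨⟨U'', rfl⟩, ⟨V'', rfl⟩⟩ := hdvd
    have key : ∀ (W : F[X]) (m : ℕ), 0 < m → ((1 + X) * W).natDegree < m + 1 →
        W.natDegree < m := by
      intro W m hm hW
      by_cases hW0 : W = 0
      · simpa [hW0] using hm
      · rw [natDegree_mul monic_one_add_X.ne_zero hW0] at hW
        have := natDegree_one_add_X_pow (F := F) 1
        rw [pow_one] at this
        omega
    refine ⟨U'', V'', key _ _ (by omega) hU', key _ _ (by omega) hV', ?_⟩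
    apply mul_left_cancel₀ (monic_one_add_X (F := F)).ne_zero
    have : (1 + X : F[X]) ^ e * (1 + X) ^ j = (1 + X) * (1 + X) ^ (r + s - a - (b + 1)) := by
      rw [← pow_add, ← pow_succ']
      congr 1; omega
    linear_combination hf - f * this
  · exfalso
    have hjh : (1 + X : F[X]) ^ j ∣ h := by
      rw [not_and_or] at hdvd
      rcases hdvd with hd | hd
      · exact prime_one_add_X.pow_dvd_of_dvd_mul_right j hd ⟨_, hU1⟩
      · exact prime_one_add_X.pow_dvd_of_dvd_mul_right j hd ⟨_, hV1⟩
    obtain ⟨g, rfl⟩ := hjh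
    have hg0 : g ≠ 0 := right_ne_zero_of_mul h0
    rw [natDegree_mul (pow_ne_zero _ monic_one_add_X.ne_zero) hg0, natDegree_one_add_X_pow] at hdeg
    apply hg0
    exact eq_zero_of_kills (by omega) hrs hDa (by omega)
      (hkh'.shift j j rfl (m' := s - a) (n' := r - b + j) (by omega) (by omega) (by omega))

/-- If `D_a ≠ 0` in `F` and `D_k = 0` for all `k` strictly between `a` and `b`, some form `f` of
degree `a` is annihilated by `z ^ (r + s - a - b)` and not divisible by `z`: the value of `f` at
`-1` is its residue modulo `z = 1 + X`, and `f / z` would lie in a kernel that is trivial by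
`D_a ≠ 0`. -/
lemma exists_generator {r s a b : ℕ} (hab : a < b) (hbr : b ≤ r) (hrs : r ≤ s)
    (hDa : ((Ddet r s a : ℤ) : F) ≠ 0)
    (hD : ∀ k, a < k → k < b → ((Ddet r s k : ℤ) : F) = 0) :
    ∃ f : F[X], f.natDegree ≤ a ∧ f.eval (-1) ≠ 0 ∧
      Kills s f (r + s - a - b) (s - b + 1) (r - b + 1) := by
  have hex : ∃ f : F[X], f ≠ 0 ∧ f.natDegree ≤ a ∧
      Kills s f (r + s - a - b) (s - b + 1) (r - b + 1) := by
    obtain ⟨f, hf0, hfd, hf⟩ := exists_kills_succ (F := F) (show a < r by omega) hrs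
    refine ⟨f, hf0, hfd, ?_⟩
    induction b, hab using Nat.le_induction with
    | base =>
      rwa [show s - a.succ + 1 = s - a by omega, show r - a.succ + 1 = r - a by omega]
    | succ b hab ih =>
      have := kills_step hab (by omega) hrs hDa (hD b hab (by omega))
        (ih (by omega) fun k h1 h2 => hD k h1 (by omega))
      rwa [show s - (b + 1) + 1 = s - b by omega, show r - (b + 1) + 1 = r - b by omega]
  obtain ⟨f, hf0, hfd, hf⟩ := hex
  refine ⟨f, hfd, fun hev => hf0 ?_, hf⟩
  have hdvd : (1 + X : F[X]) ∣ f := by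
    have := dvd_iff_isRoot.mpr hev
    rwa [C_neg, C_1, sub_neg_eq_add, add_comm] at this
  obtain ⟨g, rfl⟩ := hdvd
  have hg0 : g ≠ 0 := right_ne_zero_of_mul hf0
  have h1 := natDegree_one_add_X_pow (F := F) 1
  rw [pow_one] at h1
  rw [natDegree_mul monic_one_add_X.ne_zero hg0, h1] at hfd
  rw [eq_zero_of_kills (h := g) (by omega) hrs hDa (by omega)
    (hf.shift 1 (b - a - 1) (by rw [pow_one]) (m' := s - a) (n' := r + b) (by omega) (by omega)
      (by omega)), mul_zero]

end Univariate

/-! ### Graded generation and Jordan strings -/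

section Graded

open Polynomial Finset

variable {F : Type*} [Field F] {V : Type*} [AddCommGroup V] [Module F V]

/-- The homogenization `x ^ d * f (y / x)` of `f`, for `f` of degree at most `d`, where `w i j`
stands for the image of the monomial `x ^ i * y ^ j` in `V`. -/
def homog (w : ℕ → ℕ → V) (d : ℕ) (f : F[X]) : V :=
  ∑ i ∈ range (d + 1), f.coeff i • w (d - i) i

variable {w : ℕ → ℕ → V} {Z : V →ₗ[F] V}

lemma homog_add (d : ℕ) (f g : F[X]) : homog w d (f + g) = homog w d f + homog w d g := by
  simp [homog, add_smul, sum_add_distrib]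

lemma homog_C (d : ℕ) (c : F) : homog w d (C c) = c • w d 0 := by
  simp [homog, coeff_C, ite_smul]

lemma homog_X_pow (i j : ℕ) : homog w (i + j) (X ^ j : F[X]) = w i j := by
  rw [homog, sum_eq_single j]
  · simp
  · intro k _ hk
    simp [coeff_X_pow, hk]
  · intro h
    simp at h

lemma map_homog (hZ : ∀ i j, Z (w i j) = w (i + 1) j + w i (j + 1)) {d : ℕ} {f : F[X]}
    (hf : f.natDegree ≤ d) : Z (homog w d f) = homog w (d + 1) (f * (1 + X)) := by
  rw [mul_add, mul_one, homog_add]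
  have h1 : homog w (d + 1) f = ∑ i ∈ range (d + 1), f.coeff i • w (d - i + 1) i := by
    rw [homog, sum_range_succ, coeff_eq_zero_of_natDegree_lt (by omega), zero_smul, add_zero]
    refine sum_congr rfl fun i hi => ?_
    rw [mem_range] at hi
    rw [show d + 1 - i = d - i + 1 by omega]
  have h2 : homog w (d + 1) (f * X) = ∑ i ∈ range (d + 1), f.coeff i • w (d - i) (i + 1) := by
    rw [homog, sum_range_succ']
    simp [coeff_mul_X]
  rw [h1, h2, homog, map_sum, ← sum_add_distrib]
  refine sum_congr rfl fun i _ => ?_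
  rw [map_smul, hZ, smul_add]

lemma pow_map_homog (hZ : ∀ i j, Z (w i j) = w (i + 1) j + w i (j + 1)) {d : ℕ} {f : F[X]}
    (hf : f.natDegree ≤ d) (c : ℕ) :
    (Z ^ c) (homog w d f) = homog w (d + c) (f * (1 + X) ^ c) := by
  induction c with
  | zero => simp
  | succ c ih =>
    rw [pow_succ', Module.End.mul_apply, ih, map_homog hZ, pow_succ, mul_assoc, add_assoc]
    refine natDegree_mul_le.trans ?_
    rw [natDegree_one_add_X_pow]; omega

lemma pow_map_homog_eq_zero (hZ : ∀ i j, Z (w i j) = w (i + 1) j + w i (j + 1)) {r s : ℕ}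
    (hw : ∀ i j, r ≤ i ∨ s ≤ j → w i j = 0) {d c m n : ℕ} {f : F[X]} (hf : f.natDegree ≤ d)
    (hk : Kills s f c m n) (hd : r + m ≤ d + c + 1) : (Z ^ c) (homog w d f) = 0 := by
  rw [pow_map_homog hZ hf]
  refine sum_eq_zero fun i _ => ?_
  by_cases h1 : s ≤ i
  · rw [hw _ _ (Or.inr h1), smul_zero]
  by_cases h2 : m ≤ i
  · rw [hk.coeff_eq_zero h2 (by omega), zero_smul]
  · rw [hw _ _ (Or.inl (by omega)), smul_zero]

/-- A graded form of Nakayama's lemma. Modulo `z`, every form of degree `n` is a multiple of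
`x ^ n`, and a form not divisible by `z` is a nonzero multiple of it. So one such form in each
degree `n < r` generates everything under `Z`. -/
lemma mem_of_generators (hZ : ∀ i j, Z (w i j) = w (i + 1) j + w i (j + 1)) {r s : ℕ}
    (hw : ∀ i j, r ≤ i ∨ s ≤ j → w i j = 0) (R : Submodule F V) (hR : ∀ v ∈ R, Z v ∈ R)
    (hgen : ∀ n < r, ∃ f : F[X], f.natDegree ≤ n ∧ f.eval (-1) ≠ 0 ∧ homog w n f ∈ R)
    (i j : ℕ) : w i j ∈ R := by
  suffices H : ∀ n, ∀ f : F[X], f.natDegree ≤ n → homog w n f ∈ R by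
    rw [← homog_X_pow (F := F) (w := w) i j]
    exact H _ _ (by simp)
  intro n
  induction n with
  | zero =>
    have h0 : w 0 0 ∈ R := by
      by_cases hr : 0 < r
      · obtain ⟨f, hf, hf1, hf2⟩ := hgen 0 hr
        rw [eq_C_of_natDegree_le_zero hf] at hf1 hf2
        rw [homog_C] at hf2
        rw [eval_C] at hf1
        exact (R.smul_mem_iff hf1).mp hf2
      · rw [hw 0 0 (by omega)]; exact R.zero_mem
    intro f hf
    rw [eq_C_of_natDegree_le_zero hf, homog_C]
    exact R.smul_mem _ h0
  | succ n ih =>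
    have hdec : ∀ f : F[X], f.natDegree ≤ n + 1 →
        homog w (n + 1) f - f.eval (-1) • w (n + 1) 0 ∈ R := by
      intro f hf
      have hdvd : (X - C (-1) : F[X]) ∣ f - C (f.eval (-1)) := X_sub_C_dvd_sub_C_eval
      obtain ⟨q, hq⟩ := hdvd
      rw [C_neg, C_1, sub_neg_eq_add, add_comm] at hq
      have hqd : q.natDegree ≤ n := by
        by_cases hq0 : q = 0
        · simp [hq0]
        have h1 := natDegree_one_add_X_pow (F := F) 1
        rw [pow_one] at h1
        have h2 : ((1 + X) * q).natDegree ≤ n + 1 := by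
          rw [← hq]; exact natDegree_sub_C.le.trans hf
        rw [natDegree_mul monic_one_add_X.ne_zero hq0, h1] at h2
        omega
      have hfe : f = q * (1 + X) + C (f.eval (-1)) := by linear_combination hq
      have : homog w (n + 1) f - f.eval (-1) • w (n + 1) 0 = Z (homog w n q) := by
        conv_lhs => rw [hfe, homog_add, homog_C, ← hfe]
        rw [map_homog hZ hqd, add_sub_cancel_right]
      rw [this]
      exact hR _ (ih q hqd)
    have h0 : w (n + 1) 0 ∈ R := by
      by_cases hr : n + 1 < r
      · obtain ⟨f, hf, hf1, hf2⟩ := hgen _ hr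
        have := R.sub_mem hf2 (hdec f hf)
        rw [sub_sub_cancel] at this
        exact (R.smul_mem_iff hf1).mp this
      · rw [hw _ _ (Or.inl (by omega))]; exact R.zero_mem
    intro f hf
    have := R.add_mem (hdec f hf) (R.smul_mem (f.eval (-1)) h0)
    rwa [sub_add_cancel] at this

/-- The vectors `Z ^ (d - 1) q, …, Z q, q` span a Jordan string: `1 + Z` acts on them through the
columns of `J_d`. -/
lemma sum_jordanBlock_smul {d : ℕ} {q : V} (hq : (Z ^ d) q = 0) (m' : Fin d) :
    ∑ m : Fin d, jordanBlock F d m m' • (Z ^ (d - 1 - m : ℕ)) q =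
      (Z ^ (d - 1 - m' : ℕ)) q + Z ((Z ^ (d - 1 - m' : ℕ)) q) := by
  rw [← Module.End.mul_apply, ← pow_succ']
  obtain ⟨m', hm'⟩ := m'
  have hsplit : ∀ m : Fin d, jordanBlock F d m ⟨m', hm'⟩ • (Z ^ (d - 1 - m : ℕ)) q =
      (if m = ⟨m', hm'⟩ then (Z ^ (d - 1 - m : ℕ)) q else 0) +
        (if m' = (m : ℕ) + 1 then (Z ^ (d - 1 - m : ℕ)) q else 0) := by
    intro m
    simp only [jordanBlock, Matrix.of_apply, ite_smul, one_smul, zero_smul, Fin.ext_iff]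
    split_ifs <;> first | omega | simp
  rw [sum_congr rfl fun m _ => hsplit m, sum_add_distrib, sum_ite_eq' univ]
  simp only [mem_univ, if_true]
  congr 1
  rcases m' with _ | m'
  · rw [sum_eq_zero fun m _ => if_neg (by omega)]
    rw [show d - 1 - 0 + 1 = d by omega, hq]
  · rw [sum_eq_single (⟨m', by omega⟩ : Fin d)]
    · rw [if_pos rfl]
      congr 2; simp only; omega
    · intro m _ hm
      rw [if_neg fun h => hm (Fin.ext (by simp only; omega))]
    · simp

/-- If vectors `q x` with `Z ^ d x (q x) = 0` generate `V` under `Z`, and the `d x` add up to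
`dim V`, then the Jordan strings through the `q x` form a basis of `V`. -/
lemma exists_equiv_of_strings {ι : Type} [Fintype ι] [DecidableEq ι] [FiniteDimensional F V]
    (d : ι → ℕ) (q : ι → V) (hq : ∀ x, (Z ^ d x) (q x) = 0)
    (hspan : ∀ R : Submodule F V, (∀ v ∈ R, Z v ∈ R) → (∀ x, q x ∈ R) → R = ⊤)
    (hdim : Module.finrank F V = ∑ x, d x) :
    ∃ e : V ≃ₗ[F] ((x : ι) × Fin (d x) → F),
      ∀ v, e (v + Z v) = (jordanBlockDiag F d).mulVec (e v) := by
  let u : ((x : ι) × Fin (d x)) → V := fun y => (Z ^ (d y.1 - 1 - y.2 : ℕ)) (q y.1)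
  let g := Fintype.linearCombination F u
  have hg : ∀ v, g ((jordanBlockDiag F d).mulVec v) = g v + Z (g v) := by
    intro v
    have : g ∘ₗ (jordanBlockDiag F d).mulVecLin = g + Z ∘ₗ g := by
      refine LinearMap.pi_ext' fun y => LinearMap.ext_ring ?_
      obtain ⟨x, m'⟩ := y
      simp only [LinearMap.comp_apply, LinearMap.single_apply, LinearMap.add_apply,
        Matrix.mulVecLin_apply, Matrix.mulVec_single_one, g,
        Fintype.linearCombination_apply]
      rw [Fintype.sum_sigma, sum_eq_single x]
      · have hs : ∑ i, (Pi.single (⟨x, m'⟩ : (x : ι) × Fin (d x)) (1 : F) :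
            (x : ι) × Fin (d x) → F) i • u i = u ⟨x, m'⟩ := by
          rw [← Fintype.linearCombination_apply, Fintype.linearCombination_apply_single, one_smul]
        rw [hs, show u ⟨x, m'⟩ = (Z ^ (d x - 1 - m' : ℕ)) (q x) from rfl,
          ← sum_jordanBlock_smul (hq x) m']
        refine sum_congr rfl fun m _ => ?_
        simp [jordanBlockDiag, Matrix.blockDiagonal'_apply_eq, u]
      · intro x' _ hx'
        refine sum_eq_zero fun m _ => ?_
        simp [jordanBlockDiag, Matrix.blockDiagonal'_apply_ne _ _ _ hx']
      · simp
    exact LinearMap.congr_fun this v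
  have hu : ∀ y, u y ∈ LinearMap.range g := fun y =>
    ⟨Pi.single y 1, by simp [g, Fintype.linearCombination_apply_single]⟩
  have hsurj : Function.Surjective g := by
    rw [← LinearMap.range_eq_top]
    refine hspan _ ?_ ?_
    · rintro _ ⟨v, rfl⟩
      rw [← add_sub_cancel_left (g v) (Z (g v)), ← hg, ← map_sub]
      exact ⟨_, rfl⟩
    · intro x
      rcases Nat.eq_zero_or_pos (d x) with h | h
      · have := hq x
        rw [h, pow_zero, Module.End.one_apply] at this
        rw [this]; exact Submodule.zero_mem _
      · have := hu ⟨x, ⟨d x - 1, by omega⟩⟩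
        simpa [u] using this
  have hinj : Function.Injective g :=
    (LinearMap.injective_iff_surjective_of_finrank_eq_finrank (by simp [hdim])).mpr hsurj
  let e := LinearEquiv.ofBijective g ⟨hinj, hsurj⟩
  refine ⟨e.symm, fun v => ?_⟩
  rw [LinearEquiv.symm_apply_eq]
  have h1 : e ((jordanBlockDiag F d).mulVec (e.symm v)) = e (e.symm v) + Z (e (e.symm v)) := hg _
  rw [h1, e.apply_symm_apply]

end Graded

/-! ### The Kronecker product as a truncated polynomial ring -/

section Kronecker

variable {F : Type*} [Field F]

/-- The standard basis vector with index `r - 1 - i`, or `0` if `r ≤ i`. Reversing the order makes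
`J_r` act as multiplication by `1 + x` on `F[x] / (x ^ r)`. -/
def revStd (F : Type*) [Field F] (r i : ℕ) : Fin r → F :=
  fun a => if (a : ℕ) + i + 1 = r then 1 else 0

lemma jordanBlock_mulVec_revStd (r i : ℕ) :
    (jordanBlock F r).mulVec (revStd F r i) = revStd F r i + revStd F r (i + 1) := by
  funext a
  simp only [Matrix.mulVec, dotProduct, jordanBlock, Matrix.of_apply, revStd, Pi.add_apply]
  by_cases hi : i < r
  · rw [Finset.sum_eq_single (⟨r - 1 - i, by omega⟩ : Fin r)]
    · simp only
      split_ifs <;> first | omega | simp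
    · intro c _ hc
      rw [if_neg (c := (c : ℕ) + i + 1 = r) fun h => hc (Fin.ext (by simp only; omega)), mul_zero]
    · simp
  · rw [Finset.sum_eq_zero, if_neg (by omega), if_neg (by omega), add_zero]
    intro c _
    rw [if_neg (c := (c : ℕ) + i + 1 = r) (by omega), mul_zero]

/-- The vector of `x ^ i * y₀ ^ l * (1 + x) ^ n` in `F[x, y₀] / (x ^ r, y₀ ^ s)`, on which
`J_r ⊗ J_s` acts as `(1 + x) * (1 + y₀)`. With `y = y₀ * (1 + x)` one has
`(1 + x) * (1 + y₀) = 1 + x + y`, and the monomial `x ^ i * y ^ j` is `twist F r s j j i`. -/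
def twist (F : Type*) [Field F] (r s : ℕ) : ℕ → ℕ → ℕ → (Fin r × Fin s → F)
  | 0, l, i => fun x => revStd F r i x.1 * revStd F s l x.2
  | n + 1, l, i => twist F r s n l i + twist F r s n l (i + 1)

lemma kronecker_mulVec_twist (r s n l i : ℕ) :
    (jordanBlock F r ⊗ₖ jordanBlock F s).mulVec (twist F r s n l i) =
      twist F r s n l i + (twist F r s n l (i + 1) + twist F r s (n + 1) (l + 1) i) := by
  induction n generalizing i with
  | zero =>
    have h1 : (jordanBlock F r ⊗ₖ jordanBlock F s).mulVec (twist F r s 0 l i) = fun x =>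
        (jordanBlock F r).mulVec (revStd F r i) x.1 *
          (jordanBlock F s).mulVec (revStd F s l) x.2 := by
      funext x
      simp only [Matrix.mulVec, dotProduct, twist, Matrix.kroneckerMap_apply]
      rw [Fintype.sum_prod_type, Finset.sum_mul_sum]
      exact Finset.sum_congr rfl fun _ _ => Finset.sum_congr rfl fun _ _ => by ring
    rw [h1, jordanBlock_mulVec_revStd, jordanBlock_mulVec_revStd]
    funext x
    simp only [twist, Pi.add_apply]
    ring
  | succ n ih =>
    rw [twist, Matrix.mulVec_add, ih, ih]
    simp only [twist]
    abel

lemma twist_eq_zero {r s l i : ℕ} (n : ℕ) (h : r ≤ i ∨ s ≤ l) : twist F r s n l i = 0 := by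
  induction n generalizing i with
  | zero =>
    funext x
    obtain ⟨a, b⟩ := x
    simp only [twist, revStd, Pi.zero_apply, mul_eq_zero]
    rcases h with h | h
    · left; rw [if_neg (by omega)]
    · right; rw [if_neg (by omega)]
  | succ n ih => rw [twist, ih h, ih (by omega), add_zero]

/-- The monomials `x ^ i * y ^ j` span: multiplication by `1 + x` is undone by descending induction
on the exponent of the nilpotent `x`. -/
lemma eq_top_of_twist {r s : ℕ} (R : Submodule F (Fin r × Fin s → F))
    (h : ∀ i j, twist F r s j j i ∈ R) : R = ⊤ := by
  have hdesc : ∀ l n, (∀ i, twist F r s (n + 1) l i ∈ R) → ∀ i, twist F r s n l i ∈ R := by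
    intro l n hn
    suffices H : ∀ m i, r ≤ i + m → twist F r s n l i ∈ R from fun i => H r i (by omega)
    intro m
    induction m with
    | zero => intro i hi; rw [twist_eq_zero n (Or.inl (by omega))]; exact R.zero_mem
    | succ m ih =>
      intro i hi
      have := R.sub_mem (hn i) (ih (i + 1) (by omega))
      rwa [twist, add_sub_cancel_right] at this
  have h0 : ∀ l i, twist F r s 0 l i ∈ R := by
    intro l
    have : ∀ n, (∀ i, twist F r s n l i ∈ R) → ∀ i, twist F r s 0 l i ∈ R := by
      intro n
      induction n with
      | zero => exact id
      | succ n ih => exact fun hn => ih (hdesc l n hn)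
    exact this l fun i => h i l
  rw [eq_top_iff, ← (Pi.basisFun F (Fin r × Fin s)).span_eq, Submodule.span_le]
  rintro _ ⟨⟨a, b⟩, rfl⟩
  have : Pi.basisFun F (Fin r × Fin s) (a, b) = twist F r s 0 (s - 1 - b) (r - 1 - a) := by
    funext ⟨a', b'⟩
    simp only [Pi.basisFun_apply, twist, revStd, Pi.single_apply, Prod.mk.injEq, Fin.ext_iff]
    split_ifs <;> first | omega | simp
  rw [this]
  exact h0 _ _

end Kronecker

/-! ### The list of indices and the decomposition -/

lemma Ddet_zero (r s : ℕ) : Ddet r s 0 = 1 := Matrix.det_isEmpty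

lemma Ddet_self {r s : ℕ} (hrs : r ≤ s) : Ddet r s r = 1 := by
  rw [Ddet, Matrix.det_of_isUpperTriangular]
  · refine Finset.prod_eq_one fun i _ => ?_
    simp only [Dmat, Matrix.of_apply]
    rw [if_pos (by omega), show r + s - 2 * r = s - r by omega,
      show s + (i : ℕ) - i - r = s - r by omega]
    simp
  · intro i j hij
    have hij : (j : ℕ) < i := hij
    simp only [Dmat, Matrix.of_apply]
    rw [if_pos (by omega), Nat.choose_eq_zero_of_lt (by omega)]
    simp

lemma exists_consecutive {t n : ℕ} (k : Fin (t + 1) → ℕ) (h0 : k 0 ≤ n) (h1 : n < k (Fin.last t)) :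
    ∃ i : Fin t, k i.castSucc ≤ n ∧ n < k i.succ := by
  by_contra! H
  have : ∀ i, k i ≤ n := fun i => Fin.induction h0 (fun i hi => H i hi) i
  exact absurd (this (Fin.last t)) (by omega)

lemma sum_sizes {t r s : ℕ} (k : Fin (t + 1) → ℕ) (hmono : Monotone k) (hk : ∀ i, k i ≤ r)
    (hrs : r ≤ s) (h0 : k 0 = 0) (h1 : k (Fin.last t) = r) :
    ∑ i : Fin t, (k i.succ - k i.castSucc) * (r + s - k i.succ - k i.castSucc) = r * s := by
  zify
  have h : ∀ i : Fin t, (((k i.succ - k i.castSucc : ℕ) : ℤ) *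
      ((r + s - k i.succ - k i.castSucc : ℕ) : ℤ)) =
      (k i.succ * (r + s - k i.succ) : ℤ) - k i.castSucc * (r + s - k i.castSucc) := by
    intro i
    have h1 := hk i.succ
    have h2 := hk i.castSucc
    have h3 : k i.castSucc ≤ k i.succ := hmono i.castSucc_le_succ
    rw [Nat.cast_sub h3, Nat.cast_sub (by omega), Nat.cast_sub (by omega)]
    push_cast; ring
  rw [Finset.sum_congr rfl fun i _ => h i]
  have htel : ∀ (t : ℕ) (g : Fin (t + 1) → ℤ),
      ∑ i : Fin t, (g i.succ - g i.castSucc) = g (Fin.last t) - g 0 := by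
    intro t g
    rw [Finset.sum_sub_distrib, sub_eq_sub_iff_add_eq_add, add_comm, ← Fin.sum_univ_succ,
      Fin.sum_univ_castSucc, add_comm]
  rw [htel t fun i => (k i * (r + s - k i) : ℤ), h0, h1]
  push_cast; ring

/-- Iima–Iwamatsu decomposition: if `k₀ < k₁ < ⋯ < k_t` lists all `k ∈ [0, r]` with
`p ∤ D_k(r,s)`, then `k₀ = 0`, `k_t = r`, and `J_r ⊗ J_s` decomposes into `k_i − k_{i−1}`
blocks `J_{r+s−k_i−k_{i−1}}` for `1 ≤ i ≤ t`, with strictly decreasing part sizes. -/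
theorem stmt_11 {F : Type*} [Field F] (p : ℕ) (hp : p.Prime) [CharP F p]
    (r s : ℕ) (hr : 1 ≤ r) (hrs : r ≤ s)
    (t : ℕ) (kseq : Fin (t + 1) → ℕ) (hmono : StrictMono kseq)
    (hjump : ∀ i, kseq i ≤ r ∧ ¬ (p : ℤ) ∣ Ddet r s (kseq i))
    (hall : ∀ k : ℕ, k ≤ r → ¬ (p : ℤ) ∣ Ddet r s k → ∃ i, kseq i = k) :
    kseq 0 = 0 ∧ kseq (Fin.last t) = r ∧
    MatSimilar F (jordanBlock F r ⊗ₖ jordanBlock F s)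
      (jordanBlockDiag F
        (fun x : (i : Fin t) × Fin (kseq i.succ - kseq i.castSucc) =>
          r + s - kseq x.1.succ - kseq x.1.castSucc)) ∧
    StrictAnti (fun i : Fin t => r + s - kseq i.succ - kseq i.castSucc) := by
  have hp1 : ¬ (p : ℤ) ∣ 1 := by
    intro h
    have := Int.natCast_dvd_natCast.mp (by simpa using h : (p : ℤ) ∣ ((1 : ℕ) : ℤ))
    exact hp.one_lt.ne' (Nat.dvd_one.mp this)
  have hk0 : kseq 0 = 0 := by
    obtain ⟨i, hi⟩ := hall 0 (by omega) (by rwa [Ddet_zero])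
    have := hmono.monotone (Fin.zero_le i)
    omega
  have hkt : kseq (Fin.last t) = r := by
    obtain ⟨i, hi⟩ := hall r le_rfl (by rwa [Ddet_self hrs])
    have := hmono.monotone (Fin.le_last i)
    have := (hjump (Fin.last t)).1
    omega
  refine ⟨hk0, hkt, ?_, ?_⟩
  · have hgen : ∀ i : Fin t, ∃ f : Polynomial F, f.natDegree ≤ kseq i.castSucc ∧
        f.eval (-1) ≠ 0 ∧ Kills s f (r + s - kseq i.castSucc - kseq i.succ)
          (s - kseq i.succ + 1) (r - kseq i.succ + 1) := by
      intro i
      refine exists_generator (hmono i.castSucc_lt_succ) (hjump _).1 hrs ?_ ?_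
      · exact fun h => (hjump _).2 ((CharP.intCast_eq_zero_iff F p _).mp h)
      · intro k hk1 hk2
        rw [CharP.intCast_eq_zero_iff F p]
        by_contra hk
        obtain ⟨i', rfl⟩ := hall k (hk2.le.trans (hjump _).1) hk
        rw [hmono.lt_iff_lt, Fin.lt_def] at hk1 hk2
        simp only [Fin.val_castSucc, Fin.val_succ] at hk1 hk2
        omega
    choose f hfd hfe hfk using hgen
    let w : ℕ → ℕ → (Fin r × Fin s → F) := fun i j => twist F r s j j i
    let Z : (Fin r × Fin s → F) →ₗ[F] (Fin r × Fin s → F) :=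
      (jordanBlock F r ⊗ₖ jordanBlock F s).mulVecLin - 1
    have hZ : ∀ i j, Z (w i j) = w (i + 1) j + w i (j + 1) := by
      intro i j
      simp [Z, w, kronecker_mulVec_twist]
    have hw : ∀ i j, r ≤ i ∨ s ≤ j → w i j = 0 := fun i j h => twist_eq_zero j h
    have hkill : ∀ x : (i : Fin t) × Fin (kseq i.succ - kseq i.castSucc),
        (Z ^ (r + s - kseq x.1.succ - kseq x.1.castSucc))
          (homog w (kseq x.1.castSucc + x.2) (f x.1)) = 0 := by
      rintro ⟨i, j⟩
      have h1 := (hjump i.succ).1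
      have h2 := (hjump i.castSucc).1
      have h3 := hfd i
      refine pow_map_homog_eq_zero hZ hw (by simp only; omega)
        (m := s - kseq i.succ + 1) (n := r - kseq i.succ + 1) ?_ (by simp only; omega)
      have := hfk i
      rwa [Nat.sub_right_comm] at this
    have hspan : ∀ R : Submodule F (Fin r × Fin s → F), (∀ v ∈ R, Z v ∈ R) →
        (∀ x : (i : Fin t) × Fin (kseq i.succ - kseq i.castSucc),
          homog w (kseq x.1.castSucc + x.2) (f x.1) ∈ R) → R = ⊤ := by
      intro R hR hq
      refine eq_top_of_twist R (mem_of_generators hZ hw R hR fun n hn => ?_)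
      obtain ⟨i, hi1, hi2⟩ := exists_consecutive (n := n) kseq (by omega) (by omega)
      refine ⟨f i, (hfd i).trans hi1, hfe i, ?_⟩
      have := hq ⟨i, ⟨n - kseq i.castSucc, by omega⟩⟩
      simpa [Nat.add_sub_cancel' hi1] using this
    have hdim : Module.finrank F (Fin r × Fin s → F) =
        ∑ x : (i : Fin t) × Fin (kseq i.succ - kseq i.castSucc),
          (r + s - kseq x.1.succ - kseq x.1.castSucc) := by
      rw [Fintype.sum_sigma]
      simp only [Finset.sum_const, Finset.card_univ, Fintype.card_fin, smul_eq_mul]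
      rw [sum_sizes kseq hmono.monotone (fun i => (hjump i).1) hrs hk0 hkt]
      simp
    obtain ⟨e, he⟩ := exists_equiv_of_strings _ _ hkill hspan hdim
    refine ⟨e, fun v => ?_⟩
    rw [← he]
    simp [Z]
  · intro i i' hii
    have h1 := hmono (Fin.castSucc_lt_castSucc_iff.mpr hii)
    have h2 := hmono (Fin.succ_lt_succ_iff.mpr hii)
    have h3 := (hjump i'.succ).1
    have h4 := (hjump i'.castSucc).1
    simp only
    omega
end

section
/- For all integers 1 ≤ k ≤ r ≤ s, the determinant D_k(r,s) satisfies the identity of rational numbers D_k(r,s) = Π_{i=0}^{k−1} C(r+s−2k+i, s−k) / C(s−k+i, s−k); equivalently, D_k(r,s) · Π_{i=0}^{k−1} C(s−k+i, s−k) = Π_{i=0}^{k−1} C(r+s−2k+i, s−k). -/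
open Finset Nat in
/-- Vandermonde's convolution, with the sum running over the whole index range of the matrix. -/
lemma sum_choose_mul_entry (n a k i j : ℕ) (hi : i < k) :
    ∑ m ∈ range k, i.choose m * (if j ≤ a + m then n.choose (a + m - j) else 0) =
      if j ≤ a + i then (n + i).choose (a + i - j) else 0 := by
  have h1 : ∑ m ∈ range k, i.choose m * (if j ≤ a + m then n.choose (a + m - j) else 0) =
      ∑ m ∈ range (i + 1), i.choose m * (if j ≤ a + m then n.choose (a + m - j) else 0) := by
    symm
    apply sum_subset
    · intro x; simp only [mem_range]; omega
    · intro x _ hx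
      rw [Nat.choose_eq_zero_of_lt (by simpa using hx), zero_mul]
  rw [h1, ← sum_range_reflect]
  split_ifs with h
  · obtain ⟨t, ht⟩ := Nat.exists_eq_add_of_le h
    have h2 : ∀ p ∈ range (i + 1),
        i.choose (i + 1 - 1 - p) * (if j ≤ a + (i + 1 - 1 - p) then
          n.choose (a + (i + 1 - 1 - p) - j) else 0) =
        i.choose p * (if p ≤ t then n.choose (t - p) else 0) := by
      intro p hp
      have hp' : p ≤ i := by simpa [Nat.lt_succ_iff] using hp
      rw [Nat.add_sub_cancel, Nat.choose_symm hp']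
      congr 1
      by_cases hpt : p ≤ t
      · rw [if_pos hpt, if_pos (by omega)]
        congr 1; omega
      · rw [if_neg hpt, if_neg (by omega)]
    rw [sum_congr rfl h2, show a + i - j = t by omega, add_comm n i, Nat.add_choose_eq,
      Finset.Nat.sum_antidiagonal_eq_sum_range_succ (fun p q => i.choose p * n.choose q)]
    -- Both sums extend by zero to a common range.
    trans ∑ p ∈ range (i + t + 1), i.choose p * (if p ≤ t then n.choose (t - p) else 0)
    · apply sum_subset
      · intro x; simp only [mem_range]; omega
      · intro x _ hx
        rw [Nat.choose_eq_zero_of_lt (by simpa using hx), zero_mul]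
    · rw [← sum_subset (s₁ := range (t + 1))]
      · apply sum_congr rfl
        intro p hp
        rw [if_pos (by simpa [Nat.lt_succ_iff] using hp)]
      · intro x; simp only [mem_range]; omega
      · intro x _ hx
        rw [if_neg (by simpa using hx), mul_zero]
  · apply sum_eq_zero
    intro p hp
    rw [if_neg (by omega), mul_zero]

open Nat in
lemma entry_mul_factorials (a b i j : ℕ) :
    (a + i)! * ((b + j)! * (if j ≤ a + i then (a + b + i).choose (a + i - j) else 0)) =
      (a + b + i)! * (a + i).descFactorial j := by
  split_ifs with h
  · have h1 := Nat.choose_mul_factorial_mul_factorial (show a + i - j ≤ a + b + i by omega)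
    rw [show a + b + i - (a + i - j) = b + j by omega] at h1
    rw [← h1, ← Nat.factorial_mul_descFactorial h]
    ring
  · rw [Nat.descFactorial_of_lt (by omega)]
    simp

open Nat in
lemma det_descFactorial (a k : ℕ) :
    (Matrix.of fun i j : Fin k => ((a + (i : ℕ)).descFactorial j : ℤ)).det =
      ∏ i ∈ Finset.range k, (i ! : ℤ) := by
  have h := Matrix.det_eval_matrixOfPolynomials_eq_det_vandermonde
    (fun i : Fin k => ((i : ℕ) : ℤ) + (a : ℤ)) (fun i => descPochhammer ℤ i)
    (fun i => descPochhammer_natDegree ℤ i) (fun i => monic_descPochhammer ℤ i)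
  rw [Matrix.det_vandermonde_add] at h
  have h2 : (Matrix.of fun i j : Fin k => ((a + (i : ℕ)).descFactorial j : ℤ)) =
      Matrix.of fun i j : Fin k => (descPochhammer ℤ j).eval (((i : ℕ) : ℤ) + (a : ℤ)) := by
    ext i j
    simp only [Matrix.of_apply]
    rw [← descPochhammer_eval_eq_descFactorial]
    push_cast
    rw [add_comm]
  rw [h2, ← h]
  cases k with
  | zero => simp
  | succ n =>
    rw [Matrix.det_vandermonde_id_eq_superFactorial, ← Nat.prod_range_succ_factorial]
    push_cast
    rfl

open Nat in
lemma Ddet_mul_factorials (a b k : ℕ) :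
    (∏ i ∈ Finset.range k, ((a + i)! : ℤ)) * ((∏ i ∈ Finset.range k, ((b + i)! : ℤ)) *
      Ddet (b + k) (a + k) k) =
    (∏ i ∈ Finset.range k, ((a + b + i)! : ℤ)) * ∏ i ∈ Finset.range k, (i ! : ℤ) := by
  let P : Matrix (Fin k) (Fin k) ℤ := Matrix.of fun i m => ((i : ℕ).choose m : ℤ)
  have hP : P.det = 1 := by
    rw [Matrix.det_of_lowerTriangular]
    · simp [P]
    · intro i j hij
      have hij' : (i : ℕ) < j := by simpa using hij
      simp [P, Nat.choose_eq_zero_of_lt hij']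
  have hPD : (P * Dmat (b + k) (a + k) k) = Matrix.of fun i j : Fin k =>
      ((if (j : ℕ) ≤ a + i then (a + b + i).choose (a + i - j) else 0 : ℕ) : ℤ) := by
    ext i j
    rw [Matrix.of_apply, ← sum_choose_mul_entry (a + b) a k i j i.2, Matrix.mul_apply,
      ← Fin.sum_univ_eq_sum_range
        (fun m => (i : ℕ).choose m * (if (j : ℕ) ≤ a + m then (a + b).choose (a + m - j) else 0))]
    push_cast
    apply Finset.sum_congr rfl
    intro m _
    simp only [P, Dmat, Matrix.of_apply]
    congr 1
    by_cases hc : (j : ℕ) ≤ a + m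
    · rw [if_pos hc, if_pos (by omega), show b + k + (a + k) - 2 * k = a + b by omega,
        show a + k + (m : ℕ) - j - k = a + m - j by omega]
    · rw [if_neg hc, if_neg (by omega)]
  have hdet : Ddet (b + k) (a + k) k = (P * Dmat (b + k) (a + k) k).det := by
    rw [Matrix.det_mul, hP, one_mul, Ddet]
  rw [hdet, hPD, ← det_descFactorial a k,
    ← Fin.prod_univ_eq_prod_range (fun i => ((a + i)! : ℤ)),
    ← Fin.prod_univ_eq_prod_range (fun i => ((b + i)! : ℤ)),
    ← Fin.prod_univ_eq_prod_range (fun i => ((a + b + i)! : ℤ)),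
    ← Matrix.det_mul_row, ← Matrix.det_mul_column, ← Matrix.det_mul_column]
  congr 1
  ext i j
  simp only [Matrix.of_apply]
  exact_mod_cast entry_mul_factorials a b i j

/-- Closed formula: `D_k(r,s) · Π_{i<k} C(s−k+i, s−k) = Π_{i<k} C(r+s−2k+i, s−k)`. -/
theorem stmt_12 (r s k : ℕ) (hk : 1 ≤ k) (hkr : k ≤ r) (hrs : r ≤ s) :
    Ddet r s k * ∏ i ∈ Finset.range k, ((s - k + i).choose (s - k) : ℤ) =
      ∏ i ∈ Finset.range k, ((r + s - 2 * k + i).choose (s - k) : ℤ) := by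
  obtain ⟨b, rfl⟩ := Nat.exists_eq_add_of_le' hkr
  obtain ⟨a, rfl⟩ := Nat.exists_eq_add_of_le' (hkr.trans hrs)
  rw [show b + k + (a + k) - 2 * k = a + b by omega, Nat.add_sub_cancel]
  have key := Ddet_mul_factorials a b k
  have h1 : (∏ i ∈ Finset.range k, ((a + i).choose a : ℤ)) *
      (∏ _i ∈ Finset.range k, (a.factorial : ℤ)) * ∏ i ∈ Finset.range k, (i.factorial : ℤ) =
      ∏ i ∈ Finset.range k, ((a + i).factorial : ℤ) := by
    rw [← Finset.prod_mul_distrib, ← Finset.prod_mul_distrib]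
    refine Finset.prod_congr rfl fun i _ => ?_
    have := Nat.choose_mul_factorial_mul_factorial (show a ≤ a + i by omega)
    rw [Nat.add_sub_cancel_left] at this
    exact_mod_cast this
  have h2 : (∏ i ∈ Finset.range k, ((a + b + i).choose a : ℤ)) *
      (∏ _i ∈ Finset.range k, (a.factorial : ℤ)) *
        ∏ i ∈ Finset.range k, ((b + i).factorial : ℤ) =
      ∏ i ∈ Finset.range k, ((a + b + i).factorial : ℤ) := by
    rw [← Finset.prod_mul_distrib, ← Finset.prod_mul_distrib]
    refine Finset.prod_congr rfl fun i _ => ?_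
    have := Nat.choose_mul_factorial_mul_factorial (show a ≤ a + b + i by omega)
    rw [show a + b + i - a = b + i by omega] at this
    exact_mod_cast this
  have hne : ∀ f : ℕ → ℕ, (∏ i ∈ Finset.range k, ((f i).factorial : ℤ)) ≠ 0 := fun f =>
    Finset.prod_ne_zero_iff.mpr fun i _ => by exact_mod_cast Nat.factorial_ne_zero _
  rw [← h1, ← h2] at key
  refine mul_right_cancel₀ (mul_ne_zero (mul_ne_zero (hne fun _ => a) (hne fun i => i))
    (hne fun i => b + i)) ?_
  linear_combination key
end

section
/- For all integers r, s, k with 1 ≤ r ≤ s and 0 ≤ k ≤ r, the identity of integers C(s, s−k) · D_{k+1}(r+1, s+1) = C(r+s−k, s−k) · D_k(r,s) holds. -/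
open Polynomial Finset

/-- The binomial coefficient `C(a + b, b + i - j)`, zero if `b + i < j`, as a rational number. -/
def toeplitzEntry (a b i j : ℕ) : ℚ :=
  if j ≤ b + i then ((a + b).choose (b + i - j) : ℚ) else 0

/-- The finite Toeplitz section of size `n` of `toeplitzEntry`. -/
def toeplitzMat (a b n : ℕ) : Matrix (Fin n) (Fin n) ℚ :=
  Matrix.of fun i j => toeplitzEntry a b i j

theorem cast_Ddet (a b k : ℕ) : (Ddet (a + k) (b + k) k : ℚ) = (toeplitzMat a b k).det := by
  rw [Ddet, ← eq_intCast (Int.castRingHom ℚ), RingHom.map_det]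
  congr 1
  ext i j
  have h1 : a + k + (b + k) - 2 * k = a + b := by omega
  have h2 : b + k + (i : ℕ) - j - k = b + i - j := by omega
  have h3 : (j : ℕ) + k ≤ b + k + i ↔ (j : ℕ) ≤ b + i := by omega
  simp only [Dmat, toeplitzMat, toeplitzEntry, RingHom.mapMatrix_apply, Matrix.map_apply,
    Matrix.of_apply, h1, h2, h3]
  split_ifs <;> simp

/-- Cramer's rule for the last unknown: if the first `k` entries of `M v` vanish, then
`v_k * det M_{k+1} = (M v)_k * det M_k`. -/
theorem last_mul_det_succ (a b k : ℕ) (v : ℕ → ℚ) (c : ℚ)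
    (h0 : ∀ i < k, ∑ j ∈ range (k + 1), v j * toeplitzEntry a b i j = 0)
    (hc : ∑ j ∈ range (k + 1), v j * toeplitzEntry a b k j = c) :
    v k * (toeplitzMat a b (k + 1)).det = c * (toeplitzMat a b k).det := by
  have h := Matrix.det_updateCol_sum (toeplitzMat a b (k + 1)) (Fin.last k) (fun j => v j)
  rw [smul_eq_mul, Fin.val_last] at h
  rw [← h, Matrix.det_succ_column _ (Fin.last k), Fin.sum_univ_castSucc, Finset.sum_eq_zero]
  · rw [zero_add, Matrix.updateCol_self, Fin.val_last, ← two_mul, pow_mul]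
    congr 1
    · simp only [toeplitzMat, Matrix.of_apply, smul_eq_mul, Fin.val_last]
      rw [Fin.sum_univ_eq_sum_range (fun j => v j * toeplitzEntry a b k j), hc]
      simp
    · congr 1
      ext i j
      simp [toeplitzMat, Fin.succAbove_last, (Fin.castSucc_lt_last j).ne]
  · intro i _
    rw [Matrix.updateCol_self]
    simp only [toeplitzMat, Matrix.of_apply, smul_eq_mul]
    rw [Fin.sum_univ_eq_sum_range (fun j => v j * toeplitzEntry a b (Fin.castSucc i) j)]
    simp [h0 i i.isLt]

/-- The `k`-th finite difference at `0` kills polynomials of degree less than `k`. -/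
theorem sum_alternating_eval (P : ℚ[X]) (k : ℕ) (hP : P.natDegree < k) :
    ∑ j ∈ range (k + 1), ((-1) ^ (k - j) * (k.choose j : ℚ)) * P.eval (j : ℚ) = 0 := by
  have h := congrFun (Polynomial.fwdDiff_iter_eq_zero_of_degree_lt hP) 0
  rw [fwdDiff_iter_eq_sum_shift] at h
  simpa using h

/-- The `k`-th finite difference of `x ↦ 1 / (x + 1)`. -/
theorem fwdDiff_iter_inv (k x : ℕ) :
    (fwdDiff 1)^[k] (fun y : ℕ => (1 : ℚ) / (y + 1)) x
      = (-1) ^ k * k.factorial * x.factorial / (x + k + 1).factorial := by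
  induction k generalizing x with
  | zero => simp [Nat.factorial_succ]; field_simp
  | succ k ih =>
    rw [Function.iterate_succ_apply', fwdDiff, ih, ih]
    rw [show x + 1 + k + 1 = x + k + 1 + 1 by ring, show x + (k + 1) + 1 = x + k + 1 + 1 by ring]
    rw [Nat.factorial_succ (x + k + 1), Nat.factorial_succ k, Nat.factorial_succ x]
    have := Nat.factorial_ne_zero (x + k + 1)
    push_cast
    field_simp
    ring

theorem sum_alternating_inv (k x : ℕ) :
    ∑ j ∈ range (k + 1), ((-1) ^ (k - j) * (k.choose j : ℚ)) * (1 / ((x + 1 + k : ℕ) - (j : ℚ)))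
      = k.factorial * x.factorial / (x + k + 1).factorial := by
  have h := fwdDiff_iter_inv k x
  rw [fwdDiff_iter_eq_sum_shift, ← Finset.sum_range_reflect] at h
  have h2 : (k.factorial * x.factorial / (x + k + 1).factorial : ℚ) =
      (-1) ^ k * ((-1) ^ k * k.factorial * x.factorial / (x + k + 1).factorial) := by
    have : ((-1 : ℚ) ^ k) * (-1) ^ k = 1 := by rw [← mul_pow]; simp
    linear_combination (-(k.factorial * x.factorial / (x + k + 1).factorial : ℚ)) * this
  rw [h2, ← h, Finset.mul_sum]
  refine Finset.sum_congr rfl fun j hj => ?_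
  have hj : j ≤ k := by simpa [Nat.lt_succ_iff] using hj
  obtain ⟨d, rfl⟩ := Nat.exists_eq_add_of_le hj
  have e1 : j + d + 1 - 1 - j = d := by omega
  have e2 : j + d - d = j := by omega
  have e3 : j + d - j = d := by omega
  have e4 : (j + d).choose d = (j + d).choose j := by rw [Nat.choose_symm_add]
  have e5 : (-1 : ℚ) ^ (j + d) * (-1) ^ j = (-1) ^ d := by
    rw [pow_add, mul_right_comm, ← mul_pow]; simp
  simp only [e1, e2, e3, e4, zsmul_eq_mul, smul_eq_mul, mul_one]
  push_cast
  rw [← e5, show (x + 1 + (j + d) - j : ℚ) = x + d + 1 by ring]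
  ring

/-- The coordinates `v_j` of a vector that the `(k+1) × (k+1)` section with `b = β + 1` sends to
a multiple of the last basis vector. -/
def kerVec (a β k j : ℕ) : ℚ :=
  ((-1) ^ (k - j) * (k.choose j : ℚ)) * ((β + k - j).factorial * (a + j).factorial)

/-- For `i < k` the entry times the factorials in `v_j` is a polynomial in `j` of degree `k - 1`.
Truncated descending factorials vanish exactly where the entry does. -/
theorem entry_mul_of_lt (a β k i j : ℕ) (hi : i < k) (hj : j ≤ k) :
    ((β + k - j).factorial * (a + j).factorial : ℚ) * toeplitzEntry a (β + 1) i j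
      = (a + β + 1).factorial *
        ((β + k - j).descFactorial (k - 1 - i) * (a + j).descFactorial i) := by
  unfold toeplitzEntry
  split_ifs with h
  · rcases Nat.lt_or_ge (a + j) i with h' | h'
    · rw [Nat.choose_eq_zero_of_lt (by omega), Nat.descFactorial_eq_zero_iff_lt.2 h']
      simp
    · have e1 := Nat.factorial_mul_descFactorial (n := β + k - j) (k := k - 1 - i) (by omega)
      have e2 := Nat.factorial_mul_descFactorial (n := a + j) (k := i) h'
      have e3 := Nat.choose_mul_factorial_mul_factorial
        (n := a + (β + 1)) (k := β + 1 + i - j) (by omega)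
      rw [show β + k - j - (k - 1 - i) = β + 1 + i - j by omega] at e1
      rw [show a + (β + 1) - (β + 1 + i - j) = a + j - i by omega] at e3
      rw [← e1, ← e2, add_assoc a β 1, ← e3]
      push_cast
      ring
  · rw [Nat.descFactorial_eq_zero_iff_lt.2 (show β + k - j < k - 1 - i by omega)]
    simp

theorem entry_mul_last (a β k j : ℕ) (hj : j ≤ k) :
    ((β + k - j).factorial * (a + j).factorial : ℚ) * toeplitzEntry a (β + 1) k j
      = (a + β + 1).factorial *
        ((a + j).descFactorial k * (1 / ((β + 1 + k : ℕ) - (j : ℚ)))) := by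
  have e0 : ((β + 1 + k : ℕ) - (j : ℚ)) = ((β + k - j + 1 : ℕ) : ℚ) := by
    rw [← Nat.cast_sub (by omega)]; congr 1; omega
  rw [e0, toeplitzEntry, if_pos (by omega)]
  rcases Nat.lt_or_ge (a + j) k with h' | h'
  · rw [Nat.choose_eq_zero_of_lt (by omega), Nat.descFactorial_eq_zero_iff_lt.2 h']
    simp
  · have e2 := Nat.factorial_mul_descFactorial (n := a + j) (k := k) h'
    have e3 := Nat.choose_mul_factorial_mul_factorial
      (n := a + (β + 1)) (k := β + k - j + 1) (by omega)
    rw [show a + (β + 1) - (β + k - j + 1) = a + j - k by omega, Nat.factorial_succ] at e3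
    rw [show β + 1 + k - j = β + k - j + 1 by omega, ← e2, add_assoc a β 1, ← e3]
    push_cast
    field_simp

theorem sum_row_of_lt (a β k i : ℕ) (hi : i < k) :
    ∑ j ∈ range (k + 1), kerVec a β k j * toeplitzEntry a (β + 1) i j = 0 := by
  set P : ℚ[X] := (descPochhammer ℚ (k - 1 - i)).comp (C ((β + k : ℕ) : ℚ) - X) *
    (descPochhammer ℚ i).comp (X + C (a : ℚ)) with hPdef
  have hdeg : P.natDegree < k := by
    have h1 : (C ((β + k : ℕ) : ℚ) - X).natDegree ≤ 1 := by
      refine (natDegree_sub_le _ _).trans ?_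
      rw [natDegree_C, natDegree_X]
      exact max_le zero_le_one le_rfl
    refine lt_of_le_of_lt natDegree_mul_le ?_
    rw [natDegree_comp, natDegree_comp, natDegree_X_add_C, descPochhammer_natDegree,
      descPochhammer_natDegree]
    have := Nat.mul_le_mul_left (k - 1 - i) h1
    omega
  have key := congrArg (fun t => ((a + β + 1).factorial : ℚ) * t) (sum_alternating_eval P k hdeg)
  simp only [mul_zero, Finset.mul_sum] at key
  rw [← key]
  refine Finset.sum_congr rfl fun j hj => ?_
  have hj : j ≤ k := by simpa [Nat.lt_succ_iff] using hj
  have hP : P.eval (j : ℚ) =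
      (β + k - j).descFactorial (k - 1 - i) * (a + j).descFactorial i := by
    rw [hPdef, eval_mul, eval_comp, eval_comp, ← descPochhammer_eval_eq_descFactorial,
      ← descPochhammer_eval_eq_descFactorial]
    simp only [eval_sub, eval_add, eval_C, eval_X]
    rw [← Nat.cast_sub (by omega), ← Nat.cast_add, add_comm j a]
  rw [kerVec, mul_assoc, entry_mul_of_lt a β k i j hi hj, hP]
  ring

theorem sum_row_last (a β k : ℕ) :
    ∑ j ∈ range (k + 1), kerVec a β k j * toeplitzEntry a (β + 1) k j
      = (a + β + 1 + k).factorial * k.factorial * β.factorial / (β + k + 1).factorial := by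
  set q : ℚ[X] := (descPochhammer ℚ k).comp (X + C (a : ℚ)) with hq
  have hqdeg : q.natDegree = k := by
    rw [hq, natDegree_comp, natDegree_X_add_C, descPochhammer_natDegree, mul_one]
  have hqe (n : ℕ) : q.eval (n : ℚ) = (a + n).descFactorial k := by
    rw [hq, eval_comp, ← descPochhammer_eval_eq_descFactorial]
    simp [add_comm]
  set m : ℚ := ((β + 1 + k : ℕ) : ℚ) with hm
  -- `q = q(m) + (X - m) * h` with `h` of degree `k - 1`, so `q(j) / (m - j) = q(m) / (m - j) - h(j)`
  set h : ℚ[X] := q /ₘ (X - C m) with hh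
  have hdiv (x : ℚ) : q.eval x = q.eval m + (x - m) * h.eval x := by
    have := congrArg (eval x) (modByMonic_add_div q (X - C m))
    rw [modByMonic_X_sub_C_eq_C_eval] at this
    simpa using this.symm
  have hsum : ∑ j ∈ range (k + 1), ((-1) ^ (k - j) * (k.choose j : ℚ)) * h.eval (j : ℚ) = 0 := by
    rcases Nat.eq_zero_or_pos k with rfl | hk
    · have : h = 0 := by
        rw [hh, divByMonic_eq_zero_iff (monic_X_sub_C m), degree_X_sub_C]
        exact lt_of_le_of_lt degree_le_natDegree (by rw [hqdeg]; norm_num)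
      simp [this]
    · refine sum_alternating_eval h k ?_
      rw [hh, natDegree_divByMonic _ (monic_X_sub_C m), hqdeg, natDegree_X_sub_C]
      omega
  have hterm : ∀ j ∈ range (k + 1), kerVec a β k j * toeplitzEntry a (β + 1) k j
      = (a + β + 1).factorial * (q.eval m *
          (((-1) ^ (k - j) * (k.choose j : ℚ)) * (1 / (m - (j : ℚ))))
          - ((-1) ^ (k - j) * (k.choose j : ℚ)) * h.eval (j : ℚ)) := by
    intro j hj
    have hj : j ≤ k := by simpa [Nat.lt_succ_iff] using hj
    have hne : m - (j : ℚ) ≠ 0 := by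
      have : (j : ℚ) < m := by rw [hm]; exact_mod_cast (by omega)
      exact (sub_pos.2 this).ne'
    rw [kerVec, mul_assoc, entry_mul_last a β k j hj, ← hqe, hdiv j, ← hm]
    field_simp
    ring
  rw [Finset.sum_congr rfl hterm, ← Finset.mul_sum, Finset.sum_sub_distrib, hsum, ← Finset.mul_sum,
    hm, sum_alternating_inv, hqe]
  have e := Nat.factorial_mul_descFactorial (n := a + (β + 1 + k)) (k := k) (by omega)
  rw [show a + (β + 1 + k) - k = a + β + 1 by omega] at e
  rw [show a + β + 1 + k = a + (β + 1 + k) by ring, ← e]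
  push_cast
  ring

/-- `C(s, s−k) · D_{k+1}(r+1, s+1) = C(r+s−k, s−k) · D_k(r,s)`. -/
theorem stmt_13 (r s k : ℕ) (hr : 1 ≤ r) (hrs : r ≤ s) (hkr : k ≤ r) :
    (s.choose (s - k) : ℤ) * Ddet (r + 1) (s + 1) (k + 1) =
      ((r + s - k).choose (s - k) : ℤ) * Ddet r s k := by
  obtain ⟨a, rfl⟩ := Nat.exists_eq_add_of_le' hkr
  obtain ⟨b, rfl⟩ := Nat.exists_eq_add_of_le' (hkr.trans hrs)
  apply Int.cast_injective (α := ℚ)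
  have hD := cast_Ddet a b (k + 1)
  rw [show a + (k + 1) = a + k + 1 by ring, show b + (k + 1) = b + k + 1 by ring] at hD
  push_cast
  rw [hD, cast_Ddet, Nat.add_sub_cancel, show a + k + (b + k) - k = a + b + k by omega]
  rcases b with _ | β
  · obtain rfl : a = 0 := by omega
    have h1 (n : ℕ) : toeplitzMat 0 0 n = 1 := by
      ext i j
      simp only [toeplitzMat, toeplitzEntry, Matrix.of_apply, Matrix.one_apply, Fin.ext_iff]
      split_ifs with h h' h'
      · simp [h']
      · rw [Nat.choose_eq_zero_of_lt (by omega)]; simp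
      · omega
      · rfl
    simp [h1]
  · have h := last_mul_det_succ a (β + 1) k (kerVec a β k) _
      (fun i hi => sum_row_of_lt a β k i hi) (sum_row_last a β k)
    have hv : kerVec a β k k = β.factorial * (a + k).factorial := by simp [kerVec]
    rw [hv] at h
    have e1 := Nat.add_choose_mul_factorial_mul_factorial (β + 1) k
    have e2 := Nat.choose_mul_factorial_mul_factorial
        (n := a + (β + 1) + k) (k := β + 1) (by omega)
    rw [show a + (β + 1) + k - (β + 1) = a + k by omega] at e2
    rw [show a + β + 1 + k = a + (β + 1) + k by ring, ← e2,
      show β + k + 1 = β + 1 + k by ring, ← e1] at h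
    have f1 := Nat.factorial_ne_zero β
    have f2 := Nat.factorial_ne_zero (a + k)
    have f3 := Nat.factorial_ne_zero (β + 1)
    have f4 := Nat.factorial_ne_zero k
    have f5 : (β + 1 + k).choose k ≠ 0 := (Nat.choose_pos (by omega)).ne'
    push_cast at h
    rw [Nat.choose_symm_add (a := β + 1) (b := k)]
    field_simp at h
    linear_combination h
end

section
/- For all integers r, s, k with 1 ≤ r ≤ s and 0 ≤ k ≤ r−1, the identity of integers C(s, s−k) · D_{k+1}(r, s+1) = C(r+s−2k−1, s−k) · D_k(r,s) holds. -/
open Polynomial Finset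

/-- The binomial coefficient `C(n, b + i - j)`, equal to `0` when `b + i < j`. -/
def binomEntry (n b i j : ℕ) : ℤ :=
  if j ≤ b + i then (n.choose (b + i - j) : ℤ) else 0

theorem binomEntry_pascal (m b i j : ℕ) :
    binomEntry m b (i + 1) j + binomEntry m b i j = binomEntry (m + 1) b (i + 1) j := by
  unfold binomEntry
  rcases lt_trichotomy j (b + i + 1) with h | h | h
  · obtain ⟨d, hd⟩ := Nat.exists_eq_add_of_le (Nat.lt_succ_iff.mp h)
    rw [if_pos (by omega), if_pos (by omega), if_pos (by omega),
      show b + (i + 1) - j = d + 1 by omega, show b + i - j = d by omega, Nat.choose_succ_succ]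
    push_cast
    ring
  · rw [if_pos (by omega), if_neg (by omega), if_pos (by omega),
      show b + (i + 1) - j = 0 by omega]
    simp
  · rw [if_neg (by omega), if_neg (by omega), if_neg (by omega)]
    simp

/-- The `k`-th finite difference at `0` of a polynomial, written as an alternating sum. -/
theorem alternating_sum_eval (P : ℤ[X]) (k : ℕ) :
    ∑ j ∈ range (k + 1), (-1 : ℤ) ^ j * k.choose j * P.eval (j : ℤ)
      = (-1) ^ k * (fwdDiff 1)^[k] P.eval 0 := by
  rw [fwdDiff_iter_eq_sum_shift, mul_sum]
  refine sum_congr rfl fun j hj => ?_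
  have hjk : j ≤ k := Nat.lt_succ_iff.mp (mem_range.mp hj)
  obtain ⟨d, rfl⟩ := Nat.exists_eq_add_of_le hjk
  have h1 : ((-1 : ℤ) ^ d) * (-1) ^ d = 1 := by rw [← mul_pow]; simp
  simp only [smul_eq_mul, zero_add, nsmul_eq_mul, mul_one, Nat.add_sub_cancel_left, pow_add]
  linear_combination (-((-1 : ℤ) ^ j * ((j + d).choose j : ℤ) * P.eval (j : ℤ))) * h1

theorem natDegree_C_sub_X (c : ℤ) : (C c - X : ℤ[X]).natDegree = 1 := by
  rw [show (C c - X : ℤ[X]) = -(X - C c) by ring, natDegree_neg, natDegree_X_sub_C]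

theorem leadingCoeff_C_sub_X (c : ℤ) : (C c - X : ℤ[X]).leadingCoeff = -1 := by
  rw [show (C c - X : ℤ[X]) = -(X - C c) by ring, leadingCoeff_neg, leadingCoeff_X_sub_C]

/-- The polynomial in `j` here is a product of falling factorials of total degree `k - 1`. -/
theorem alternating_sum_descFactorial_mul (a b k i : ℕ) (hi : i < k) :
    ∑ j ∈ range (k + 1), (-1 : ℤ) ^ j * k.choose j *
      (((b + k - j).descFactorial (k - 1 - i) : ℤ) * ((a + j).descFactorial i : ℤ)) = 0 := by
  set P : ℤ[X] := (descPochhammer ℤ (k - 1 - i)).comp (C ((b + k : ℕ) : ℤ) - X) *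
    (descPochhammer ℤ i).comp (X + C (a : ℤ)) with hP
  have hdeg : P.natDegree < k := by
    refine lt_of_le_of_lt natDegree_mul_le ?_
    rw [natDegree_comp, natDegree_comp, natDegree_C_sub_X, natDegree_X_add_C,
      descPochhammer_natDegree, descPochhammer_natDegree]
    omega
  have h := alternating_sum_eval P k
  rw [fwdDiff_iter_eq_zero_of_degree_lt hdeg, Pi.zero_apply, mul_zero] at h
  rw [← h]
  refine sum_congr rfl fun j hj => ?_
  have hjk : j ≤ b + k := by have := mem_range.mp hj; omega
  rw [hP, eval_mul, eval_comp, eval_comp, eval_sub, eval_add, eval_C, eval_C, eval_X,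
    ← Nat.cast_sub hjk, ← Nat.cast_add, descPochhammer_eval_eq_descFactorial,
    descPochhammer_eval_eq_descFactorial, add_comm j a]

theorem alternating_sum_descFactorial (b k : ℕ) :
    ∑ j ∈ range (k + 1), (-1 : ℤ) ^ j * k.choose j * ((b + k - j).descFactorial k : ℤ)
      = (k.factorial : ℤ) := by
  set P : ℤ[X] := (descPochhammer ℤ k).comp (C ((b + k : ℕ) : ℤ) - X) with hP
  have hdeg : P.natDegree = k := by
    rw [hP, natDegree_comp, natDegree_C_sub_X, descPochhammer_natDegree, mul_one]
  have hlead : P.leadingCoeff = (-1) ^ k := by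
    rw [hP, leadingCoeff_comp (by rw [natDegree_C_sub_X]; exact one_ne_zero),
      leadingCoeff_C_sub_X, descPochhammer_natDegree, (monic_descPochhammer ℤ k).leadingCoeff,
      one_mul]
  have h := alternating_sum_eval P k
  have h2 := P.fwdDiff_iter_degree_eq_factorial
  rw [hdeg, hlead] at h2
  rw [h2] at h
  have h1 : ((-1 : ℤ) ^ k) * (-1) ^ k = 1 := by rw [← mul_pow]; simp
  have h3 : (-1 : ℤ) ^ k * (((-1 : ℤ) ^ k • (k.factorial : ℤ → ℤ)) 0) = k.factorial := by
    simp [← mul_assoc, h1]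
  rw [h3] at h
  rw [← h]
  refine sum_congr rfl fun j hj => ?_
  have hjk : j ≤ b + k := by have := mem_range.mp hj; omega
  rw [hP, eval_comp, eval_sub, eval_C, eval_X, ← Nat.cast_sub hjk,
    descPochhammer_eval_eq_descFactorial]

theorem weight_mul_binomEntry_succ (a b k i j : ℕ) (hi : i < k) (hj : j ≤ k) :
    ((b + k - j).factorial : ℤ) * (a + j).factorial * binomEntry (a + b + 1) b (i + 1) j
      = (a + b + 1).factorial *
        (((b + k - j).descFactorial (k - 1 - i) : ℤ) * ((a + j).descFactorial i : ℤ)) := by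
  unfold binomEntry
  by_cases h1 : j ≤ b + (i + 1)
  · rw [if_pos h1]
    by_cases h2 : i ≤ a + j
    · have e1 := Nat.factorial_mul_descFactorial (show k - 1 - i ≤ b + k - j by omega)
      have e2 := Nat.factorial_mul_descFactorial h2
      have e3 := Nat.choose_mul_factorial_mul_factorial
        (show b + (i + 1) - j ≤ a + b + 1 by omega)
      rw [show b + k - j - (k - 1 - i) = b + (i + 1) - j by omega] at e1
      rw [show a + b + 1 - (b + (i + 1) - j) = a + j - i by omega] at e3
      rw [← e1, ← e2, ← e3]
      push_cast
      ring
    · rw [Nat.choose_eq_zero_of_lt (by omega),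
        (Nat.descFactorial_eq_zero_iff_lt (n := a + j) (k := i)).mpr (by omega)]
      simp
  · rw [if_neg h1,
      (Nat.descFactorial_eq_zero_iff_lt (n := b + k - j) (k := k - 1 - i)).mpr (by omega)]
    simp

theorem weight_mul_binomEntry_zero (a b k j : ℕ) (hj : j ≤ k) :
    ((b + k - j).factorial : ℤ) * (a + j).factorial * binomEntry (a + b) b 0 j
      = (a + b).factorial * ((b + k - j).descFactorial k : ℤ) := by
  unfold binomEntry
  by_cases h1 : j ≤ b + 0
  · rw [if_pos h1]
    have e1 := Nat.factorial_mul_descFactorial (show k ≤ b + k - j by omega)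
    have e3 := Nat.choose_mul_factorial_mul_factorial (show b + 0 - j ≤ a + b by omega)
    rw [show b + k - j - k = b + 0 - j by omega] at e1
    rw [show a + b - (b + 0 - j) = a + j by omega] at e3
    rw [← e1, ← e3]
    push_cast
    ring
  · rw [if_neg h1, (Nat.descFactorial_eq_zero_iff_lt (n := b + k - j) (k := k)).mpr (by omega)]
    simp

/-- The determinant identity with denominators cleared, for `a = r - k - 1` and `b = s - k`. -/
theorem factorial_mul_det (a b k : ℕ) :
    ((b + k).factorial : ℤ) * a.factorial *
        (Matrix.of fun i j : Fin (k + 1) => binomEntry (a + b) b i j).det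
      = (a + b).factorial * k.factorial *
        (Matrix.of fun i j : Fin k => binomEntry (a + b + 1) b i j).det := by
  -- The larger matrix after adding to each row but the first the row above it.
  set B : Matrix (Fin (k + 1)) (Fin (k + 1)) ℤ := Matrix.of fun i j =>
    Fin.cases (binomEntry (a + b) b 0 j) (fun t : Fin k => binomEntry (a + b + 1) b (t + 1) j) i
    with hB
  have hdet : (Matrix.of fun i j : Fin (k + 1) => binomEntry (a + b) b i j).det = B.det := by
    refine Matrix.det_eq_of_forall_row_eq_smul_add_pred (fun _ => -1) (fun j => ?_) fun i j => ?_
    · simp [hB]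
    · simp only [hB, Matrix.of_apply, Fin.cases_succ, Fin.val_succ, Fin.val_castSucc]
      rw [← binomEntry_pascal]
      ring
  set w : Fin (k + 1) → ℤ := fun j =>
    (-1) ^ (j : ℕ) * k.choose j * (((b + k - j).factorial : ℤ) * (a + j).factorial) with hw
  have hcol := Matrix.det_updateCol_sum B 0 w
  have hw0 : w 0 = ((b + k).factorial : ℤ) * a.factorial := by simp [hw]
  have hrow0 : ∑ j, w j • B 0 j = ((a + b).factorial : ℤ) * k.factorial := by
    rw [← alternating_sum_descFactorial b k, mul_sum, ← Fin.sum_univ_eq_sum_range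
      (fun j => ((a + b).factorial : ℤ) *
        ((-1 : ℤ) ^ j * k.choose j * ((b + k - j).descFactorial k : ℤ)))]
    refine sum_congr rfl fun j _ => ?_
    have h := weight_mul_binomEntry_zero a b k j (by omega)
    simp only [hB, hw, Matrix.of_apply, Fin.cases_zero, smul_eq_mul]
    linear_combination ((-1 : ℤ) ^ (j : ℕ) * k.choose j) * h
  have hrow : ∀ i : Fin k, ∑ j, w j • B i.succ j = 0 := by
    intro i
    have h0 := alternating_sum_descFactorial_mul a b k i i.isLt
    rw [← Fin.sum_univ_eq_sum_range (fun j => (-1 : ℤ) ^ j * k.choose j *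
      (((b + k - j).descFactorial (k - 1 - i) : ℤ) * ((a + j).descFactorial i : ℤ)))] at h0
    rw [← mul_zero ((a + b + 1).factorial : ℤ), ← h0, mul_sum]
    refine sum_congr rfl fun j _ => ?_
    have h := weight_mul_binomEntry_succ a b k i j i.isLt (by omega)
    simp only [hB, hw, Matrix.of_apply, Fin.cases_succ, smul_eq_mul]
    linear_combination ((-1 : ℤ) ^ (j : ℕ) * k.choose j) * h
  rw [hdet, ← hw0, ← smul_eq_mul (w 0), ← hcol, Matrix.det_succ_column_zero, Fin.sum_univ_succ,
    sum_eq_zero (s := univ (α := Fin k)) fun i _ => by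
      rw [Matrix.updateCol_self, hrow i, mul_zero, zero_mul]]
  rw [Matrix.updateCol_self, hrow0, Fin.val_zero, pow_zero, one_mul, add_zero]
  congr 2
  ext i j
  simp only [Matrix.submatrix_apply, Matrix.of_apply, Fin.zero_succAbove,
    Matrix.updateCol_ne (Fin.succ_ne_zero j), hB, Fin.cases_succ, Fin.val_succ, binomEntry]
  simp only [← add_assoc, Nat.add_le_add_iff_right, Nat.add_sub_add_right]

/-- `C(s, s−k) · D_{k+1}(r, s+1) = C(r+s−2k−1, s−k) · D_k(r,s)`. -/
theorem stmt_14 (r s k : ℕ) (hr : 1 ≤ r) (hrs : r ≤ s) (hkr : k ≤ r - 1) :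
    (s.choose (s - k) : ℤ) * Ddet r (s + 1) (k + 1) =
      ((r + s - 2 * k - 1).choose (s - k) : ℤ) * Ddet r s k := by
  obtain ⟨a, rfl⟩ : ∃ a, r = a + k + 1 := ⟨r - k - 1, by omega⟩
  obtain ⟨b, rfl⟩ : ∃ b, s = b + k := ⟨s - k, by omega⟩
  have hD1 : Ddet (a + k + 1) (b + k + 1) (k + 1)
      = (Matrix.of fun i j : Fin (k + 1) => binomEntry (a + b) b i j).det := by
    unfold Ddet Dmat binomEntry
    congr 2
    ext i j
    rw [show a + k + 1 + (b + k + 1) - 2 * (k + 1) = a + b by omega,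
      show b + k + 1 + (i : ℕ) - j - (k + 1) = b + i - j by omega]
    exact if_congr (by omega) rfl rfl
  have hD0 : Ddet (a + k + 1) (b + k) k
      = (Matrix.of fun i j : Fin k => binomEntry (a + b + 1) b i j).det := by
    unfold Ddet Dmat binomEntry
    congr 2
    ext i j
    rw [show a + k + 1 + (b + k) - 2 * k = a + b + 1 by omega,
      show b + k + (i : ℕ) - j - k = b + i - j by omega]
    exact if_congr (by omega) rfl rfl
  have key := factorial_mul_det a b k
  rw [← hD1, ← hD0] at key
  rw [show a + k + 1 + (b + k) - 2 * k - 1 = a + b by omega, Nat.add_sub_cancel]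
  have c1 : ((b + k).choose b : ℤ) * b.factorial * k.factorial = (b + k).factorial := by
    rw [Nat.choose_symm_add]
    exact_mod_cast Nat.add_choose_mul_factorial_mul_factorial b k
  have c2 : ((a + b).choose b : ℤ) * b.factorial * a.factorial = (a + b).factorial := by
    rw [add_comm a b]
    rw [Nat.choose_symm_add]
    exact_mod_cast Nat.add_choose_mul_factorial_mul_factorial b a
  rw [← c1, ← c2] at key
  have hne : (b.factorial : ℤ) * k.factorial * a.factorial ≠ 0 := by positivity
  refine mul_left_cancel₀ hne ?_
  linear_combination key
end

section
/- Let p be a prime, F a field of characteristic p, and r a positive integer. Suppose the Kronecker product J_r ⊗ J_r is similar over F to the block-diagonal matrix with diagonal blocks J_{λ_1},…,J_{λ_r}, where λ_1 ≥ ⋯ ≥ λ_r > 0. Then the smallest part λ_r equals the p-part r_p of r, and the number of indices i with λ_i = r_p is exactly r_p. -/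
/-!
Write `J = 1 + n` for the Jordan block of size `r` and put `k = r_p`, `r = k m` with `p ∤ m`. For a
nilpotent endomorphism `f`, the dimension of `ker f ⊓ im f ^ j` is the number of Jordan blocks of
size greater than `j` (`finrank_jordanBlockDiag`). So it suffices to show that for `f = J ⊗ J - 1`
this dimension is `r` when `j = k - 1` and `r - k` when `j = k`: the first says that all parts are
at least `k`, and both together that exactly `k` of them are equal to `k`.

Identify `J ⊗ J` with `X ↦ J X Jᵀ` on `r × r` matrices. There is an invertible `Q` with
`J Q Jᵀ = Q` (`formMat`), and the substitution `X ↦ X Q` turns this operator into `X ↦ J X J⁻¹`.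
As `J X J⁻¹ - X = [n, X] J⁻¹` and right multiplication by `J⁻¹` is an automorphism commuting with
`ad n`, the operator `f` may be replaced by `ad n` (`finrank_kronecker`).

The kernel of `ad n` is `F[n]`, of dimension `r` (`range_polyShift`).

* `F[n]` lies in the image of `(ad n) ^ (k - 1)`: viewing `n` as multiplication by `x` on
  `F[x]/(x^r)`, the divided powers of `d/dx` of order less than `k` are well defined because
  `C(r, j) = 0` in `F` for `0 < j < k`, and `ad n` maps each one to the preceding one, down to `1`
  (`adShift_pow_divDeriv`).
* `(ad n) ^ k = ad (n ^ k)` as `k` is a power of `p`. A polynomial `c(n)` is in its image iff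
  `n ^ k` divides it (`polyShift_mem_range_iff`). Indeed `n ^ k = [n ^ k, D]` for a diagonal `D`.
  Conversely, commutators with `n ^ k` are orthogonal under the trace form to the centralizer of
  `n ^ k`, and that centralizer contains, for each `s < k`, a matrix `Z` with
  `tr (c(n) Z) = m c_s`, where `m ≠ 0` in `F`.
-/

open Kronecker

/-- The `p`-part of `n`: the largest power of `p` dividing `n`. -/
def pPart (p n : ℕ) : ℕ := p ^ (n.factorization p)


open Matrix

/-! ### The nilpotent Jordan block and its commutator map -/

section Nilpotent

variable (F : Type*) [Field F] (r : ℕ)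

/-- The matrix with ones on the `s`-th superdiagonal: the `s`-th power of the nilpotent
Jordan block. -/
def shiftMat (s : ℕ) : Matrix (Fin r) (Fin r) F :=
  Matrix.of fun a b => if (b : ℕ) = (a : ℕ) + s then 1 else 0

lemma shiftMat_mul_apply (s : ℕ) (X : Matrix (Fin r) (Fin r) F) (a b : Fin r) :
    (shiftMat F r s * X) a b = if h : (a : ℕ) + s < r then X ⟨a + s, h⟩ b else 0 := by
  simp only [Matrix.mul_apply, shiftMat, Matrix.of_apply, ite_mul, one_mul, zero_mul]
  split_ifs with h
  · rw [Finset.sum_eq_single ⟨a + s, h⟩]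
    · simp
    · intro c _ hc
      rw [if_neg]
      intro h'
      exact hc (Fin.ext h')
    · simp
  · apply Finset.sum_eq_zero
    intro c _
    rw [if_neg]
    have := c.2
    omega

lemma mul_shiftMat_apply (s : ℕ) (X : Matrix (Fin r) (Fin r) F) (a b : Fin r) :
    (X * shiftMat F r s) a b =
      if s ≤ (b : ℕ) then X a ⟨b - s, lt_of_le_of_lt (Nat.sub_le _ _) b.2⟩ else 0 := by
  simp only [Matrix.mul_apply, shiftMat, Matrix.of_apply, mul_ite, mul_one, mul_zero]
  split_ifs with h
  · rw [Finset.sum_eq_single ⟨b - s, lt_of_le_of_lt (Nat.sub_le _ _) b.2⟩]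
    · simp [h]
    · intro c _ hc
      rw [if_neg]
      intro h'
      apply hc
      ext
      simp
      omega
    · simp
  · apply Finset.sum_eq_zero
    intro c _
    rw [if_neg]
    omega

lemma shiftMat_zero : shiftMat F r 0 = 1 := by
  ext a b
  simp [shiftMat, Matrix.one_apply, Fin.ext_iff, eq_comm]

lemma shiftMat_mul (s t : ℕ) : shiftMat F r s * shiftMat F r t = shiftMat F r (s + t) := by
  ext a b
  rw [shiftMat_mul_apply]
  have := b.2
  simp only [shiftMat, Matrix.of_apply]
  split_ifs <;> first | rfl | omega

lemma shiftMat_pow (s : ℕ) : shiftMat F r 1 ^ s = shiftMat F r s := by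
  induction s with
  | zero => rw [pow_zero, shiftMat_zero]
  | succ s ih => rw [pow_succ, ih, shiftMat_mul]

lemma jordanBlock_eq : jordanBlock F r = 1 + shiftMat F r 1 := by
  ext a b
  simp only [jordanBlock, shiftMat, Matrix.add_apply, Matrix.one_apply, Matrix.of_apply,
    Fin.ext_iff]
  split_ifs <;> first | omega | simp

/-- The commutator map `X ↦ n X - X n` with the nilpotent Jordan block `n`. -/
noncomputable def adShift : Module.End F (Matrix (Fin r) (Fin r) F) :=
  LinearMap.mulLeft F (shiftMat F r 1) - LinearMap.mulRight F (shiftMat F r 1)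

lemma adShift_apply (X : Matrix (Fin r) (Fin r) F) :
    adShift F r X = shiftMat F r 1 * X - X * shiftMat F r 1 := rfl

/-- `ad n` is linear over right multiplication by powers of `n`. -/
lemma adShift_pow_mul_shiftMat (j s : ℕ) (X : Matrix (Fin r) (Fin r) F) :
    (adShift F r ^ j) (X * shiftMat F r s) = (adShift F r ^ j) X * shiftMat F r s := by
  induction j generalizing X with
  | zero => simp
  | succ j ih =>
    rw [pow_succ, Module.End.mul_apply, Module.End.mul_apply, ← ih]
    congr 1
    simp only [adShift_apply, sub_mul, Matrix.mul_assoc, shiftMat_mul, add_comm]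

/-- In characteristic `p`, `(ad n) ^ (p ^ e) = ad (n ^ (p ^ e))`. -/
lemma adShift_pow_char (p e : ℕ) (hp : p.Prime) [CharP F p] (X : Matrix (Fin r) (Fin r) F) :
    (adShift F r ^ (p ^ e)) X =
      shiftMat F r (p ^ e) * X - X * shiftMat F r (p ^ e) := by
  have := Fact.mk hp
  rcases Nat.eq_zero_or_pos r with rfl | hr
  · exact Subsingleton.elim _ _
  have : Nonempty (Fin r) := ⟨⟨0, hr⟩⟩
  have : CharP (Module.End F (Matrix (Fin r) (Fin r) F)) p :=
    charP_of_injective_algebraMap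
      (algebraMap F (Module.End F (Matrix (Fin r) (Fin r) F))).injective p
  rw [adShift, sub_pow_char_pow_of_commute _ _ (LinearMap.commute_mulLeft_right _ _),
    LinearMap.pow_mulLeft, LinearMap.pow_mulRight, shiftMat_pow]
  rfl

/-- The polynomial `∑ c_s n ^ s` in the nilpotent Jordan block `n`. -/
noncomputable def polyShift : (Fin r → F) →ₗ[F] Matrix (Fin r) (Fin r) F :=
  Fintype.linearCombination F (fun s : Fin r => shiftMat F r s)

lemma polyShift_apply (c : Fin r → F) :
    polyShift F r c = ∑ s : Fin r, c s • shiftMat F r s := rfl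

lemma polyShift_apply_zero (hr : 0 < r) (c : Fin r → F) (b : Fin r) :
    polyShift F r c ⟨0, hr⟩ b = c b := by
  rw [polyShift_apply, Matrix.sum_apply, Finset.sum_eq_single b]
  · simp [shiftMat]
  · intro s _ hs
    have : (b : ℕ) ≠ s := fun h => hs (Fin.ext h.symm)
    simp [shiftMat, this]
  · simp

lemma polyShift_injective (hr : 0 < r) : Function.Injective (polyShift F r) := by
  intro c d h
  ext b
  rw [← polyShift_apply_zero F r hr c, h, polyShift_apply_zero]

lemma polyShift_mem_ker (c : Fin r → F) : polyShift F r c ∈ LinearMap.ker (adShift F r) := by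
  rw [LinearMap.mem_ker, adShift_apply, polyShift_apply, Finset.mul_sum, Finset.sum_mul,
    ← Finset.sum_sub_distrib]
  apply Finset.sum_eq_zero
  intro s _
  simp [shiftMat_mul, add_comm]

/-- A matrix commuting with `n` is determined by its first row, because the first basis row
vector is cyclic for `n`. -/
lemma ker_adShift_ext (hr : 0 < r) {X Y : Matrix (Fin r) (Fin r) F}
    (hX : X ∈ LinearMap.ker (adShift F r)) (hY : Y ∈ LinearMap.ker (adShift F r))
    (h : ∀ b, X ⟨0, hr⟩ b = Y ⟨0, hr⟩ b) : X = Y := by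
  rw [LinearMap.mem_ker, adShift_apply, sub_eq_zero] at hX hY
  have key : ∀ (a : ℕ) (ha : a < r) (b : Fin r), X ⟨a, ha⟩ b = Y ⟨a, ha⟩ b := by
    intro a
    induction a with
    | zero => intro _ b; exact h b
    | succ a ih =>
      intro ha b
      have h1 := congrFun (congrFun hX ⟨a, by omega⟩) b
      have h2 := congrFun (congrFun hY ⟨a, by omega⟩) b
      rw [shiftMat_mul_apply, mul_shiftMat_apply, dif_pos ha] at h1 h2
      rw [h1, h2, ih]
  ext a b
  exact key a a.2 b

lemma range_polyShift (hr : 0 < r) :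
    LinearMap.range (polyShift F r) = LinearMap.ker (adShift F r) := by
  apply le_antisymm
  · rintro _ ⟨c, rfl⟩
    exact polyShift_mem_ker F r c
  · intro X hX
    refine ⟨fun b => X ⟨0, hr⟩ b, ?_⟩
    refine ker_adShift_ext F r hr (polyShift_mem_ker F r _) hX ?_
    intro b
    rw [polyShift_apply_zero]

/-- Binomial coefficients `C(r, j)` with `0 < j < p ^ e` vanish modulo `p` when `p ^ e ∣ r`. -/
lemma dvd_choose_of_pow_dvd {p e r j : ℕ} (hp : p.Prime) (hk : p ^ e ∣ r) (h0 : 0 < j)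
    (hj : j < p ^ e) : p ∣ r.choose j := by
  rcases Nat.eq_zero_or_pos r with rfl | hr
  · rw [Nat.choose_eq_zero_of_lt h0]; exact dvd_zero p
  by_contra h
  have hc : Nat.Coprime (p ^ e) (r.choose j) :=
    Nat.Coprime.pow_left _ ((Nat.Prime.coprime_iff_not_dvd hp).2 h)
  obtain ⟨r, rfl⟩ := Nat.exists_eq_succ_of_ne_zero hr.ne'
  obtain ⟨j, rfl⟩ := Nat.exists_eq_succ_of_ne_zero h0.ne'
  have h1 := Nat.add_one_mul_choose_eq r j
  have h2 : p ^ e ∣ (r + 1).choose (j + 1) * (j + 1) := h1 ▸ Dvd.dvd.mul_right hk _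
  exact absurd (Nat.le_of_dvd (by omega) (hc.dvd_of_dvd_mul_left h2)) (by omega)

/-- The matrix of the `j`-th divided power of differentiation on `F[x]/(x^r)` (acting on row
vectors in the basis `1, x, …, x^(r-1)`, on which `n` is multiplication by `x`). -/
def divDeriv (j : ℕ) : Matrix (Fin r) (Fin r) F :=
  Matrix.of fun a b => if (b : ℕ) + j = a then ((a : ℕ).choose j : F) else 0

/-- The divided powers form a chain under `ad n`. At the boundary, where multiplication by `x`
truncates at `x^r`, the relation uses `C(r, j + 1) = 0` in `F`. -/
lemma adShift_divDeriv {p e : ℕ} (hp : p.Prime) [CharP F p] (hk : p ^ e ∣ r) (hr : 0 < r)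
    (j : ℕ) (hj : j + 1 < p ^ e) :
    adShift F r (divDeriv F r (j + 1)) = divDeriv F r j := by
  have hle := Nat.le_of_dvd hr hk
  ext a b
  rw [adShift_apply, Matrix.sub_apply, shiftMat_mul_apply, mul_shiftMat_apply]
  simp only [divDeriv, Matrix.of_apply]
  have ha := a.2
  have hb := b.2
  by_cases hab : (b : ℕ) + j = a
  · have e1 : ((a : ℕ) + 1).choose (j + 1) = (a : ℕ).choose j + (a : ℕ).choose (j + 1) :=
      Nat.choose_succ_succ _ _
    by_cases h1 : (a : ℕ) + 1 < r
    · rw [dif_pos h1, if_pos (by omega), if_pos hab, e1]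
      by_cases h2 : 1 ≤ (b : ℕ)
      · rw [if_pos h2, if_pos (by omega)]
        push_cast
        ring
      · rw [if_neg h2, Nat.choose_eq_zero_of_lt (show (a : ℕ) < j + 1 by omega)]
        simp
    · have h3 : (a : ℕ) + 1 = r := by omega
      have h4 : (((a : ℕ).choose j + (a : ℕ).choose (j + 1) : ℕ) : F) = 0 := by
        rw [← e1, h3, CharP.cast_eq_zero_iff F p]
        exact dvd_choose_of_pow_dvd hp hk (by omega) hj
      rw [dif_neg h1, if_pos (by omega), if_pos (by omega), if_pos hab]
      push_cast at h4
      linear_combination -h4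
  · rw [if_neg hab]
    have e1 : ¬ ((b : ℕ) + (j + 1) = (a : ℕ) + 1) := by omega
    have e2 : ¬ (1 ≤ (b : ℕ) ∧ (b : ℕ) - 1 + (j + 1) = a) := by omega
    split_ifs <;> simp_all

lemma adShift_pow_divDeriv {p e : ℕ} (hp : p.Prime) [CharP F p] (hk : p ^ e ∣ r) (hr : 0 < r)
    (j : ℕ) (hj : j < p ^ e) :
    (adShift F r ^ j) (divDeriv F r j) = 1 := by
  induction j with
  | zero =>
    ext a b
    simp [divDeriv, Matrix.one_apply, Fin.ext_iff, eq_comm]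
  | succ j ih =>
    rw [pow_succ, Module.End.mul_apply, adShift_divDeriv F r hp hk hr j hj, ih (by omega)]

/-- For `j < p ^ e`, `1` is the image of a divided power under `(ad n) ^ j`, and hence every
polynomial in `n` lies in the image, by `F[n]`-linearity of `ad n`. -/
lemma ker_le_range_adShift_pow {p e : ℕ} (hp : p.Prime) [CharP F p] (hk : p ^ e ∣ r)
    (hr : 0 < r) (j : ℕ) (hj : j < p ^ e) :
    LinearMap.ker (adShift F r) ≤ LinearMap.range (adShift F r ^ j) := by
  rw [← range_polyShift F r hr]
  rintro _ ⟨c, rfl⟩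
  rw [polyShift_apply]
  refine Submodule.sum_mem _ fun s _ => Submodule.smul_mem _ _ ?_
  refine ⟨divDeriv F r j * shiftMat F r s, ?_⟩
  rw [adShift_pow_mul_shiftMat, adShift_pow_divDeriv F r hp hk hr j hj, one_mul]

/-- `n ^ s` with `s ≥ k` is a commutator with `n ^ k`, since `[n ^ k, D] = n ^ k` for the diagonal
matrix `D` with entries `⌊a / k⌋`. -/
lemma shiftMat_mem_range {p e : ℕ} (hp : p.Prime) [CharP F p] (s : ℕ) (hs : p ^ e ≤ s) :
    shiftMat F r s ∈ LinearMap.range (adShift F r ^ (p ^ e)) := by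
  have hk : 0 < p ^ e := pow_pos hp.pos e
  refine ⟨Matrix.diagonal (fun a : Fin r => (((a : ℕ) / p ^ e : ℕ) : F)) *
    shiftMat F r (s - p ^ e), ?_⟩
  rw [adShift_pow_mul_shiftMat, adShift_pow_char F r p e hp]
  have : shiftMat F r (p ^ e) * Matrix.diagonal (fun a : Fin r => (((a : ℕ) / p ^ e : ℕ) : F)) -
      Matrix.diagonal (fun a : Fin r => (((a : ℕ) / p ^ e : ℕ) : F)) * shiftMat F r (p ^ e) =
      shiftMat F r (p ^ e) := by
    ext a b
    rw [Matrix.sub_apply, Matrix.mul_diagonal, Matrix.diagonal_mul]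
    simp only [shiftMat, Matrix.of_apply]
    split_ifs with h
    · rw [h, Nat.add_div_right _ hk]
      push_cast
      ring
    · simp
  rw [this, shiftMat_mul]
  congr 1
  omega

/-- The matrix with ones at the positions `(k i + s, k i)`; it commutes with `n ^ k` when `s < k`
and `k ∣ r`. -/
def testMat (k s : ℕ) : Matrix (Fin r) (Fin r) F :=
  Matrix.of fun b a => if k ∣ (a : ℕ) ∧ (b : ℕ) = a + s then 1 else 0

lemma add_lt_of_dvd {k r a s : ℕ} (hk : k ∣ r) (hka : k ∣ a) (ha : a < r) (hs : s < k) :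
    a + s < r := by
  obtain ⟨m, rfl⟩ := hk
  obtain ⟨t, rfl⟩ := hka
  have : t + 1 ≤ m := Nat.lt_of_mul_lt_mul_left ha
  nlinarith

lemma testMat_commute (k s : ℕ) (hk : k ∣ r) (hs : s < k) :
    shiftMat F r k * testMat F r k s = testMat F r k s * shiftMat F r k := by
  ext b a
  rw [shiftMat_mul_apply, mul_shiftMat_apply]
  simp only [testMat, Matrix.of_apply]
  have ha := a.2
  by_cases hka : k ∣ (a : ℕ)
  · have h1 := add_lt_of_dvd hk hka ha hs
    have h2 : k ≤ (a : ℕ) → k ∣ (a : ℕ) - k := fun _ => Nat.dvd_sub hka dvd_rfl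
    by_cases h3 : k ≤ (a : ℕ)
    · simp only [hka, h2 h3, h3, true_and, if_true]
      split_ifs <;> first | rfl | omega
    · have h4 : (a : ℕ) = 0 := Nat.eq_zero_of_dvd_of_lt hka (by omega)
      simp only [hka, h3, true_and, if_false]
      split_ifs <;> first | rfl | omega
  · have h2 : k ≤ (a : ℕ) → ¬ k ∣ (a : ℕ) - k := fun h h' => hka (by
      have := Nat.dvd_add h' (dvd_refl k)
      rwa [Nat.sub_add_cancel h] at this)
    simp only [hka, false_and, if_false]
    split_ifs with h h' h'' <;> first | rfl | skip
    all_goals exact absurd (by tauto) (h2 (by assumption))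

lemma sum_dvd (k m : ℕ) (hk : 0 < k) :
    ∑ a ∈ Finset.range (k * m), (if k ∣ a then (1 : F) else 0) = m := by
  induction m with
  | zero => simp
  | succ m ih =>
    rw [Nat.mul_succ, Finset.sum_range_add, ih, Finset.sum_eq_single 0]
    · simp
    · intro b hb hb0
      rw [if_neg]
      intro h
      have h1 : k ∣ b := (Nat.dvd_add_right (dvd_mul_right k m)).1 h
      exact absurd (Nat.le_of_dvd (by omega) h1) (by simpa using hb)
    · intro h
      simp at h
      omega

lemma trace_shiftMat_testMat (k m : ℕ) (hr : r = k * m) (s : ℕ) (hs : s < k) (i : ℕ) :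
    (shiftMat F r i * testMat F r k s).trace = if i = s then (m : F) else 0 := by
  have hk : k ∣ r := ⟨m, hr⟩
  have : ∀ a : Fin r, (shiftMat F r i * testMat F r k s) a a =
      if i = s then (if k ∣ (a : ℕ) then (1 : F) else 0) else 0 := by
    intro a
    rw [shiftMat_mul_apply]
    simp only [testMat, Matrix.of_apply]
    by_cases hka : k ∣ (a : ℕ)
    · have := add_lt_of_dvd hk hka a.2 hs
      simp only [hka, true_and, if_true]
      split_ifs <;> first | rfl | omega
    · simp [hka]
  simp only [Matrix.trace, Matrix.diag, this]
  split_ifs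
  · rw [Fin.sum_univ_eq_sum_range (fun a => if k ∣ a then (1 : F) else 0) r, hr,
      sum_dvd F k m (by omega)]
  · simp

/-- A polynomial in `n` lies in the image of `(ad n) ^ k` iff `n ^ k` divides it. Pairing a
commutator `[n ^ k, Y]` with a matrix that commutes with `n ^ k` under the trace form gives zero,
while pairing `c(n)` with `testMat` gives `(r / k) c_s`. -/
lemma polyShift_mem_range_iff {p e m : ℕ} (hp : p.Prime) [CharP F p] (hr : r = p ^ e * m)
    (hm : (m : F) ≠ 0) (c : Fin r → F) :
    polyShift F r c ∈ LinearMap.range (adShift F r ^ (p ^ e)) ↔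
      ∀ s : Fin r, (s : ℕ) < p ^ e → c s = 0 := by
  constructor
  · rintro ⟨Y, hY⟩ s hs
    rw [adShift_pow_char F r p e hp] at hY
    have h0 : (polyShift F r c * testMat F r (p ^ e) s).trace = 0 := by
      rw [← hY, sub_mul, Matrix.trace_sub, Matrix.mul_assoc Y,
        testMat_commute F r _ _ ⟨m, hr⟩ hs, Matrix.mul_assoc, Matrix.trace_mul_comm,
        Matrix.mul_assoc, sub_self]
    rw [polyShift_apply, Finset.sum_mul, Matrix.trace_sum, Finset.sum_eq_single s] at h0
    · rw [Matrix.smul_mul, Matrix.trace_smul, trace_shiftMat_testMat F r _ m hr _ hs,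
        if_pos rfl, smul_eq_mul] at h0
      exact (mul_eq_zero.1 h0).resolve_right hm
    · intro i _ hi
      rw [Matrix.smul_mul, Matrix.trace_smul, trace_shiftMat_testMat F r _ m hr _ hs,
        if_neg (fun h => hi (Fin.ext h)), smul_zero]
    · simp
  · intro h
    rw [polyShift_apply]
    refine Submodule.sum_mem _ fun s _ => ?_
    by_cases hs : (s : ℕ) < p ^ e
    · rw [h s hs, zero_smul]
      exact Submodule.zero_mem _
    · exact Submodule.smul_mem _ _ (shiftMat_mem_range F r hp s (by omega))

/-- The vectors supported on a finite set `S` form a space of dimension `|S|`. -/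
lemma finrank_supported {ι : Type*} [Fintype ι] [DecidableEq ι] (S : Finset ι)
    (W : Submodule F (ι → F)) (hW : ∀ v, v ∈ W ↔ ∀ i, i ∉ S → v i = 0) :
    Module.finrank F W = S.card := by
  have hWe : W = ⨅ i ∈ ((↑S : Set ι)ᶜ),
      LinearMap.ker (LinearMap.proj i : (ι → F) →ₗ[F] F) := by
    ext v
    simp [hW, Submodule.mem_iInf]
  rw [hWe]
  have e := LinearMap.iInfKerProjEquiv F (fun _ : ι => F) (I := (↑S : Set ι))
    (J := (↑S : Set ι)ᶜ) disjoint_compl_right (by simp)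
  rw [e.finrank_eq]
  simp

lemma finrank_adShift_lt {p e : ℕ} (hp : p.Prime) [CharP F p] (hk : p ^ e ∣ r)
    (hr : 0 < r) (j : ℕ) (hj : j < p ^ e) :
    Module.finrank F
      ↥(LinearMap.ker (adShift F r) ⊓ LinearMap.range (adShift F r ^ j)) = r := by
  rw [inf_eq_left.2 (ker_le_range_adShift_pow F r hp hk hr j hj), ← range_polyShift F r hr,
    LinearMap.finrank_range_of_inj (polyShift_injective F r hr)]
  simp

lemma finrank_adShift_eq {p e m : ℕ} (hp : p.Prime) [CharP F p] (hrm : r = p ^ e * m)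
    (hr : 0 < r) (hm : (m : F) ≠ 0) :
    Module.finrank F
      ↥(LinearMap.ker (adShift F r) ⊓ LinearMap.range (adShift F r ^ (p ^ e))) = r - p ^ e := by
  rw [← range_polyShift F r hr]
  have h1 : LinearMap.range (polyShift F r) ⊓ LinearMap.range (adShift F r ^ (p ^ e)) =
      ((LinearMap.range (adShift F r ^ (p ^ e))).comap (polyShift F r)).map (polyShift F r) := by
    rw [Submodule.map_comap_eq]
  have hle : p ^ e ≤ r := Nat.le_of_dvd hr ⟨m, hrm⟩
  rw [h1, ← (Submodule.equivMapOfInjective _ (polyShift_injective F r hr) _).finrank_eq,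
    finrank_supported F (Finset.univ.filter fun s : Fin r => ¬ (s : ℕ) < p ^ e)]
  · rw [Finset.filter_not, Finset.card_sdiff_of_subset (Finset.filter_subset _ _),
      Fin.card_filter_val_lt]
    simp [hle]
  · intro c
    rw [Submodule.mem_comap, polyShift_mem_range_iff F r hp hrm hm]
    simp

end Nilpotent

/-! ### From the Kronecker square to the commutator map -/

section Transfer

variable {F : Type*} [Field F]

lemma finrank_ker_inf_range_congr {V W : Type*} [AddCommGroup V] [Module F V] [AddCommGroup W]
    [Module F W] (f : Module.End F V) (g : Module.End F W) (E : V ≃ₗ[F] W)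
    (h : ∀ v, E (f v) = g (E v)) (j : ℕ) :
    Module.finrank F ↥(LinearMap.ker f ⊓ LinearMap.range (f ^ j)) =
      Module.finrank F ↥(LinearMap.ker g ⊓ LinearMap.range (g ^ j)) := by
  have hj : ∀ v, E ((f ^ j) v) = (g ^ j) (E v) := by
    induction j with
    | zero => simp
    | succ j ih => intro v; rw [pow_succ, pow_succ, Module.End.mul_apply, Module.End.mul_apply,
        ih, h]
  rw [← E.finrank_map_eq]
  suffices hs : (LinearMap.ker f ⊓ LinearMap.range (f ^ j)).map (E : V →ₗ[F] W) =
      LinearMap.ker g ⊓ LinearMap.range (g ^ j) by rw [hs]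
  ext w
  simp only [Submodule.mem_map, Submodule.mem_inf, LinearMap.mem_ker, LinearMap.mem_range]
  constructor
  · rintro ⟨_, ⟨h1, v, rfl⟩, rfl⟩
    refine ⟨?_, E v, ?_⟩
    · change g (E _) = 0
      rw [← h, h1, map_zero]
    · exact (hj v).symm
  · rintro ⟨h1, w, rfl⟩
    refine ⟨(f ^ j) (E.symm w), ⟨?_, _, rfl⟩, ?_⟩
    · apply E.injective
      rw [h, hj, E.apply_symm_apply, h1, map_zero]
    · change E _ = _
      rw [hj, E.apply_symm_apply]

/-- Composing with a commuting automorphism `R` changes neither the kernel nor the images of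
powers. -/
lemma ker_inf_range_mul_unit {V : Type*} [AddCommGroup V] [Module F V] (f R : Module.End F V)
    (hR : IsUnit R) (hc : Commute f R) (j : ℕ) :
    LinearMap.ker (f * R) ⊓ LinearMap.range ((f * R) ^ j) =
      LinearMap.ker f ⊓ LinearMap.range (f ^ j) := by
  have hb : Function.Bijective (R ^ j) := (Module.End.isUnit_iff _).1 (hR.pow j)
  have hb' : Function.Bijective R := (Module.End.isUnit_iff _).1 hR
  congr 1
  · ext v
    rw [hc.eq, LinearMap.mem_ker, LinearMap.mem_ker, Module.End.mul_apply]
    exact ⟨fun h => hb'.1 (by rw [h, map_zero]), fun h => by rw [h, map_zero]⟩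
  · rw [hc.mul_pow, Module.End.mul_eq_comp]
    exact LinearMap.range_comp_of_range_eq_top _ (LinearMap.range_eq_top.2 hb.2)

variable (F)

/-- An invertible matrix `Q` with `J Q Jᵀ = Q`, where `J` is the Jordan block; its entries are
`(-1)^i C(r - 1 - i, j)`. -/
def formMat (r : ℕ) : Matrix (Fin r) (Fin r) F :=
  Matrix.of fun i j => (-1) ^ (i : ℕ) * ((r - 1 - (i : ℕ)).choose j : F)

lemma formMat_isUnit (r : ℕ) : IsUnit (formMat F r) := by
  have h1 : IsUnit ((formMat F r).submatrix Fin.revPerm (Equiv.refl _)) := by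
    rw [Matrix.isUnit_iff_isUnit_det, Matrix.det_of_isLowerTriangular]
    · rw [isUnit_iff_ne_zero, Finset.prod_ne_zero_iff]
      intro i _
      have : r - 1 - (r - ((i : ℕ) + 1)) = i := by have := i.2; omega
      simp [formMat, this]
    · intro i j hij
      have hij' : (i : ℕ) < j := by simpa using hij
      have : r - 1 - (r - ((i : ℕ) + 1)) = i := by have := i.2; omega
      simp [formMat, this, Nat.choose_eq_zero_of_lt hij']
  exact (Matrix.isUnit_submatrix_equiv _ _).1 h1

lemma mul_shiftMat_transpose_apply (r : ℕ) (X : Matrix (Fin r) (Fin r) F) (a b : Fin r) :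
    (X * (shiftMat F r 1)ᵀ) a b = if h : (b : ℕ) + 1 < r then X a ⟨b + 1, h⟩ else 0 := by
  rw [← Matrix.transpose_apply (X * _), Matrix.transpose_mul, Matrix.transpose_transpose,
    shiftMat_mul_apply]
  rfl

/-- Entrywise, this is Pascal's rule. -/
lemma formMat_invariant (r : ℕ) :
    jordanBlock F r * formMat F r * (jordanBlock F r)ᵀ = formMat F r := by
  rw [jordanBlock_eq, Matrix.transpose_add, Matrix.transpose_one, mul_add, add_mul, mul_one,
    one_mul, add_mul]
  rw [add_assoc, add_eq_left]
  ext a b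
  have ha := a.2
  have hb := b.2
  simp only [Matrix.add_apply, mul_shiftMat_transpose_apply, shiftMat_mul_apply, Matrix.zero_apply]
  simp only [formMat, Matrix.of_apply]
  have hpascal : r - 1 - (a : ℕ) = 0 ∨ ((a : ℕ) + 1 < r ∧
      (r - 1 - (a : ℕ)).choose (b + 1) = (r - 1 - ((a : ℕ) + 1)).choose b +
        (r - 1 - ((a : ℕ) + 1)).choose (b + 1)) := by
    rcases Nat.eq_zero_or_pos (r - 1 - (a : ℕ)) with h | h
    · exact Or.inl h
    · refine Or.inr ⟨by omega, ?_⟩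
      rw [show r - 1 - (a : ℕ) = r - 1 - ((a : ℕ) + 1) + 1 by omega, Nat.choose_succ_succ]
  rcases hpascal with h0 | ⟨h1, h2⟩
  · rw [dif_neg (by omega), h0]
    simp [show ¬ ((a : ℕ) + 1 < r) by omega]
  · rw [dif_pos h1]
    by_cases h3 : (b : ℕ) + 1 < r
    · simp only [h1, h3, dif_pos, h2]
      push_cast
      ring
    -- if `b + 1 = r`, the remaining entry in column `b` vanishes as well
    · rw [Nat.choose_eq_zero_of_lt (show r - 1 - ((a : ℕ) + 1) < b by omega)]
      simp [h3]

lemma jordanBlock_isUnit (r : ℕ) : IsUnit (jordanBlock F r) := by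
  rw [jordanBlock_eq]
  apply IsNilpotent.isUnit_one_add
  refine ⟨r, ?_⟩
  rw [shiftMat_pow]
  ext a b
  have := b.2
  simp only [shiftMat, Matrix.of_apply, Matrix.zero_apply]
  rw [if_neg]
  omega

/-- `J ⊗ J` is conjugate to `X ↦ J X J⁻¹`, and `J X J⁻¹ - X = (n X - X n) J⁻¹`. Hence `J ⊗ J - 1`
and `ad n` have the same invariants. -/
lemma finrank_kronecker (r j : ℕ) {m : Type*} [Fintype m] [DecidableEq m] (B : Matrix m m F)
    (hsim : MatSimilar F (jordanBlock F r ⊗ₖ jordanBlock F r) B) :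
    Module.finrank F ↥(LinearMap.ker (adShift F r) ⊓ LinearMap.range (adShift F r ^ j)) =
      Module.finrank F ↥(LinearMap.ker (Matrix.mulVecLin (B - 1)) ⊓
        LinearMap.range (Matrix.mulVecLin (B - 1) ^ j)) := by
  obtain ⟨e, he⟩ := hsim
  obtain ⟨⟨A, A', hA, hA'⟩, hu⟩ := jordanBlock_isUnit F r
  obtain ⟨⟨Q, Q', hQ, hQ'⟩, hq⟩ := formMat_isUnit F r
  have hinv := formMat_invariant F r
  obtain rfl : A = jordanBlock F r := hu
  obtain rfl : Q = formMat F r := hq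
  generalize formMat F r = Q at *
  have hn : shiftMat F r 1 = jordanBlock F r - 1 := by rw [jordanBlock_eq]; simp
  generalize jordanBlock F r = A at *
  let R : Module.End F (Matrix (Fin r) (Fin r) F) := LinearMap.mulRight F A'
  have hR : IsUnit R := by
    rw [Module.End.isUnit_iff]
    constructor
    · intro X Y h
      have h' : X * A' * A = Y * A' * A := congrArg (· * A) h
      simpa [Matrix.mul_assoc, hA'] using h'
    · intro X
      exact ⟨X * A, by simp [R, Matrix.mul_assoc, hA]⟩
  have hc : Commute (adShift F r) R := by
    apply LinearMap.ext
    intro X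
    simp only [Module.End.mul_apply, adShift_apply, R, LinearMap.mulRight_apply, hn]
    simp [sub_mul, mul_sub, Matrix.mul_assoc, hA, hA']
  rw [← ker_inf_range_mul_unit _ R hR hc]
  let q : Matrix (Fin r) (Fin r) F ≃ₗ[F] Matrix (Fin r) (Fin r) F :=
    { LinearMap.mulRight F Q with
      invFun := fun X => X * Q'
      left_inv := fun X => by simp [Matrix.mul_assoc, hQ]
      right_inv := fun X => by simp [Matrix.mul_assoc, hQ'] }
  let vecE : Matrix (Fin r) (Fin r) F ≃ₗ[F] (Fin r × Fin r → F) :=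
    { toFun := Matrix.vec
      map_add' := fun _ _ => rfl
      map_smul' := fun _ _ => rfl
      invFun := fun v => Matrix.of fun i j => v (j, i)
      left_inv := fun _ => rfl
      right_inv := fun _ => rfl }
  refine finrank_ker_inf_range_congr _ _ ((q.trans vecE).trans e) ?_ j
  intro X
  have h1 : (adShift F r * R) X = A * X * A' - X := by
    simp only [Module.End.mul_apply, adShift_apply, R, LinearMap.mulRight_apply, hn]
    simp [sub_mul, mul_sub, Matrix.mul_assoc, hA']
  have h2 : A * X * A' * Q = A * (X * Q) * Aᵀ := by
    conv_lhs => rw [← hinv]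
    simp only [Matrix.mul_assoc]
    rw [← Matrix.mul_assoc A' A, hA', Matrix.one_mul]
  have h3 : vecE (q (A * X * A')) = (A ⊗ₖ A) *ᵥ vecE (q X) := by
    change Matrix.vec (A * X * A' * Q) = _ *ᵥ Matrix.vec (X * Q)
    rw [Matrix.kronecker_mulVec_vec, h2]
  rw [h1, map_sub]
  simp only [LinearEquiv.trans_apply]
  rw [h3, he, Matrix.mulVecLin_apply, Matrix.sub_mulVec, Matrix.one_mulVec]

end Transfer

/-! ### Kernel and images for a Jordan matrix -/

section Blocks

variable (F : Type*) [Field F] {r : ℕ} (lam : Fin r → ℕ)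

lemma jordanBlockDiag_sub_one_mulVec (v : ((i : Fin r) × Fin (lam i)) → F)
    (x : (i : Fin r) × Fin (lam i)) :
    ((jordanBlockDiag F lam - 1) *ᵥ v) x =
      if h : (x.2 : ℕ) + 1 < lam x.1 then v ⟨x.1, ⟨x.2 + 1, h⟩⟩ else 0 := by
  obtain ⟨i, a⟩ := x
  have h1 : jordanBlockDiag F lam - 1 =
      Matrix.blockDiagonal' (fun i => shiftMat F (lam i) 1) := by
    rw [jordanBlockDiag, ← Matrix.blockDiagonal'_one, ← Matrix.blockDiagonal'_sub]
    congr 1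
    funext i
    simp [jordanBlock_eq]
  rw [h1, Matrix.mulVec, dotProduct, Fintype.sum_sigma, Finset.sum_eq_single i]
  · have h2 := shiftMat_mul_apply F (lam i) 1 (Matrix.of fun b _ => v ⟨i, b⟩) a a
    rw [Matrix.mul_apply] at h2
    simpa using h2
  · intro k _ hk
    apply Finset.sum_eq_zero
    intro b _
    rw [Matrix.blockDiagonal'_apply_ne _ _ _ hk.symm, zero_mul]
  · simp

lemma jordanBlockDiag_sub_one_pow (j : ℕ) (v : ((i : Fin r) × Fin (lam i)) → F)
    (x : (i : Fin r) × Fin (lam i)) :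
    (Matrix.mulVecLin (jordanBlockDiag F lam - 1) ^ j) v x =
      if h : (x.2 : ℕ) + j < lam x.1 then v ⟨x.1, ⟨x.2 + j, h⟩⟩ else 0 := by
  induction j generalizing v with
  | zero => simp
  | succ j ih =>
    rw [pow_succ, Module.End.mul_apply, ih]
    simp only [Matrix.mulVecLin_apply, jordanBlockDiag_sub_one_mulVec]
    split_ifs <;> first | rfl | omega

/-- The space `ker ⊓ im (·)^j` of the nilpotent part of a Jordan matrix has one dimension for each
block of size exceeding `j`. -/
lemma finrank_jordanBlockDiag (j : ℕ) :
    Module.finrank F ↥(LinearMap.ker (Matrix.mulVecLin (jordanBlockDiag F lam - 1)) ⊓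
        LinearMap.range (Matrix.mulVecLin (jordanBlockDiag F lam - 1) ^ j)) =
      (Finset.univ.filter fun i => j < lam i).card := by
  rw [finrank_supported F (Finset.univ.filter
    fun x : (i : Fin r) × Fin (lam i) => (x.2 : ℕ) = 0 ∧ j < lam x.1)]
  · refine Finset.card_bij (fun x _ => x.1) ?_ ?_ ?_
    · simp
    · rintro ⟨i, a⟩ h ⟨i', a'⟩ h' hii
      obtain rfl : i = i' := hii
      simp only [Finset.mem_filter, Finset.mem_univ, true_and] at h h'
      congr 1
      exact Fin.ext (h.1.trans h'.1.symm)
    · intro i hi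
      simp only [Finset.mem_filter, Finset.mem_univ, true_and] at hi
      exact ⟨⟨i, ⟨0, by omega⟩⟩, by simpa using hi, rfl⟩
  · intro v
    simp only [Finset.mem_filter, Finset.mem_univ, true_and, Submodule.mem_inf, LinearMap.mem_ker,
      LinearMap.mem_range]
    constructor
    · rintro ⟨h0, w, rfl⟩ ⟨i, a⟩ hx
      by_cases ha : (a : ℕ) = 0
      · rw [jordanBlockDiag_sub_one_pow, dif_neg]
        simp only at hx ⊢
        omega
      · have := congrFun h0 ⟨i, ⟨a - 1, by omega⟩⟩
        rw [Matrix.mulVecLin_apply, jordanBlockDiag_sub_one_mulVec] at this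
        have h1 : (a : ℕ) - 1 + 1 = a := by omega
        simpa [h1] using this
    · intro h
      refine ⟨?_, fun x => if j ≤ (x.2 : ℕ) then v ⟨x.1, ⟨x.2 - j, lt_of_le_of_lt (Nat.sub_le _ _) x.2.2⟩⟩ else 0, ?_⟩
      · ext x
        rw [Matrix.mulVecLin_apply, jordanBlockDiag_sub_one_mulVec]
        split_ifs with h1
        · exact h _ (by simp)
        · rfl
      · ext x
        rw [jordanBlockDiag_sub_one_pow]
        by_cases h1 : (x.2 : ℕ) + j < lam x.1
        · simp [h1]
        · rw [dif_neg h1]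
          exact (h x (by omega)).symm

end Blocks

/-- The smallest part of `λ(r, r, p)` is the `p`-part `r_p` of `r`, and it occurs with
multiplicity `r_p`. -/
theorem stmt_16 {F : Type*} [Field F] (p : ℕ) (hp : p.Prime) [CharP F p]
    (r : ℕ) (hr : 0 < r)
    (lam : Fin r → ℕ) (hanti : Antitone lam) (hpos : ∀ i, 0 < lam i)
    (hsim : MatSimilar F (jordanBlock F r ⊗ₖ jordanBlock F r) (jordanBlockDiag F lam)) :
    lam ⟨r - 1, by omega⟩ = pPart p r ∧
    (Finset.univ.filter fun i => lam i = pPart p r).card = pPart p r := by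
  have hm : ((r / p ^ r.factorization p : ℕ) : F) ≠ 0 := by
    rw [Ne, CharP.cast_eq_zero_iff F p]
    exact Nat.not_dvd_ordCompl hp hr.ne'
  have hrm : r = p ^ r.factorization p * (r / p ^ r.factorization p) :=
    (Nat.ordProj_mul_ordCompl_eq_self r p).symm
  have hk : 0 < p ^ r.factorization p := pow_pos hp.pos _
  have hle : p ^ r.factorization p ≤ r := Nat.ordProj_le p hr.ne'
  have h1 := finrank_kronecker F r (p ^ r.factorization p - 1) _ hsim
  have h2 := finrank_kronecker F r (p ^ r.factorization p) _ hsim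
  rw [finrank_jordanBlockDiag] at h1 h2
  rw [finrank_adShift_lt F r hp (Nat.ordProj_dvd r p) hr _ (by omega)] at h1
  rw [finrank_adShift_eq F r hp hrm hr hm] at h2
  change _ = p ^ r.factorization p ∧ (Finset.univ.filter fun i => lam i = p ^ r.factorization p).card
    = p ^ r.factorization p
  generalize p ^ r.factorization p = k at *
  have hall : ∀ i, k ≤ lam i := by
    intro i
    have h3 : (Finset.univ.filter fun i => k - 1 < lam i) = Finset.univ :=
      Finset.eq_univ_of_card _ (by rw [← h1, Fintype.card_fin])
    have h4 := Finset.mem_univ i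
    rw [← h3, Finset.mem_filter] at h4
    omega
  have hcard : (Finset.univ.filter fun i => lam i = k).card = k := by
    have h3 := Finset.card_filter_add_card_filter_not (s := Finset.univ) (fun i => k < lam i)
    have h4 : (Finset.univ.filter fun i => ¬ k < lam i) =
        Finset.univ.filter fun i => lam i = k := by
      ext i
      have := hall i
      simp only [Finset.mem_filter, Finset.mem_univ, true_and]
      omega
    rw [h4, Finset.card_univ, Fintype.card_fin] at h3
    omega
  refine ⟨le_antisymm ?_ (hall _), hcard⟩
  obtain ⟨i, hi⟩ := Finset.card_pos.1 (hcard.symm ▸ hk)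
  rw [Finset.mem_filter] at hi
  rw [← hi.2]
  apply hanti
  rw [Fin.le_def]
  have := i.2
  simp only
  omega
end
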